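/- arXiv:1901.03725 — 3 statements merged into one kernel-verified Lean document; each statement's English description precedes it below -/
import Mathlib

section
/- For general lines L_1,…,L_6 in P^3 (i.e., there exists a nonzero polynomial P in the 48 coordinates of spanning vectors a_1,b_1,…,a_6,b_6 ∈ ℂ^4 such that whenever P does not vanish, each pair a_i,b_i is linearly independent, the subspaces L_i = span{a_i,b_i} pairwise intersect only in 0, and the following holds): the ℂ-vector space of homogeneous polynomials F of degree 20 in ℂ[x_0,x_1,x_2,x_3] with F ∈ I(L_i)^6 for i = 1,…,5 and F ∈ I(L_6) has dimension exactly 1. Since binom(23,3) = 1771 < 1876 = 5·371 + 21, the system 𝓛_{20}(6,6,6,6,6,1) has negative virtual dimension, so it is special (unexpected). -/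
open MvPolynomial

noncomputable section

abbrev C4 : Type := Fin 4 → ℂ
abbrev R3 : Type := MvPolynomial (Fin 4) ℂ

/-- The homogeneous ideal of the line in `P^3` corresponding to a linear subspace
`L ⊆ ℂ^4`: all polynomials vanishing identically on `L`. -/
def lineIdeal (L : Submodule ℂ C4) : Ideal R3 where
  carrier := {F | ∀ v ∈ L, eval v F = 0}
  add_mem' := by
    intro a b ha hb v hv
    simp [ha v hv, hb v hv]
  zero_mem' := by
    intro v hv
    simp
  smul_mem' := by
    intro c F hF v hv
    simp [smul_eq_mul, hF v hv]

/-- The linear system `𝓛_d(m_1, …, m_s)`: homogeneous forms of degree `d`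
vanishing to order `m i` along the line `L i`, as a `ℂ`-subspace. -/
def linSys (d : ℕ) {s : ℕ} (L : Fin s → Submodule ℂ C4) (m : Fin s → ℕ) :
    Submodule ℂ R3 :=
  homogeneousSubmodule (Fin 4) ℂ d ⊓
    ⨅ i, Submodule.restrictScalars ℂ ((lineIdeal (L i)) ^ (m i))

/-- A property `Q` holds for `s` *general* lines in `P^3`: there is a nonzero
polynomial `P` in the `8s` coordinates of spanning vectors such that whenever
`P` does not vanish, each pair of vectors is linearly independent, the spanned
planes are pairwise disjoint, and `Q` holds for these lines. -/
def GeneralLines (s : ℕ) (Q : (Fin s → Submodule ℂ C4) → Prop) : Prop :=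
  ∃ P : MvPolynomial (Fin s × Fin 2 × Fin 4) ℂ, P ≠ 0 ∧
    ∀ v : Fin s → Fin 2 → C4,
      MvPolynomial.eval (fun p => v p.1 p.2.1 p.2.2) P ≠ 0 →
      (∀ i, LinearIndependent ℂ ![v i 0, v i 1]) ∧
      (∀ i j, i ≠ j →
        Submodule.span ℂ {v i 0, v i 1} ⊓ Submodule.span ℂ {v j 0, v j 1} = ⊥) ∧
      Q (fun i => Submodule.span ℂ {v i 0, v i 1})

/-! ### Part 1: the form of degree 20 -/

namespace Part1

variable {R : Type*} [CommRing R]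

/-- determinant of four vectors -/
def det4 (a b c d : Fin 4 → R) : R :=
  (a 0 * b 1 - a 1 * b 0) * (c 2 * d 3 - c 3 * d 2)
  - (a 0 * b 2 - a 2 * b 0) * (c 1 * d 3 - c 3 * d 1)
  + (a 0 * b 3 - a 3 * b 0) * (c 1 * d 2 - c 2 * d 1)
  + (a 1 * b 2 - a 2 * b 1) * (c 0 * d 3 - c 3 * d 0)
  - (a 1 * b 3 - a 3 * b 1) * (c 0 * d 2 - c 2 * d 0)
  + (a 2 * b 3 - a 3 * b 2) * (c 0 * d 1 - c 1 * d 0)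

lemma det4_lin (s t : R) (a b c d e : Fin 4 → R) :
    det4 (fun i => s * a i + t * b i) c d e = s * det4 a c d e + t * det4 b c d e := by
  unfold det4; ring

lemma cramer (p a b c d : Fin 4 → R) (i : Fin 4) :
    det4 p a b c * d i - det4 p a b d * c i + det4 p a c d * b i - det4 p b c d * a i
      + det4 a b c d * p i = 0 := by
  fin_cases i <;> simp [det4] <;> ring

lemma bracket_swap (p e f a b c d : Fin 4 → R) :
    det4 p e f c * det4 p a b d - det4 p e f d * det4 p a b c =
      - (det4 p e f a * det4 p c d b - det4 p e f b * det4 p c d a) := by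
  have H : ∀ v : Fin 4 → R, det4 p e f v = det4 p e f (Pi.single 0 1) * v 0
      + det4 p e f (Pi.single 1 1) * v 1 + det4 p e f (Pi.single 2 1) * v 2
      + det4 p e f (Pi.single 3 1) * v 3 := by
    intro v; simp [det4]; ring
  have H0 : det4 p e f p = 0 := by simp [det4]; ring
  have e1 : det4 p c d b = det4 p b c d := by simp [det4]; ring
  have e2 : det4 p c d a = det4 p a c d := by simp [det4]; ring
  rw [H p] at H0
  rw [e1, e2, H a, H b, H c, H d]
  linear_combination
    (- det4 p e f (Pi.single 0 1)) * cramer p a b c d 0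
    - det4 p e f (Pi.single 1 1) * cramer p a b c d 1
    - det4 p e f (Pi.single 2 1) * cramer p a b c d 2
    - det4 p e f (Pi.single 3 1) * cramer p a b c d 3
    + det4 a b c d * H0

/-- 2 by 2 determinants -/
def D (x y : Fin 2 → R) : R := x 0 * y 1 - x 1 * y 0

/-- values of the plane spanned by `p` and the line `i` on the two vectors of line `m` -/
def xv (L : Fin 6 → Fin 2 → Fin 4 → R) (i m : Fin 6) (p : Fin 4 → R) : Fin 2 → R :=
  fun k => det4 p (L i 0) (L i 1) (L m k)

def br (L : Fin 6 → Fin 2 → Fin 4 → R) (i j m : Fin 6) (p : Fin 4 → R) : R :=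
  D (xv L i m p) (xv L j m p)

/-- polar form of `br` -/
def br2 (L : Fin 6 → Fin 2 → Fin 4 → R) (i j m : Fin 6) (p r : Fin 4 → R) : R :=
  D (xv L i m p) (xv L j m r) + D (xv L i m r) (xv L j m p)

def brc (L : Fin 6 → Fin 2 → Fin 4 → R) (i j m : Fin 6) : Fin 3 → R :=
  ![br L i j m (L 5 0), br2 L i j m (L 5 0) (L 5 1), br L i j m (L 5 1)]

lemma xv_lin (L : Fin 6 → Fin 2 → Fin 4 → R) (i m : Fin 6) (s t : R) (a b : Fin 4 → R)
    (k : Fin 2) :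
    xv L i m (fun n => s * a n + t * b n) k = s * xv L i m a k + t * xv L i m b k := by
  simp [xv, det4_lin]

lemma br_line (L : Fin 6 → Fin 2 → Fin 4 → R) (i j m : Fin 6) (s t : R) (a b : Fin 4 → R) :
    br L i j m (fun n => s * a n + t * b n) =
      br L i j m a * s ^ 2 + br2 L i j m a b * s * t + br L i j m b * t ^ 2 := by
  simp only [br, br2, D, xv_lin]; ring

lemma br_swap (L : Fin 6 → Fin 2 → Fin 4 → R) (i j m : Fin 6) (p : Fin 4 → R) :
    br L i j m p = - br L i m j p := by
  simp only [br, D, xv]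
  exact bracket_swap p (L i 0) (L i 1) (L j 0) (L j 1) (L m 0) (L m 1)

lemma br2_swap (L : Fin 6 → Fin 2 → Fin 4 → R) (i j m : Fin 6) (p r : Fin 4 → R) :
    br2 L i j m p r = - br2 L i m j p r := by
  have h := br_swap L i j m (fun n => 1 * p n + 1 * r n)
  rw [br_line, br_line, br_swap L i j m p, br_swap L i j m r] at h
  linear_combination h

lemma brc_swap (L : Fin 6 → Fin 2 → Fin 4 → R) (i j m : Fin 6) (k : Fin 3) :
    brc L i j m k = - brc L i m j k := by
  fin_cases k
  · exact br_swap ..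
  · exact br2_swap ..
  · exact br_swap ..

def mulq (a b : Fin 3 → R) : Fin 5 → R :=
  ![a 0 * b 0, a 0 * b 1 + a 1 * b 0, a 0 * b 2 + a 1 * b 1 + a 2 * b 0,
    a 1 * b 2 + a 2 * b 1, a 2 * b 2]

lemma pluecker (L : Fin 6 → Fin 2 → Fin 4 → R) (i j k l m : Fin 6) (p : Fin 4 → R) :
    br L i j m p * br L k l m p - br L i k m p * br L j l m p
      = br L k j m p * br L i l m p := by
  simp only [br, D]; ring

lemma pluecker_c (L : Fin 6 → Fin 2 → Fin 4 → R) (i j k l m : Fin 6) (n : Fin 5) :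
    mulq (brc L i j m) (brc L k l m) n - mulq (brc L i k m) (brc L j l m) n
      = mulq (brc L k j m) (brc L i l m) n := by
  fin_cases n <;> simp [mulq, brc, br, br2, D] <;> ring

def bc (f g : Fin 5 → R) (i j : Fin 5) : R := f i * g j - f j * g i

/-- Bezout matrix of two binary quartics -/
def bez (f g : Fin 5 → R) : Matrix (Fin 4) (Fin 4) R :=
  !![bc f g 1 0, bc f g 2 0, bc f g 3 0, bc f g 4 0;
     bc f g 2 0, bc f g 3 0 + bc f g 2 1, bc f g 4 0 + bc f g 3 1, bc f g 4 1;
     bc f g 3 0, bc f g 4 0 + bc f g 3 1, bc f g 4 1 + bc f g 3 2, bc f g 4 2;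
     bc f g 4 0, bc f g 4 1, bc f g 4 2, bc f g 4 3]

/-- two functionals killing multiples of a quadratic -/
def fn0 (c : Fin 3 → R) : Fin 4 → R := ![- (c 1 * c 2), c 0 * c 2, 0, - (c 0 * c 0)]
def fn1 (c : Fin 3 → R) : Fin 4 → R := ![- (c 2 * c 2), 0, c 0 * c 2, - (c 0 * c 1)]

def rBc (r : Fin 4 → R) (B : Matrix (Fin 4) (Fin 4) R) (c : Fin 4 → R) : R :=
  ∑ i, ∑ j, r i * B i j * c j

lemma rBc_bilin (r c : Fin 4 → R) (f0 f1 g0 g1 : Fin 5 → R) (u0 u1 v0 v1 : R) :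
    rBc r (bez (fun n => u1 * f0 n - u0 * f1 n) (fun n => v1 * g0 n - v0 * g1 n)) c =
      u1 * v1 * rBc r (bez f0 g0) c + u0 * v0 * rBc r (bez f1 g1) c
      - u1 * v0 * rBc r (bez f0 g1) c - u0 * v1 * rBc r (bez f1 g0) c := by
  simp [rBc, bez, bc, Fin.sum_univ_four]; ring

lemma left0 (c : Fin 4 → R) (q a b : Fin 3 → R) :
    rBc (fn0 q) (bez (mulq a q) (mulq b q)) c = 0 := by
  simp [rBc, bez, bc, Fin.sum_univ_four, fn0, mulq]; ring

lemma left1 (c : Fin 4 → R) (q a b : Fin 3 → R) :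
    rBc (fn1 q) (bez (mulq a q) (mulq b q)) c = 0 := by
  simp [rBc, bez, bc, Fin.sum_univ_four, fn1, mulq]; ring

lemma right0 (c : Fin 4 → R) (q a b : Fin 3 → R) :
    rBc c (bez (mulq a q) (mulq b q)) (fn0 q) = 0 := by
  simp [rBc, bez, bc, Fin.sum_univ_four, fn0, mulq]; ring

lemma right1 (c : Fin 4 → R) (q a b : Fin 3 → R) :
    rBc c (bez (mulq a q) (mulq b q)) (fn1 q) = 0 := by
  simp [rBc, bez, bc, Fin.sum_univ_four, fn1, mulq]; ring



/-- value of a binary quartic -/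
def qv (f : Fin 5 → R) (s t : R) : R :=
  f 0 * s ^ 4 + f 1 * s ^ 3 * t + f 2 * s ^ 2 * t ^ 2 + f 3 * s * t ^ 3 + f 4 * t ^ 4

lemma det_bez {K : Type*} [CommRing K] [IsDomain K] (f g : Fin 5 → K) (s t : K) (ht : t ≠ 0)
    (hf : qv f s t = 0) (hg : qv g s t = 0) : (bez f g).det = 0 := by
  apply Matrix.exists_vecMul_eq_zero_iff.mp
  refine ⟨![s ^ 3, s ^ 2 * t, s * t ^ 2, t ^ 3], ?_, ?_⟩
  · intro h
    have := congrFun h 3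
    simp [ht] at this
  · unfold qv at hf hg
    funext j
    fin_cases j
    · simp [Matrix.vecMul, dotProduct, Fin.sum_univ_four, bez, bc]
      apply mul_left_cancel₀ ht
      linear_combination g 0 * hf - f 0 * hg
    · simp [Matrix.vecMul, dotProduct, Fin.sum_univ_four, bez, bc]
      apply mul_left_cancel₀ (pow_ne_zero 2 ht)
      linear_combination (g 0 * s + g 1 * t) * hf - (f 0 * s + f 1 * t) * hg
    · simp [Matrix.vecMul, dotProduct, Fin.sum_univ_four, bez, bc]
      apply mul_left_cancel₀ (pow_ne_zero 3 ht)
      linear_combination (g 0 * s ^ 2 + g 1 * s * t + g 2 * t ^ 2) * hf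
        - (f 0 * s ^ 2 + f 1 * s * t + f 2 * t ^ 2) * hg
    · simp [Matrix.vecMul, dotProduct, Fin.sum_univ_four, bez, bc]
      apply mul_left_cancel₀ (pow_ne_zero 4 ht)
      linear_combination (g 0 * s ^ 3 + g 1 * s ^ 2 * t + g 2 * s * t ^ 2 + g 3 * t ^ 3) * hf
        - (f 0 * s ^ 3 + f 1 * s ^ 2 * t + f 2 * s * t ^ 2 + f 3 * t ^ 3) * hg

/-- coefficient data: the numbers attached to the sixth line -/
def cB00 (Q A B : Fin 3 → Fin 3 → R) := bez (mulq (A 2) (Q 2)) (mulq (B 2) (Q 2))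
def cB11 (Q A B : Fin 3 → Fin 3 → R) := bez (mulq (A 1) (Q 1)) (mulq (B 1) (Q 1))
def cS01 (Q A B : Fin 3 → Fin 3 → R) := bez (mulq (A 2) (Q 2)) (mulq (B 1) (Q 1))
def cS10 (Q A B : Fin 3 → Fin 3 → R) := bez (mulq (A 1) (Q 1)) (mulq (B 2) (Q 2))

def rows (Q : Fin 3 → Fin 3 → R) : Fin 4 → Fin 4 → R :=
  ![fn0 (Q 2), fn1 (Q 2), fn0 (Q 1), fn1 (Q 1)]
def cols (Q : Fin 3 → Fin 3 → R) : Fin 4 → Fin 4 → R :=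
  ![![1, 0, 0, 0], ![0, 1, 0, 0], fn0 (Q 0), fn1 (Q 0)]

def ent11 (q a b : Fin 3 → R) (x y z : R) : R :=
  q 2 * a 2 * b 2 * x - q 1 * a 1 * b 2 * y - q 1 * a 2 * b 1 * z
def ent12 (a b : Fin 3 → R) (y z : R) : R := a 0 * b 2 * y + a 2 * b 0 * z
def ent21 (q a b : Fin 3 → R) (x y z : R) : R :=
  q 1 * a 1 * b 1 * x - q 2 * a 1 * b 2 * y - q 2 * a 2 * b 1 * z
def ent22 (a b : Fin 3 → R) (y z : R) : R := - (a 1 * b 0 * y + a 0 * b 1 * z)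

def ent (q a b : Fin 3 → R) (Q A B : Fin 3 → Fin 3 → R) (i j : Fin 4) : R :=
  if i < 2 then
    if j < 2 then
      ent11 q a b (rBc (rows Q i) (cB11 Q A B) (cols Q j)) (rBc (rows Q i) (cS01 Q A B) (cols Q j))
        (rBc (rows Q i) (cS10 Q A B) (cols Q j))
    else ent12 a b (rBc (rows Q i) (cS01 Q A B) (cols Q j))
        (rBc (rows Q i) (cS10 Q A B) (cols Q j))
  else
    if j < 2 then
      ent21 q a b (rBc (rows Q i) (cB00 Q A B) (cols Q j)) (rBc (rows Q i) (cS01 Q A B) (cols Q j))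
        (rBc (rows Q i) (cS10 Q A B) (cols Q j))
    else ent22 a b (rBc (rows Q i) (cS01 Q A B) (cols Q j))
        (rBc (rows Q i) (cS10 Q A B) (cols Q j))

def core (q a b : Fin 3 → R) (Q A B : Fin 3 → Fin 3 → R) : Matrix (Fin 4) (Fin 4) R :=
  Matrix.of (ent q a b Q A B)

lemma rows_B00 (Q A B : Fin 3 → Fin 3 → R) (i : Fin 4) (hi : i < 2) (c : Fin 4 → R) :
    rBc (rows Q i) (cB00 Q A B) c = 0 := by
  fin_cases i
  · exact left0 ..
  · exact left1 ..
  · simp at hi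
  · simp at hi

lemma rows_B11 (Q A B : Fin 3 → Fin 3 → R) (i : Fin 4) (hi : ¬ i < 2) (c : Fin 4 → R) :
    rBc (rows Q i) (cB11 Q A B) c = 0 := by
  fin_cases i
  · simp at hi
  · simp at hi
  · exact left0 ..
  · exact left1 ..

lemma cols_sum (Q A B : Fin 3 → Fin 3 → R)
    (hA : ∀ n, mulq (A 2) (Q 2) n - mulq (A 1) (Q 1) n = mulq (A 0) (Q 0) n)
    (hB : ∀ n, mulq (B 2) (Q 2) n - mulq (B 1) (Q 1) n = mulq (B 0) (Q 0) n)
    (j : Fin 4) (hj : ¬ j < 2) (r : Fin 4 → R) :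
    rBc r (cB00 Q A B) (cols Q j) + rBc r (cB11 Q A B) (cols Q j) =
      rBc r (cS01 Q A B) (cols Q j) + rBc r (cS10 Q A B) (cols Q j) := by
  have h := rBc_bilin r (cols Q j) (mulq (A 2) (Q 2)) (mulq (A 1) (Q 1)) (mulq (B 2) (Q 2))
    (mulq (B 1) (Q 1)) 1 1 1 1
  have hA' : (fun n => 1 * mulq (A 2) (Q 2) n - 1 * mulq (A 1) (Q 1) n) = mulq (A 0) (Q 0) := by
    funext n; rw [← hA]; ring
  have hB' : (fun n => 1 * mulq (B 2) (Q 2) n - 1 * mulq (B 1) (Q 1) n) = mulq (B 0) (Q 0) := by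
    funext n; rw [← hB]; ring
  rw [hA', hB'] at h
  have h0 : rBc r (bez (mulq (A 0) (Q 0)) (mulq (B 0) (Q 0))) (cols Q j) = 0 := by
    fin_cases j
    · simp at hj
    · simp at hj
    · exact right0 ..
    · exact right1 ..
  rw [h0] at h
  simp only [cB00, cB11, cS01, cS10]
  linear_combination -h

/-- value of a binary quadratic -/
def q2 (c : Fin 3 → R) (s t : R) : R := c 0 * s ^ 2 + c 1 * s * t + c 2 * t ^ 2

lemma qv_mulq (a b : Fin 3 → R) (s t : R) : qv (mulq a b) s t = q2 a s t * q2 b s t := by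
  simp [qv, mulq, q2]; ring

lemma det_core {K : Type*} [CommRing K] [IsDomain K] (q a b : Fin 3 → K)
    (Q A B : Fin 3 → Fin 3 → K) (s t : K) (ht : t ≠ 0)
    (hA : ∀ n, mulq (A 2) (Q 2) n - mulq (A 1) (Q 1) n = mulq (A 0) (Q 0) n)
    (hB : ∀ n, mulq (B 2) (Q 2) n - mulq (B 1) (Q 1) n = mulq (B 0) (Q 0) n)
    (ha : a 2 * q 2 - a 1 * q 1 = a 0 * q 0) (hb : b 2 * q 2 - b 1 * q 1 = b 0 * q 0)
    (hq : ∀ i, q2 (Q i) s t = q i) (ha' : ∀ i, q2 (A i) s t = a i)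
    (hb' : ∀ i, q2 (B i) s t = b i) (hne : ∀ i, q i ≠ 0) :
    (core q a b Q A B).det = 0 := by
  set Bp : Matrix (Fin 4) (Fin 4) K :=
    bez (fun n => (a 1 * q 1) * mulq (A 2) (Q 2) n - (a 2 * q 2) * mulq (A 1) (Q 1) n)
      (fun n => (b 1 * q 1) * mulq (B 2) (Q 2) n - (b 2 * q 2) * mulq (B 1) (Q 1) n) with hBp
  have hdet : Bp.det = 0 := by
    apply det_bez _ _ s t ht
    · have h1 := qv_mulq (A 2) (Q 2) s t
      have h2 := qv_mulq (A 1) (Q 1) s t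
      rw [hq, ha'] at h1 h2
      simp only [qv] at h1 h2 ⊢
      linear_combination (a 1 * q 1) * h1 - (a 2 * q 2) * h2
    · have h1 := qv_mulq (B 2) (Q 2) s t
      have h2 := qv_mulq (B 1) (Q 1) s t
      rw [hq, hb'] at h1 h2
      simp only [qv] at h1 h2 ⊢
      linear_combination (b 1 * q 1) * h1 - (b 2 * q 2) * h2
  have key : Matrix.diagonal ![q 2, q 2, q 1, q 1] * core q a b Q A B *
      Matrix.diagonal ![1, 1, q 0, q 0] =
      Matrix.of (rows Q) * Bp * (Matrix.of (cols Q)).transpose := by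
    ext i j
    rw [Matrix.mul_diagonal, Matrix.diagonal_mul]
    have hr : (Matrix.of (rows Q) * Bp * (Matrix.of (cols Q)).transpose) i j =
        rBc (rows Q i) Bp (cols Q j) := by
      simp only [Matrix.mul_apply, rBc, Fin.sum_univ_four, Matrix.of_apply, Matrix.transpose_apply]
      ring
    rw [hr, hBp, rBc_bilin]
    change _ * ent q a b Q A B i j * _ = (a 1 * q 1) * (b 1 * q 1) * rBc (rows Q i) (cB00 Q A B) _
      + (a 2 * q 2) * (b 2 * q 2) * rBc (rows Q i) (cB11 Q A B) _
      - (a 1 * q 1) * (b 2 * q 2) * rBc (rows Q i) (cS01 Q A B) _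
      - (a 2 * q 2) * (b 1 * q 1) * rBc (rows Q i) (cS10 Q A B) _
    by_cases hi : i < 2
    · have d1 : (![q 2, q 2, q 1, q 1] : Fin 4 → K) i = q 2 := by
        fin_cases i <;> simp_all
      rw [d1, rows_B00 _ _ _ _ hi]
      by_cases hj : j < 2
      · have d2 : (![1, 1, q 0, q 0] : Fin 4 → K) j = 1 := by
          fin_cases j <;> simp_all
        rw [d2]
        simp only [ent, hi, hj, if_true, ent11]
        ring
      · have d2 : (![1, 1, q 0, q 0] : Fin 4 → K) j = q 0 := by
          fin_cases j <;> simp_all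
        rw [d2]
        have hs := cols_sum Q A B hA hB j hj (rows Q i)
        rw [rows_B00 _ _ _ _ hi] at hs
        simp only [ent, hi, hj, if_true, if_false, ent12]
        generalize rBc (rows Q i) (cS01 Q A B) (cols Q j) = y at *
        generalize rBc (rows Q i) (cS10 Q A B) (cols Q j) = z at *
        linear_combination (-(a 2 * q 2) * (b 2 * q 2)) * hs
          - (b 2 * q 2 * y) * ha - (a 2 * q 2 * z) * hb
    · have d1 : (![q 2, q 2, q 1, q 1] : Fin 4 → K) i = q 1 := by
        fin_cases i <;> simp_all
      rw [d1, rows_B11 _ _ _ _ hi]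
      by_cases hj : j < 2
      · have d2 : (![1, 1, q 0, q 0] : Fin 4 → K) j = 1 := by
          fin_cases j <;> simp_all
        rw [d2]
        simp only [ent, hi, hj, if_true, if_false, ent21]
        ring
      · have d2 : (![1, 1, q 0, q 0] : Fin 4 → K) j = q 0 := by
          fin_cases j <;> simp_all
        rw [d2]
        have hs := cols_sum Q A B hA hB j hj (rows Q i)
        rw [rows_B11 _ _ _ _ hi] at hs
        simp only [ent, hi, hj, if_false, ent22]
        generalize rBc (rows Q i) (cS01 Q A B) (cols Q j) = y at *
        generalize rBc (rows Q i) (cS10 Q A B) (cols Q j) = z at *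
        linear_combination (-(a 1 * q 1) * (b 1 * q 1)) * hs
          + (a 1 * q 1 * y) * hb + (b 1 * q 1 * z) * ha
  have hd := congrArg Matrix.det key
  rw [Matrix.det_mul, Matrix.det_mul, Matrix.det_mul, Matrix.det_mul, hdet, mul_zero, zero_mul,
    Matrix.det_diagonal, Matrix.det_diagonal] at hd
  simpa [Fin.prod_univ_four, hne] using hd

def qq (L : Fin 6 → Fin 2 → Fin 4 → R) (p : Fin 4 → R) : Fin 3 → R :=
  ![br L 0 3 4 p, br L 1 3 4 p, br L 2 3 4 p]
def aa (L : Fin 6 → Fin 2 → Fin 4 → R) (p : Fin 4 → R) : Fin 3 → R :=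
  ![br L 2 1 4 p, br L 0 2 4 p, br L 0 1 4 p]
def bb (L : Fin 6 → Fin 2 → Fin 4 → R) (p : Fin 4 → R) : Fin 3 → R :=
  ![br L 2 1 3 p, br L 0 2 3 p, br L 0 1 3 p]
def QQ (L : Fin 6 → Fin 2 → Fin 4 → R) : Fin 3 → Fin 3 → R :=
  ![brc L 0 3 4, brc L 1 3 4, brc L 2 3 4]
def AA (L : Fin 6 → Fin 2 → Fin 4 → R) : Fin 3 → Fin 3 → R :=
  ![brc L 2 1 4, brc L 0 2 4, brc L 0 1 4]
def BB (L : Fin 6 → Fin 2 → Fin 4 → R) : Fin 3 → Fin 3 → R :=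
  ![brc L 2 1 3, brc L 0 2 3, brc L 0 1 3]

def Fm (L : Fin 6 → Fin 2 → Fin 4 → R) (p : Fin 4 → R) : Matrix (Fin 4) (Fin 4) R :=
  core (qq L p) (aa L p) (bb L p) (QQ L) (AA L) (BB L)

lemma det_Fm {K : Type*} [CommRing K] [IsDomain K] (L : Fin 6 → Fin 2 → Fin 4 → K) (s t : K)
    (ht : t ≠ 0) (hne : ∀ i, qq L (fun n => s * L 5 0 n + t * L 5 1 n) i ≠ 0) :
    (Fm L (fun n => s * L 5 0 n + t * L 5 1 n)).det = 0 := by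
  apply det_core _ _ _ _ _ _ s t ht
  · exact fun n => pluecker_c L 0 1 2 3 4 n
  · intro n
    have h := pluecker_c L 0 1 2 4 3 n
    have e : ∀ i, brc L i 4 3 = fun k => - brc L i 3 4 k := fun i => funext (brc_swap L i 4 3)
    rw [e, e, e] at h
    have e' : ∀ x y : Fin 3 → K, mulq x (fun k => - y k) n = - mulq x y n := by
      intro x y; fin_cases n <;> simp [mulq] <;> ring
    rw [e', e', e'] at h
    change mulq (brc L 0 1 3) (brc L 2 3 4) n - mulq (brc L 0 2 3) (brc L 1 3 4) n
      = mulq (brc L 2 1 3) (brc L 0 3 4) n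
    linear_combination -h
  · exact pluecker L 0 1 2 3 4 _
  · have h := pluecker L 0 1 2 4 3 (fun n => s * L 5 0 n + t * L 5 1 n)
    rw [br_swap L 2 4 3, br_swap L 1 4 3, br_swap L 0 4 3] at h
    simp only [qq, bb, Matrix.cons_val]
    linear_combination -h
  · intro i; fin_cases i <;> exact (br_line ..).symm
  · intro i; fin_cases i <;> exact (br_line ..).symm
  · intro i; fin_cases i <;> exact (br_line ..).symm
  · exact hne

end Part1


namespace Part1

section maps
variable {R S : Type*} [CommRing R] [CommRing S] (f : R →+* S)

lemma det4_map (a b c d : Fin 4 → R) :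
    det4 (fun n => f (a n)) (fun n => f (b n)) (fun n => f (c n)) (fun n => f (d n))
      = f (det4 a b c d) := by
  simp only [det4, map_add, map_sub, map_mul]

lemma xv_map (L : Fin 6 → Fin 2 → Fin 4 → R) (i m : Fin 6) (p : Fin 4 → R) (k : Fin 2) :
    xv (fun i k n => f (L i k n)) i m (fun n => f (p n)) k = f (xv L i m p k) :=
  det4_map f ..

lemma br_map (L : Fin 6 → Fin 2 → Fin 4 → R) (i j m : Fin 6) (p : Fin 4 → R) :
    br (fun i k n => f (L i k n)) i j m (fun n => f (p n)) = f (br L i j m p) := by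
  simp only [br, D, xv_map, map_sub, map_mul]

lemma br2_map (L : Fin 6 → Fin 2 → Fin 4 → R) (i j m : Fin 6) (p r : Fin 4 → R) :
    br2 (fun i k n => f (L i k n)) i j m (fun n => f (p n)) (fun n => f (r n))
      = f (br2 L i j m p r) := by
  simp only [br2, D, xv_map, map_sub, map_mul, map_add]

lemma brc_map (L : Fin 6 → Fin 2 → Fin 4 → R) (i j m : Fin 6) :
    brc (fun i k n => f (L i k n)) i j m = fun k => f (brc L i j m k) := by
  funext k
  fin_cases k
  · exact br_map ..
  · exact br2_map ..
  · exact br_map ..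

lemma mulq_map (a b : Fin 3 → R) :
    mulq (fun n => f (a n)) (fun n => f (b n)) = fun n => f (mulq a b n) := by
  funext n; fin_cases n <;> simp [mulq]

lemma bez_map (a b : Fin 5 → R) :
    bez (fun n => f (a n)) (fun n => f (b n)) = (bez a b).map f := by
  ext i j; fin_cases i <;> fin_cases j <;> simp [bez, bc]

lemma rBc_map (r : Fin 4 → R) (B : Matrix (Fin 4) (Fin 4) R) (c : Fin 4 → R) :
    rBc (fun n => f (r n)) (B.map f) (fun n => f (c n)) = f (rBc r B c) := by
  simp [rBc]

lemma rows_map (Q : Fin 3 → Fin 3 → R) (i : Fin 4) :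
    rows (fun i k => f (Q i k)) i = fun k => f (rows Q i k) := by
  funext k; fin_cases i <;> fin_cases k <;> simp [rows, fn0, fn1]

lemma cols_map (Q : Fin 3 → Fin 3 → R) (i : Fin 4) :
    cols (fun i k => f (Q i k)) i = fun k => f (cols Q i k) := by
  funext k; fin_cases i <;> fin_cases k <;> simp [cols, fn0, fn1]

lemma ent_map (q a b : Fin 3 → R) (Q A B : Fin 3 → Fin 3 → R) (i j : Fin 4) :
    ent (fun i => f (q i)) (fun i => f (a i)) (fun i => f (b i))
      (fun i k => f (Q i k)) (fun i k => f (A i k)) (fun i k => f (B i k)) i j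
      = f (ent q a b Q A B i j) := by
  simp only [ent, cB00, cB11, cS01, cS10, mulq_map, bez_map, rows_map, cols_map, rBc_map]
  split_ifs <;> simp only [ent11, ent12, ent21, ent22, map_sub, map_add, map_neg, map_mul]

lemma Fm_map (L : Fin 6 → Fin 2 → Fin 4 → R) (p : Fin 4 → R) :
    Fm (fun i k n => f (L i k n)) (fun n => f (p n)) = (Fm L p).map f := by
  ext i j
  have h1 : qq (fun i k n => f (L i k n)) (fun n => f (p n)) = fun i => f (qq L p i) := by
    funext i; fin_cases i <;> exact br_map ..
  have h2 : aa (fun i k n => f (L i k n)) (fun n => f (p n)) = fun i => f (aa L p i) := by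
    funext i; fin_cases i <;> exact br_map ..
  have h3 : bb (fun i k n => f (L i k n)) (fun n => f (p n)) = fun i => f (bb L p i) := by
    funext i; fin_cases i <;> exact br_map ..
  have h4 : QQ (fun i k n => f (L i k n)) = fun i k => f (QQ L i k) := by
    funext i; fin_cases i <;> exact brc_map ..
  have h5 : AA (fun i k n => f (L i k n)) = fun i k => f (AA L i k) := by
    funext i; fin_cases i <;> exact brc_map ..
  have h6 : BB (fun i k n => f (L i k n)) = fun i k => f (BB L i k) := by
    funext i; fin_cases i <;> exact brc_map ..
  simp only [Fm, core, Matrix.of_apply, Matrix.map_apply, h1, h2, h3, h4, h5, h6]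
  exact ent_map ..

lemma det_Fm_map (L : Fin 6 → Fin 2 → Fin 4 → R) (p : Fin 4 → R) :
    (Fm (fun i k n => f (L i k n)) (fun n => f (p n))).det = f (Fm L p).det := by
  rw [Fm_map, RingHom.map_det]; rfl

lemma qq_map (L : Fin 6 → Fin 2 → Fin 4 → R) (p : Fin 4 → R) (i : Fin 3) :
    qq (fun i k n => f (L i k n)) (fun n => f (p n)) i = f (qq L p i) := by
  fin_cases i <;> exact br_map ..

end maps

section ideals
variable {R : Type*} [CommRing R]

lemma det_mem_pow (I : Ideal R) (M : Matrix (Fin 4) (Fin 4) R) (ρ κ : Fin 4 → ℕ)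
    (h : ∀ i j, M i j ∈ I ^ (ρ i + κ j)) : M.det ∈ I ^ (∑ i, ρ i + ∑ j, κ j) := by
  rw [Matrix.det_apply]
  refine Ideal.sum_mem _ fun σ _ => ?_
  refine (Submodule.smul_of_tower_mem _ _ ?_)
  have : ∑ i, ρ i + ∑ j, κ j = ∑ i, (ρ (σ i) + κ i) := by
    rw [Finset.sum_add_distrib, Equiv.sum_comp σ ρ]
  rw [this, ← Finset.prod_pow_eq_pow_sum]
  exact Ideal.prod_mem_prod fun i _ => h (σ i) i

/-- the exponent condition for the entry `(i, j)` -/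
def okExp (x y z : Fin 3 → ℕ) (i j : Fin 4) (n : ℕ) : Prop :=
  if i < 2 then
    if j < 2 then n ≤ x 2 + y 2 + z 2 ∧ n ≤ x 1 + y 1 + z 2 ∧ n ≤ x 1 + y 2 + z 1
    else n ≤ y 0 + z 2 ∧ n ≤ y 2 + z 0
  else
    if j < 2 then n ≤ x 1 + y 1 + z 1 ∧ n ≤ x 2 + y 1 + z 2 ∧ n ≤ x 2 + y 2 + z 1
    else n ≤ y 1 + z 0 ∧ n ≤ y 0 + z 1

instance (x y z : Fin 3 → ℕ) (i j : Fin 4) (n : ℕ) : Decidable (okExp x y z i j n) := by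
  unfold okExp; infer_instance

lemma mem3 (I : Ideal R) {a b c d : R} {k l m n : ℕ} (ha : a ∈ I ^ k) (hb : b ∈ I ^ l)
    (hc : c ∈ I ^ m) (h : n ≤ k + l + m) : a * b * c * d ∈ I ^ n := by
  apply Ideal.mul_mem_right
  apply Ideal.pow_le_pow_right h
  rw [pow_add, pow_add]
  exact Ideal.mul_mem_mul (Ideal.mul_mem_mul ha hb) hc

lemma mem2 (I : Ideal R) {a b d : R} {k l n : ℕ} (ha : a ∈ I ^ k) (hb : b ∈ I ^ l)
    (h : n ≤ k + l) : a * b * d ∈ I ^ n := by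
  apply Ideal.mul_mem_right
  apply Ideal.pow_le_pow_right h
  rw [pow_add]
  exact Ideal.mul_mem_mul ha hb

lemma ent_mem (I : Ideal R) (q a b : Fin 3 → R) (Q A B : Fin 3 → Fin 3 → R) (x y z : Fin 3 → ℕ)
    (hq : ∀ i, q i ∈ I ^ x i) (ha : ∀ i, a i ∈ I ^ y i) (hb : ∀ i, b i ∈ I ^ z i)
    (i j : Fin 4) (n : ℕ) (h : okExp x y z i j n) : ent q a b Q A B i j ∈ I ^ n := by
  unfold okExp at h
  unfold ent
  split_ifs at h ⊢
  · exact sub_mem (sub_mem (mem3 I (hq _) (ha _) (hb _) h.1) (mem3 I (hq _) (ha _) (hb _) h.2.1))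
      (mem3 I (hq _) (ha _) (hb _) h.2.2)
  · exact add_mem (mem2 I (ha _) (hb _) h.1) (mem2 I (ha _) (hb _) h.2)
  · exact sub_mem (sub_mem (mem3 I (hq _) (ha _) (hb _) h.1) (mem3 I (hq _) (ha _) (hb _) h.2.1))
      (mem3 I (hq _) (ha _) (hb _) h.2.2)
  · exact neg_mem (add_mem (mem2 I (ha _) (hb _) h.1) (mem2 I (ha _) (hb _) h.2))

end ideals

/-- the generic form as a polynomial -/
def LC (v : Fin 6 → Fin 2 → C4) : Fin 6 → Fin 2 → Fin 4 → R3 := fun i k n => C (v i k n)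

def F0 (v : Fin 6 → Fin 2 → C4) : R3 := (Fm (LC v) (fun n => X n)).det

lemma eval_F0 (v : Fin 6 → Fin 2 → C4) (w : C4) : eval w (F0 v) = (Fm v w).det := by
  unfold F0
  rw [← det_Fm_map (eval w)]
  simp [LC]

lemma eval_br (v : Fin 6 → Fin 2 → C4) (i j m : Fin 6) (w : C4) :
    eval w (br (LC v) i j m (fun n => X n)) = br v i j m w := by
  rw [← br_map (eval w)]
  simp [LC]

lemma mem_span_pair' {a b w : C4} (h : w ∈ Submodule.span ℂ {a, b}) :
    ∃ s t : ℂ, w = fun n => s * a n + t * b n := by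
  obtain ⟨s, t, rfl⟩ := Submodule.mem_span_pair.mp h
  exact ⟨s, t, rfl⟩

lemma xv_self (v : Fin 6 → Fin 2 → C4) (i m : Fin 6) (k : Fin 2) (s t : ℂ) :
    xv v i m (fun n => s * v i 0 n + t * v i 1 n) k = 0 := by
  simp only [xv, det4_lin, det4]; ring

lemma br_mem (v : Fin 6 → Fin 2 → C4) (i j m l : Fin 6) (h : l = i ∨ l = j ∨ l = m) :
    br (LC v) i j m (fun n => X n) ∈ lineIdeal (Submodule.span ℂ {v l 0, v l 1}) := by
  intro w hw
  obtain ⟨s, t, rfl⟩ := mem_span_pair' hw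
  rw [eval_br]
  rcases h with rfl | rfl | rfl
  · simp [br, D, xv_self]
  · simp [br, D, xv_self]
  · rw [br_swap]; simp [br, D, xv_self]

def hasLine (l i j m : Fin 6) : ℕ := if l = i ∨ l = j ∨ l = m then 1 else 0

lemma br_mem_pow (v : Fin 6 → Fin 2 → C4) (i j m l : Fin 6) :
    br (LC v) i j m (fun n => X n) ∈
      lineIdeal (Submodule.span ℂ {v l 0, v l 1}) ^ hasLine l i j m := by
  unfold hasLine
  split_ifs with h
  · rw [pow_one]; exact br_mem v i j m l h
  · simp

lemma F0_mem (v : Fin 6 → Fin 2 → C4) (l : Fin 6) (hl : l ≠ 5) :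
    F0 v ∈ lineIdeal (Submodule.span ℂ {v l 0, v l 1}) ^ 6 := by
  set I := lineIdeal (Submodule.span ℂ {v l 0, v l 1}) with hI
  have main : ∀ ρ κ : Fin 4 → ℕ, (∑ i, ρ i + ∑ j, κ j = 6) →
      (∀ i j, okExp ![hasLine l 0 3 4, hasLine l 1 3 4, hasLine l 2 3 4]
        ![hasLine l 2 1 4, hasLine l 0 2 4, hasLine l 0 1 4]
        ![hasLine l 2 1 3, hasLine l 0 2 3, hasLine l 0 1 3] i j (ρ i + κ j)) → F0 v ∈ I ^ 6 := by
    intro ρ κ hs h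
    rw [← hs]
    apply det_mem_pow
    intro i j
    refine ent_mem I _ _ _ _ _ _ _ _ _ ?_ ?_ ?_ i j _ (h i j)
    · intro i; fin_cases i <;> exact br_mem_pow ..
    · intro i; fin_cases i <;> exact br_mem_pow ..
    · intro i; fin_cases i <;> exact br_mem_pow ..
  clear_value I
  fin_cases l
  · exact main ![0, 0, 0, 0] ![2, 2, 1, 1] (by decide) (by decide)
  · exact main ![1, 1, 0, 0] ![1, 1, 1, 1] (by decide) (by decide)
  · exact main ![0, 0, 1, 1] ![1, 1, 1, 1] (by decide) (by decide)
  · exact main ![0, 0, 0, 0] ![2, 2, 1, 1] (by decide) (by decide)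
  · exact main ![0, 0, 0, 0] ![2, 2, 1, 1] (by decide) (by decide)
  · exact absurd rfl hl

lemma F0_mem_six (v : Fin 6 → Fin 2 → C4) (h : ∀ i, qq v (v 5 0) i ≠ 0) :
    F0 v ∈ lineIdeal (Submodule.span ℂ {v 5 0, v 5 1}) := by
  intro w hw
  obtain ⟨s, t, rfl⟩ := mem_span_pair' hw
  rw [eval_F0]
  let V : Fin 6 → Fin 2 → Fin 4 → MvPolynomial (Fin 2) ℂ := fun i k n => C (v i k n)
  have hV : (Fm V (fun n => X 0 * V 5 0 n + X 1 * V 5 1 n)).det = 0 := by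
    apply det_Fm
    · exact X_ne_zero 1
    · intro i hi
      apply h i
      have := congrArg (eval ![1, 0]) hi
      rw [← qq_map] at this
      simpa [V] using this
  have := congrArg (eval ![s, t]) hV
  rw [← det_Fm_map] at this
  simpa [V] using this

section hom

lemma det_hom (M : Matrix (Fin 4) (Fin 4) R3) (κ : Fin 4 → ℕ)
    (h : ∀ i j, (M i j).IsHomogeneous (κ j)) : M.det.IsHomogeneous (∑ j, κ j) := by
  rw [Matrix.det_apply']
  refine IsHomogeneous.sum _ _ _ fun σ _ => ?_
  have h1 : IsHomogeneous (((Equiv.Perm.sign σ : ℤˣ) : ℤ) : R3) 0 := by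
    have : ((((Equiv.Perm.sign σ : ℤˣ) : ℤ) : R3)) = C (((Equiv.Perm.sign σ : ℤˣ) : ℤ) : ℂ) := by
      simp
    rw [this]; exact isHomogeneous_C _ _
  have h2 := h1.mul (IsHomogeneous.prod Finset.univ (fun i => M (σ i) i) κ fun i _ => h (σ i) i)
  simpa using h2

lemma br_hom (v : Fin 6 → Fin 2 → C4) (i j m : Fin 6) :
    (br (LC v) i j m (fun n => X n)).IsHomogeneous 2 := by
  have hx : ∀ (i m : Fin 6) (k : Fin 2), (xv (LC v) i m (fun n => X n) k).IsHomogeneous 1 := by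
    intro i m k
    have : xv (LC v) i m (fun n => X n) k =
        ∑ n, C (det4 (Pi.single n 1) (v i 0) (v i 1) (v m k)) * X n := by
      simp [xv, det4, Fin.sum_univ_four, LC]; ring
    rw [this]
    refine IsHomogeneous.sum _ _ _ fun n _ => ?_
    simpa using (isHomogeneous_C (Fin 4) _).mul (isHomogeneous_X ℂ n)
  simp only [br, D]
  exact IsHomogeneous.sub ((hx _ _ _).mul (hx _ _ _)) ((hx _ _ _).mul (hx _ _ _))

lemma F0_hom (v : Fin 6 → Fin 2 → C4) : (F0 v).IsHomogeneous 20 := by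
  have hk : (20 : ℕ) = ∑ j, (![6, 6, 4, 4] : Fin 4 → ℕ) j := by decide
  rw [hk]
  apply det_hom
  have hQ : QQ (LC v) = fun i k => C (QQ v i k) := by
    funext i; fin_cases i <;> exact brc_map ..
  have hA : AA (LC v) = fun i k => C (AA v i k) := by
    funext i; fin_cases i <;> exact brc_map ..
  have hB : BB (LC v) = fun i k => C (BB v i k) := by
    funext i; fin_cases i <;> exact brc_map ..
  have hq : ∀ i, (qq (LC v) (fun n => X n) i).IsHomogeneous 2 := by
    intro i; fin_cases i <;> exact br_hom ..
  have ha : ∀ i, (aa (LC v) (fun n => X n) i).IsHomogeneous 2 := by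
    intro i; fin_cases i <;> exact br_hom ..
  have hb : ∀ i, (bb (LC v) (fun n => X n) i).IsHomogeneous 2 := by
    intro i; fin_cases i <;> exact br_hom ..
  have h3 : ∀ i j k (c : ℂ), (qq (LC v) (fun n => X n) i * aa (LC v) (fun n => X n) j *
      bb (LC v) (fun n => X n) k * C c).IsHomogeneous 6 := fun i j k c =>
    (((hq i).mul (ha j)).mul (hb k)).mul (isHomogeneous_C _ c)
  have h2 : ∀ j k (c : ℂ), (aa (LC v) (fun n => X n) j *
      bb (LC v) (fun n => X n) k * C c).IsHomogeneous 4 := fun j k c =>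
    ((ha j).mul (hb k)).mul (isHomogeneous_C _ c)
  intro i j
  simp only [Fm, core, Matrix.of_apply, hQ, hA, hB]
  simp only [ent, cB00, cB11, cS01, cS10, mulq_map, bez_map, rows_map, cols_map, rBc_map]
  have k1 : j < 2 → (![6, 6, 4, 4] : Fin 4 → ℕ) j = 6 := by revert j; decide
  have k2 : ¬ j < 2 → (![6, 6, 4, 4] : Fin 4 → ℕ) j = 4 := by revert j; decide
  split_ifs with c1 c2 c2
  · rw [k1 c2]; exact ((h3 _ _ _ _).sub (h3 _ _ _ _)).sub (h3 _ _ _ _)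
  · rw [k2 c2]; exact (h2 _ _ _).add (h2 _ _ _)
  · rw [k1 c2]; exact ((h3 _ _ _ _).sub (h3 _ _ _ _)).sub (h3 _ _ _ _)
  · rw [k2 c2]; exact ((h2 _ _ _).add (h2 _ _ _)).neg

end hom

end Part1


namespace Part1

/-- the special configuration of six lines, over the integers -/
def exZ : Fin 6 → Fin 2 → Fin 4 → ℤ :=
  ![![![0, 0, 1, 0], ![0, 0, 0, 1]],
    ![![1, 0, 0, 0], ![0, 1, 0, 0]],
    ![![1, 0, -1, 0], ![0, 1, 0, -1]],
    ![![1, 0, -2, 0], ![0, 1, 0, 1]],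
    ![![1, 0, -2, 3], ![0, 1, -2, -1]],
    ![![-1, 0, -3, 1], ![-3, 2, 1, 0]]]

def oZ : Fin 4 → ℤ := ![1, 0, 0, 1]

lemma det_eq_det4 {R : Type*} [CommRing R] (M : Matrix (Fin 4) (Fin 4) R) :
    M.det = det4 (M 0) (M 1) (M 2) (M 3) := by
  simp [Matrix.det_succ_row_zero, Fin.sum_univ_succ, det4, Fin.succAbove]
  ring

lemma exZ_qq : ∀ i, qq exZ (exZ 5 0) i ≠ 0 := by decide +kernel

lemma exZ_det : (Fm exZ oZ).det ≠ 0 := by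
  rw [det_eq_det4]
  decide +kernel

lemma exZ_disj : ∀ i j : Fin 6, i < j → det4 (exZ i 0) (exZ i 1) (exZ j 0) (exZ j 1) ≠ 0 := by
  decide +kernel
end Part1


/-! ### Part 2: uniqueness for a special configuration -/

namespace Part2

/-- integer polynomial expressions in three variables -/
inductive E : Type
  | v : Fin 3 → E
  | c : ℤ → E
  | add : E → E → E
  | mul : E → E → E

namespace E

instance : Add E := ⟨E.add⟩
instance : Mul E := ⟨E.mul⟩
instance : Sub E := ⟨fun a b => E.add a (E.mul (E.c (-1)) b)⟩
instance : Neg E := ⟨fun b => E.mul (E.c (-1)) b⟩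

def ev {R : Type*} [CommRing R] (ρ : Fin 3 → R) : E → R
  | v i => ρ i
  | c n => (n : R)
  | add a b => a.ev ρ + b.ev ρ
  | mul a b => a.ev ρ * b.ev ρ

/-- degree bound -/
def dg (i : Fin 3) : E → ℕ
  | v j => if i = j then 1 else 0
  | c _ => 0
  | add a b => max (a.dg i) (b.dg i)
  | mul a b => a.dg i + b.dg i

/-- coefficients after specialisation of the variables other than `i` -/
def co (i : Fin 3) (pt : Fin 3 → ℤ) : E → ℕ → ℤ
  | v j, k => if i = j then (if k = 1 then 1 else 0) else (if k = 0 then pt j else 0)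
  | c n, k => if k = 0 then n else 0
  | add a b, k => a.co i pt k + b.co i pt k
  | mul a b, k => ∑ l ∈ Finset.range (k + 1), a.co i pt l * b.co i pt (k - l)

section
variable {R S : Type*} [CommRing R] [CommRing S] (ρ : Fin 3 → R)

@[simp] lemma ev_v (i : Fin 3) : (v i).ev ρ = ρ i := rfl
@[simp] lemma ev_c (n : ℤ) : (c n).ev ρ = (n : R) := rfl
@[simp] lemma ev_add (a b : E) : (a + b).ev ρ = a.ev ρ + b.ev ρ := rfl
@[simp] lemma ev_mul (a b : E) : (a * b).ev ρ = a.ev ρ * b.ev ρ := rfl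
@[simp] lemma ev_sub (a b : E) : (a - b).ev ρ = a.ev ρ - b.ev ρ := by
  change a.ev ρ + ((-1 : ℤ) : R) * b.ev ρ = _
  push_cast; ring
@[simp] lemma ev_neg (b : E) : (-b).ev ρ = - b.ev ρ := by
  change ((-1 : ℤ) : R) * b.ev ρ = _
  push_cast; ring
lemma ev_map (f : R →+* S) (e : E) : f (e.ev ρ) = e.ev (fun i => f (ρ i)) := by
  induction e with
  | v i => rfl
  | c n => simp [ev]
  | add a b ha hb => simp [ev, ha, hb]
  | mul a b ha hb => simp [ev, ha, hb]
end

abbrev S3 : Type := MvPolynomial (Fin 3) ℂ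

def po (e : E) : S3 := e.ev (fun i => X i)

lemma eval_po (e : E) (ρ : Fin 3 → ℂ) : eval ρ e.po = e.ev ρ := by
  unfold po; rw [ev_map]; simp

lemma dg_po (i : Fin 3) (e : E) : degreeOf i e.po ≤ e.dg i := by
  unfold po
  induction e with
  | v j =>
    simp only [ev, dg]
    rw [degreeOf_X]
  | c n =>
    simp only [ev, dg]
    have : ((n : ℤ) : S3) = C (n : ℂ) := by simp
    rw [this, degreeOf_C]
  | add a b ha hb => exact (degreeOf_add_le _ _ _).trans (max_le_max ha hb)
  | mul a b ha hb => exact (degreeOf_mul_le _ _ _).trans (add_le_add ha hb)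

lemma not_mem_vars (i : Fin 3) (e : E) (h : e.dg i = 0) : i ∉ e.po.vars := by
  rw [mem_vars_iff_degreeOf_ne_zero, not_not]
  exact Nat.le_zero.mp (h ▸ dg_po i e)

open Polynomial in
lemma coeff_ev (i : Fin 3) (pt : Fin 3 → ℤ) (e : E) (k : ℕ) :
    (e.ev (fun j => if i = j then (Polynomial.X : ℂ[X]) else Polynomial.C (pt j : ℂ))).coeff k
      = (e.co i pt k : ℂ) := by
  induction e generalizing k with
  | v j =>
    simp only [ev, co]
    split_ifs with h1 h2 h2
    · simp [h2]
    · simp [Polynomial.coeff_X, Ne.symm h2]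
    · simp [h2]
    · rw [Polynomial.coeff_C, if_neg h2]; simp
  | c n =>
    simp only [ev, co]
    have : ((n : ℤ) : ℂ[X]) = Polynomial.C (n : ℂ) := by simp
    rw [this, Polynomial.coeff_C]
    split_ifs <;> simp
  | add a b ha hb =>
    simp only [ev, co, Polynomial.coeff_add, ha, hb]
    push_cast; rfl
  | mul a b ha hb =>
    simp only [ev, co, Polynomial.coeff_mul]
    generalize a.ev (fun j => if i = j then (Polynomial.X : ℂ[X]) else Polynomial.C (pt j : ℂ)) = A
      at *
    generalize b.ev (fun j => if i = j then (Polynomial.X : ℂ[X]) else Polynomial.C (pt j : ℂ)) = B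
      at *
    rw [Finset.Nat.sum_antidiagonal_eq_sum_range_succ (fun x y => A.coeff x * B.coeff y)]
    push_cast
    simp only [ha, hb]

open Polynomial in
lemma natDegree_le_degreeOf (i : Fin 3) (pt : Fin 3 → ℂ) (p : S3) :
    (aeval (fun j => if i = j then (Polynomial.X : ℂ[X]) else Polynomial.C (pt j)) p).natDegree
      ≤ degreeOf i p := by
  rw [aeval_eq_eval₂Hom, coe_eval₂Hom, eval₂_eq']
  apply Polynomial.natDegree_sum_le_of_forall_le
  intro m hm
  refine le_trans ?_ (monomial_le_degreeOf i hm)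
  refine (Polynomial.natDegree_C_mul_le _ _).trans ?_
  refine (Polynomial.natDegree_prod_le _ _).trans ?_
  rw [Finset.sum_eq_single i]
  · simp
  · intro j _ hj
    rw [if_neg (Ne.symm hj), ← Polynomial.C_pow, Polynomial.natDegree_C]
  · simp

lemma le_degreeOf (i : Fin 3) (pt : Fin 3 → ℤ) (e : E) (k : ℕ) (h : e.co i pt k ≠ 0) :
    k ≤ degreeOf i e.po := by
  refine le_trans ?_ (natDegree_le_degreeOf i (fun j => (pt j : ℂ)) e.po)
  apply Polynomial.le_natDegree_of_ne_zero
  have : aeval (fun j => if i = j then (Polynomial.X : Polynomial ℂ)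
      else Polynomial.C ((pt j : ℤ) : ℂ)) e.po =
      e.ev (fun j => if i = j then (Polynomial.X : Polynomial ℂ) else Polynomial.C (pt j : ℂ)) := by
    unfold po
    have := ev_map (fun i => X i) ((aeval (R := ℂ) (fun j => if i = j then (Polynomial.X : Polynomial ℂ)
      else Polynomial.C ((pt j : ℤ) : ℂ))).toRingHom) e
    simpa using this
  rw [this, coeff_ev]
  exact_mod_cast h

/-! the explicit expressions -/
def x : E := v 0
def z : E := v 1
def w : E := v 2

def ga0 : E := x * x + c 3 * x * z * w - x * z - c 6 * x * w + x + c 3 * z * w - c 7 * z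
def ga1 : E := c 4 * x * x * w + c 4 * x * z - c 4 * x * w - c 2 * x - c 6 * z * w - c 2 * z
def al0 : E := c 6 * x * z * w - c 2 * x * z - c 12 * x * w + c 2 * x + c 6 * z * w - c 14 * z + c 8
def al1 : E := c 4 * x * w - c 4 * x * z + c 2 * x + c 6 * z * w + c 2 * z - c 16 * w
def dA : E := c 8 - c 2 * x * x
def e1 : E := ga1 - w * ga0
def e2 : E := al1 - w * al0
def e3 : E := al0 * ga1 - al1 * ga0
def e4 : E := al1 + c 2 * w * al0
def e5 : E := (c 1 - c 3 * w) * al1 - c 2 * al0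
def ee : Fin 5 → E := ![e1, e2, e3, e4, e5]
def XX : Fin 4 → E := ![e1 * al1, - (e1 * al0), - (e2 * ga1), e2 * ga0]

/-- degrees of the five factors -/
def dd (i : Fin 3) : Fin 5 → ℕ :=
  (![![2, 1, 3, 1, 1], ![1, 1, 2, 1, 1], ![2, 2, 2, 2, 2]] : Fin 3 → Fin 5 → ℕ) i

lemma ee_deg (i : Fin 3) (j : Fin 5) : dd i j ≤ degreeOf i (ee j).po := by
  apply le_degreeOf i (fun _ => 3)
  revert i j
  decide +kernel

lemma XX_deg (i : Fin 3) (n : Fin 4) : degreeOf i (XX n).po ≤ ![3, 2, 3] i := by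
  refine (dg_po i _).trans ?_
  revert i n
  decide +kernel

lemma ee_ne_zero (j : Fin 5) : (ee j).po ≠ 0 := by
  intro h
  have := ee_deg 2 j
  rw [h, degreeOf_zero] at this
  clear h
  revert this
  revert j
  decide

end E
end Part2


namespace Part2

/-- the coefficient functionals which detect multiplicity along a line -/
def phi (a b : C4) (s t : ℂ) (u : C4) (j : ℕ) (F : R3) : ℂ :=
  (aeval (fun n => Polynomial.C (s * a n + t * b n) + Polynomial.C (u n) * Polynomial.X) F
    : Polynomial ℂ).coeff j

def Van (m : ℕ) (a b : C4) (F : R3) : Prop :=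
  ∀ (s t : ℂ) (u : C4) (j : ℕ), j < m → phi a b s t u j F = 0

lemma Van.dvd {m : ℕ} {a b : C4} {F : R3} (h : Van m a b F) {A : Type*} [CommRing A] [Algebra ℂ A]
    (s t e : A) (u : Fin 4 → A) :
    e ^ m ∣ aeval (fun n => s * algebraMap ℂ A (a n) + t * algebraMap ℂ A (b n) + e * u n) F := by
  classical
  let g : Fin 4 → Polynomial (MvPolynomial (Fin 2 ⊕ Fin 4) ℂ) := fun n =>
    Polynomial.C (X (Sum.inl 0) * C (a n) + X (Sum.inl 1) * C (b n)) +
      Polynomial.C (X (Sum.inr n)) * Polynomial.X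
  let G : Polynomial (MvPolynomial (Fin 2 ⊕ Fin 4) ℂ) := aeval g F
  have h1 : ∀ j < m, G.coeff j = 0 := by
    intro j hj
    apply MvPolynomial.funext
    intro ρ
    rw [map_zero, ← Polynomial.coeff_map]
    have := h (ρ (Sum.inl 0)) (ρ (Sum.inl 1)) (fun n => ρ (Sum.inr n)) j hj
    rw [← this]
    unfold phi
    congr 1
    have h2 : (Polynomial.mapAlgHom (aeval ρ : MvPolynomial (Fin 2 ⊕ Fin 4) ℂ →ₐ[ℂ] ℂ)) G =
        aeval (fun n => Polynomial.mapAlgHom (aeval ρ : MvPolynomial (Fin 2 ⊕ Fin 4) ℂ →ₐ[ℂ] ℂ) (g n)) F := by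
      simp only [G]
      rw [← MvPolynomial.comp_aeval_apply]
    have h3 : Polynomial.map (eval ρ) G = (Polynomial.mapAlgHom (aeval ρ : MvPolynomial (Fin 2 ⊕ Fin 4) ℂ →ₐ[ℂ] ℂ)) G := by
      rw [Polynomial.coe_mapAlgHom]
      congr 1
    rw [h3, h2]
    congr 1
    congr 1
    funext n
    simp [g]
  have h2 : Polynomial.X ^ m ∣ G := Polynomial.X_pow_dvd_iff.mpr h1
  let ψ : Polynomial (MvPolynomial (Fin 2 ⊕ Fin 4) ℂ) →+* A :=
    Polynomial.eval₂RingHom (aeval (Sum.elim ![s, t] u) : MvPolynomial (Fin 2 ⊕ Fin 4) ℂ →ₐ[ℂ] A).toRingHom e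
  have h3 := map_dvd ψ h2
  have h4 : ψ G = aeval (fun n => s * algebraMap ℂ A (a n) + t * algebraMap ℂ A (b n) + e * u n) F := by
    have hs : ∀ c : ℂ, ψ (algebraMap ℂ (Polynomial (MvPolynomial (Fin 2 ⊕ Fin 4) ℂ)) c) = algebraMap ℂ A c := by
      intro c
      simp [ψ, Polynomial.algebraMap_apply, MvPolynomial.algebraMap_eq]
    let ψ' : Polynomial (MvPolynomial (Fin 2 ⊕ Fin 4) ℂ) →ₐ[ℂ] A := { ψ with commutes' := hs }
    change ψ' G = _
    simp only [G]
    rw [MvPolynomial.comp_aeval_apply]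
    congr 1
    congr 1
    funext n
    change ψ (g n) = _
    simp [ψ, g, MvPolynomial.algebraMap_eq]
    ring
  rw [h4, map_pow] at h3
  simpa [ψ] using h3

namespace E

def sE : Fin 5 → E := ![XX 2, XX 0, XX 0, XX 0, XX 0]
def tE : Fin 5 → E := ![XX 3, XX 1, XX 1, XX 1, XX 1]
def uE : Fin 5 → Fin 4 → E :=
  ![![al1, -al0, c 0, c 0], ![c 0, c 0, -ga1, ga0], ![c 0, c 0, w, - c 1],
    ![c 0, c 0, ga1 + w * dA, - (ga0 + dA)], ![c 0, c 0, ga1 + z * w * dA, - (ga0 + z * dA)]]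

section
variable {R : Type*} [CommRing R] (ρ : Fin 3 → R)

lemma ga0_ev : ga0.ev ρ = ρ 0 * ρ 0 + 3 * ρ 0 * ρ 1 * ρ 2 - ρ 0 * ρ 1 - 6 * ρ 0 * ρ 2 + ρ 0
    + 3 * ρ 1 * ρ 2 - 7 * ρ 1 := by
  simp [ga0, x, z, w]
lemma ga1_ev : ga1.ev ρ = 4 * ρ 0 * ρ 0 * ρ 2 + 4 * ρ 0 * ρ 1 - 4 * ρ 0 * ρ 2 - 2 * ρ 0
    - 6 * ρ 1 * ρ 2 - 2 * ρ 1 := by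
  simp [ga1, x, z, w]
lemma dA_ev : dA.ev ρ = 8 - 2 * ρ 0 * ρ 0 := by
  simp [dA, x]
lemma al0_ev : al0.ev ρ = 2 * ga0.ev ρ + dA.ev ρ := by
  rw [ga0_ev, dA_ev]; simp [al0, x, z, w]; ring
lemma al1_ev : al1.ev ρ = - ga1.ev ρ - 2 * ρ 2 * dA.ev ρ := by
  rw [ga1_ev, dA_ev]; simp [al1, x, z, w]; ring
lemma e1_ev : e1.ev ρ = ga1.ev ρ - ρ 2 * ga0.ev ρ := by simp [e1, w]
lemma e2_ev : e2.ev ρ = al1.ev ρ - ρ 2 * al0.ev ρ := by simp [e2, w]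
lemma e3_ev : e3.ev ρ = al0.ev ρ * ga1.ev ρ - al1.ev ρ * ga0.ev ρ := by simp [e3]
lemma e4_ev : e4.ev ρ = al1.ev ρ + 2 * ρ 2 * al0.ev ρ := by simp [e4, w]
lemma e5_ev : e5.ev ρ = (1 - 3 * ρ 2) * al1.ev ρ - 2 * al0.ev ρ := by simp [e5, w]

lemma XX_decomp (i : Fin 5) (n : Fin 4) :
    (XX n).ev ρ = (sE i).ev ρ * ((Part1.exZ i.castSucc 0 n : ℤ) : R) +
      (tE i).ev ρ * ((Part1.exZ i.castSucc 1 n : ℤ) : R) + (ee i).ev ρ * (uE i n).ev ρ := by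
  fin_cases i <;> fin_cases n <;>
    simp [XX, sE, tE, uE, ee, Part1.exZ, e1_ev, e2_ev, e3_ev, e4_ev, e5_ev, x, z, w,
      Fin.castSucc, Fin.castAdd, Fin.castLE] <;>
    (try simp only [al0_ev, al1_ev, ga0_ev, ga1_ev, dA_ev]) <;> ring
end

def exC (i : Fin 6) (k : Fin 2) : C4 := fun n => (Part1.exZ i k n : ℂ)

/-- `F` evaluated at the parametrised point -/
def FX (F : R3) : S3 := aeval (fun n => (XX n).po) F

lemma dvd_FX (F : R3) (i : Fin 5) (h : Van 6 (exC i.castSucc 0) (exC i.castSucc 1) F) :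
    (ee i).po ^ 6 ∣ FX F := by
  have := h.dvd (A := S3) (sE i).po (tE i).po (ee i).po (fun n => (uE i n).po)
  have hf : (fun n => (XX n).po) = fun n => (sE i).po * algebraMap ℂ S3 (exC i.castSucc 0 n)
      + (tE i).po * algebraMap ℂ S3 (exC i.castSucc 1 n) + (ee i).po * (uE i n).po := by
    funext n
    simp only [po, exC]
    rw [XX_decomp _ i n]
    simp only [map_intCast]
  rw [FX, hf]
  exact this

end E
end Part2


namespace Part2
namespace E

lemma po_ne_zero (e : E) (ρ : Fin 3 → ℂ) (h : e.ev ρ ≠ 0) : e.po ≠ 0 := by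
  intro h0
  rw [← eval_po, h0, map_zero] at h
  exact h rfl

lemma irrA (f1 f0 a b : E) (k : Fin 3) (n : ℕ) (hn : n ≠ 0)
    (hb : a.po * f1.po + b.po * f0.po = (n : S3))
    (h1 : f1.dg k = 0) (h0 : f0.dg k = 0) (ρ : Fin 3 → ℂ) (hρ : f1.ev ρ ≠ 0) :
    Irreducible (f1.po * X k + f0.po) := by
  refine irreducible_mul_X_add _ _ k (po_ne_zero _ ρ hρ) (not_mem_vars _ _ h1)
    (not_mem_vars _ _ h0) ?_
  apply IsCoprime.isRelPrime
  refine ⟨C ((n : ℂ)⁻¹) * a.po, C ((n : ℂ)⁻¹) * b.po, ?_⟩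
  have hc : (C ((n : ℂ)⁻¹) : S3) * (n : S3) = 1 := by
    rw [show (n : S3) = C (n : ℂ) by simp, ← C_mul, inv_mul_cancel₀ (by exact_mod_cast hn), C_1]
  linear_combination (C ((n : ℂ)⁻¹) : S3) * hb + hc

/-- an irreducible polynomial not dividing another one, detected at a point -/
lemma relPrime_of_pt {p q : S3} (hp : Irreducible p) (ρ : Fin 3 → ℂ) (h1 : eval ρ p = 0)
    (h2 : eval ρ q ≠ 0) : IsRelPrime p q := by
  rw [hp.isRelPrime_iff_not_dvd]
  rintro ⟨r, rfl⟩
  simp [h1] at h2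

lemma irrB (f1 f0 g a b : E) (n : ℕ) (hn : n ≠ 0)
    (hb : a.po * f1.po + b.po * f0.po = (n : S3))
    (h1 : f1.dg 0 = 0) (h0 : f0.dg 0 = 0) (ρ : Fin 3 → ℂ) (hρ : f1.ev ρ ≠ 0)
    (h1' : f1.dg 1 = 0) (h0' : f0.dg 1 = 0) (hg : g.dg 1 = 0)
    (σ : Fin 3 → ℂ) (hσ : f1.ev σ * σ 0 + f0.ev σ = 0) (hσg : g.ev σ ≠ 0) :
    Irreducible ((f1.po * X 0 + f0.po) * X 1 + g.po) := by
  have hi := irrA f1 f0 a b 0 n hn hb h1 h0 ρ hρ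
  have hv : 1 ∉ (f1.po * X 0 + f0.po : S3).vars :=
    not_mem_vars 1 (f1 * v 0 + f0) (by
      change max (f1.dg 1 + 0) (f0.dg 1) = 0
      simp [h1', h0'])
  refine irreducible_mul_X_add _ _ 1 hi.ne_zero hv (not_mem_vars _ _ hg) ?_
  exact relPrime_of_pt hi σ (by simpa [eval_po] using hσ) (by simpa [eval_po] using hσg)

def q (a2 a1 a0 : ℤ) : E := c a2 * w * w + c a1 * w + c a0

lemma q_ev {R : Type*} [CommRing R] (ρ : Fin 3 → R) (a2 a1 a0 : ℤ) :
    (q a2 a1 a0).ev ρ = a2 * ρ 2 * ρ 2 + a1 * ρ 2 + a0 := rfl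

lemma q_dg (a2 a1 a0 : ℤ) (i : Fin 3) (hi : i ≠ 2) : (q a2 a1 a0).dg i = 0 := by
  fin_cases i
  · rfl
  · rfl
  · exact absurd rfl hi

lemma irr1 : Irreducible e1.po := by
  have := irrB (q (-3) 1 4) (q (-3) 1 (-2)) (c 3 * x * x * w + c 6 * x * w * w - c 5 * x * w - c 2 * x)
    (q 0 0 1) (q 0 0 (-1)) 6 (by norm_num) (by simp only [po, q_ev]; push_cast; ring)
    rfl rfl (fun _ => 0) (by simp [q_ev]) rfl rfl rfl ![1/2, 0, 0]
    (by simp [q_ev]; norm_num) (by simp [x, w])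
  convert this using 1
  simp only [po, q_ev, e1_ev, ga0_ev, ga1_ev, ev_add, ev_sub, ev_mul, ev_c, x, w, ev_v]
  push_cast; ring

lemma irr2 : Irreducible e2.po := by
  have := irrB (q (-6) 2 (-4)) (q (-6) 20 2)
    (c 12 * x * w * w + c 2 * x * w + c 2 * x - c 24 * w)
    (q 0 3 (-11)) (q 0 (-3) 2) 48 (by norm_num) (by simp only [po, q_ev]; push_cast; ring)
    rfl rfl (fun _ => 0) (by simp [q_ev]) rfl rfl rfl ![1/2, 0, 0]
    (by simp [q_ev]; norm_num) (by simp [x, w])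
  convert this using 1
  simp only [po, q_ev, e2_ev, al0_ev, al1_ev, dA_ev, ga0_ev, ga1_ev, ev_add, ev_sub, ev_mul, ev_c,
    x, w, ev_v]
  push_cast; ring

lemma irr4 : Irreducible e4.po := by
  have := irrB (q 12 (-4) (-4)) (q 12 (-22) 2)
    (c (-24) * x * w * w + c 8 * x * w + c 2 * x)
    (q 0 2 (-3)) (q 0 (-2) 0) 12 (by norm_num) (by simp only [po, q_ev]; push_cast; ring)
    rfl rfl (fun _ => 0) (by simp [q_ev]) rfl rfl rfl ![1/2, 0, 0]
    (by simp [q_ev]; norm_num) (by simp [x, w])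
  convert this using 1
  simp only [po, q_ev, e4_ev, al0_ev, al1_ev, dA_ev, ga0_ev, ga1_ev, ev_add, ev_sub, ev_mul, ev_c,
    x, w, ev_v]
  push_cast; ring

lemma irr5 : Irreducible e5.po := by
  have h1 := irrA (q (-18) (-12) 30) (q 48 (-16) (-16)) (q 0 8 8) (q 0 3 6) 1 144 (by norm_num)
    (by simp only [po, q_ev]; push_cast; ring) rfl rfl (fun _ => 0) (by simp [q_ev])
  have h2 : Irreducible ((q (-12) 22 (-2)).po * X 0 +
      ((q (-18) (-12) 30).po * X 1 + (q 48 (-16) (-16)).po)) := by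
    refine irreducible_mul_X_add _ _ 0 (po_ne_zero _ (fun _ => 0) (by simp [q_ev]))
      (not_mem_vars _ _ rfl)
      (not_mem_vars 0 (q (-18) (-12) 30 * v 1 + q 48 (-16) (-16)) rfl) ?_
    refine (relPrime_of_pt h1 ![0, 8/15, 0] ?_ ?_).symm
    · simp [eval_po, q_ev]; norm_num
    · simp [eval_po, q_ev]
  convert h2 using 1
  simp only [po, q_ev, e5_ev, al0_ev, al1_ev, dA_ev, ga0_ev, ga1_ev, ev_add, ev_sub, ev_mul, ev_c,
    x, w, ev_v]
  push_cast; ring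

/-- witness points -/
def wit : Fin 5 → Fin 3 → ℂ :=
  ![![-3, -9, -1], ![-3, 3, -3], ![0, 0, 0], ![1, -7/2, 1], ![0, -2, -1]]

lemma ee_rel (i j : Fin 5) (hij : i ≠ j) : IsRelPrime (ee i).po (ee j).po := by
  have key : ∀ i j : Fin 5, i ≠ j → i ≠ 2 → IsRelPrime (ee i).po (ee j).po := by
    intro i j hij hi
    have h1 : Irreducible (ee i).po := by
      fin_cases i
      · exact irr1
      · exact irr2
      · exact absurd rfl hi
      · exact irr4
      · exact irr5
    refine relPrime_of_pt h1 (wit i) ?_ ?_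
    · rw [eval_po]
      fin_cases i <;> first | exact absurd rfl hi |
        (simp [ee, wit, e1_ev, e2_ev, e4_ev, e5_ev, al0_ev, al1_ev, dA_ev, ga0_ev, ga1_ev]; norm_num)
    · rw [eval_po]
      fin_cases i <;> fin_cases j <;> first | exact absurd rfl hi | exact absurd rfl hij |
        (simp [ee, wit, e1_ev, e2_ev, e3_ev, e4_ev, e5_ev, al0_ev, al1_ev, dA_ev, ga0_ev, ga1_ev]
         norm_num)
  by_cases hi : i = 2
  · exact (key j i hij.symm (fun h => hij (hi.trans h.symm))).symm
  · exact key i j hij hi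

lemma prod_dvd (F : R3) (h : ∀ i : Fin 5, Van 6 (exC i.castSucc 0) (exC i.castSucc 1) F) :
    ∏ i, (ee i).po ^ 6 ∣ FX F := by
  apply Finset.prod_dvd_of_isRelPrime
  · intro i _ j _ hij
    exact (ee_rel i j hij).pow
  · intro i _
    exact dvd_FX F i (h i)

end E
end Part2


namespace Part2

lemma eval_smul_hom {n : ℕ} {F : R3} (hF : F.IsHomogeneous n) (r : ℂ) (p : C4) :
    eval (fun i => r * p i) F = r ^ n * eval p F := by
  rw [eval_eq', eval_eq', Finset.mul_sum]
  refine Finset.sum_congr rfl fun d hd => ?_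
  have h := hF (mem_support_iff.mp hd)
  rw [Finsupp.weight_apply, Finsupp.sum_fintype _ _ (by simp)] at h
  simp only [Pi.one_apply, smul_eq_mul, mul_one] at h
  simp only [mul_pow, Finset.prod_mul_distrib, Finset.prod_pow_eq_pow_sum, h]
  ring

/-- solution of the linear system in terms of `γ = (g0, g1)`, `ε = (p0, p1)` -/
def ec {R : Type*} [CommRing R] (g0 g1 p0 p1 : R) : Fin 5 → R :=
  ![p0 * g1 - p1 * g0, p0 * (-g1 - 2 * p1) - p1 * (2 * g0 + p0),
    (2 * g0 + p0) * g1 - (-g1 - 2 * p1) * g0, p0 * (-g1 - 2 * p1) + 2 * p1 * (2 * g0 + p0),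
    (p0 - 3 * p1) * (-g1 - 2 * p1) - 2 * p0 * (2 * g0 + p0)]

def pc {R : Type*} [CommRing R] (g0 g1 p0 p1 : R) : Fin 4 → R :=
  ![ec g0 g1 p0 p1 0 * (-g1 - 2 * p1), - (ec g0 g1 p0 p1 0 * (2 * g0 + p0)),
    - (ec g0 g1 p0 p1 1 * g1), ec g0 g1 p0 p1 1 * g0]

lemma ec_map {R S : Type*} [CommRing R] [CommRing S] (f : R →+* S) (g0 g1 p0 p1 : R) (i : Fin 5) :
    f (ec g0 g1 p0 p1 i) = ec (f g0) (f g1) (f p0) (f p1) i := by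
  have h2 : f 2 = 2 := map_ofNat f 2
  have h3 : f 3 = 3 := map_ofNat f 3
  fin_cases i <;> simp [ec, h2, h3]

lemma pc_map {R S : Type*} [CommRing R] [CommRing S] (f : R →+* S) (g0 g1 p0 p1 : R) (i : Fin 4) :
    f (pc g0 g1 p0 p1 i) = pc (f g0) (f g1) (f p0) (f p1) i := by
  have h2 : f 2 = 2 := map_ofNat f 2
  fin_cases i <;> simp [pc, ec, h2]

def Sol {R : Type*} [CommRing R] (x z g0 g1 p0 p1 : R) : Prop :=
  g0 * (2 * x - 2) + 3 * g1 = p0 * (z - x) - 3 * z * p1 ∧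
  -2 * g0 - (x + 1) * g1 = 2 * z * p0 + 2 * x * p1

namespace E

lemma FX_deg (F : R3) (hF : F.IsHomogeneous 20) (i : Fin 3) :
    degreeOf i (FX F) ≤ 20 * ![3, 2, 3] i := by
  rw [FX, aeval_eq_eval₂Hom, coe_eval₂Hom, eval₂_eq']
  refine (degreeOf_sum_le _ _ _).trans (Finset.sup_le fun d hd => ?_)
  have h := hF (mem_support_iff.mp hd)
  rw [Finsupp.weight_apply, Finsupp.sum_fintype _ _ (by simp)] at h
  simp only [Pi.one_apply, smul_eq_mul, mul_one] at h
  refine (degreeOf_C_mul_le _ _ _).trans ?_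
  refine (degreeOf_prod_le _ _ _).trans ?_
  rw [← h, Finset.sum_mul]
  refine Finset.sum_le_sum fun n _ => (degreeOf_pow_le _ _ _).trans ?_
  exact Nat.mul_le_mul_left _ (XX_deg i n)

lemma exists_G (F : R3) (hF : F.IsHomogeneous 20)
    (h : ∀ i : Fin 5, Van 6 (exC i.castSucc 0) (exC i.castSucc 1) F) :
    ∃ G : S3, FX F = (∏ i, (ee i).po ^ 6) * G ∧ degreeOf 0 G ≤ 12 ∧ degreeOf 1 G ≤ 4 ∧
      degreeOf 2 G = 0 := by
  obtain ⟨G, hG⟩ := prod_dvd F h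
  refine ⟨G, hG, ?_⟩
  by_cases h0 : G = 0
  · simp [h0]
  have hp : (∏ i, (ee i).po ^ 6) ≠ 0 :=
    Finset.prod_ne_zero_iff.mpr fun i _ => pow_ne_zero _ (ee_ne_zero i)
  have key : ∀ i : Fin 3, 6 * ∑ j, dd i j + degreeOf i G ≤ 20 * ![3, 2, 3] i := by
    intro i
    refine le_trans ?_ (FX_deg F hF i)
    rw [hG, degreeOf_mul_eq hp h0, degreeOf_prod_eq _ _ (fun i _ => pow_ne_zero _ (ee_ne_zero i)),
      Finset.mul_sum]
    gcongr with j
    rw [degreeOf_pow_eq _ _ _ (ee_ne_zero j)]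
    exact Nat.mul_le_mul_left _ (ee_deg i j)
  have k0 := key 0
  have k1 := key 1
  have k2 := key 2
  simp [dd, Fin.sum_univ_five] at k0 k1 k2
  omega

lemma eval_indep (G : S3) (h : degreeOf 2 G = 0) (ρ σ : Fin 3 → ℂ) (h0 : ρ 0 = σ 0)
    (h1 : ρ 1 = σ 1) : eval ρ G = eval σ G := by
  refine hom_congr_vars (by ext; simp) ?_ rfl
  intro i hi _
  rw [mem_vars_iff_degreeOf_ne_zero] at hi
  fin_cases i
  · simpa using h0
  · simpa using h1
  · exact absurd h hi

lemma sol_eval (F : R3) (hF : F.IsHomogeneous 20) (G : S3)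
    (hG : FX F = (∏ i, (ee i).po ^ 6) * G) (h2 : degreeOf 2 G = 0)
    (x z g0 g1 p0 p1 : ℂ) (hs : Sol x z g0 g1 p0 p1) (hp : p0 ≠ 0) (hA : 8 - 2 * x * x ≠ 0) :
    eval (pc g0 g1 p0 p1) F * (8 - 2 * x * x) ^ 4 =
      (∏ i, ec g0 g1 p0 p1 i ^ 6) * eval ![x, z, 0] G := by
  obtain ⟨s1, s2⟩ := hs
  set t := p1 / p0 with ht
  have hw : p0 * t = p1 := by rw [ht]; field_simp
  set ρ : Fin 3 → ℂ := ![x, z, t] with hρ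
  have r0 : ρ 0 = x := rfl
  have r1 : ρ 1 = z := rfl
  have r2 : ρ 2 = t := rfl
  set D := 8 - 2 * x * x with hD
  have d : dA.ev ρ = D := by rw [dA_ev, r0]
  have a0 : p0 * ga0.ev ρ = D * g0 := by
    rw [ga0_ev, r0, r1, r2, hD]
    linear_combination (x + 1) * s1 + 3 * s2 + (3 * x * z - 6 * x + 3 * z) * hw
  have a1 : p0 * ga1.ev ρ = D * g1 := by
    rw [ga1_ev, r0, r1, r2, hD]
    linear_combination -2 * s1 - (2 * x - 2) * s2 + (4 * x * x - 4 * x - 6 * z) * hw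
  have b0 : p0 * al0.ev ρ = D * (2 * g0 + p0) := by
    rw [al0_ev, d]; linear_combination 2 * a0
  have b1 : p0 * al1.ev ρ = D * (-g1 - 2 * p1) := by
    rw [al1_ev, d, r2]; linear_combination - a1 - 2 * D * hw
  have c1 : p0 ^ 2 * e1.ev ρ = D * ec g0 g1 p0 p1 0 := by
    rw [e1_ev, r2]; simp only [ec, Matrix.cons_val]
    linear_combination p0 * a1 - p0 * t * a0 - D * g0 * hw
  have c2 : p0 ^ 2 * e2.ev ρ = D * ec g0 g1 p0 p1 1 := by
    rw [e2_ev, r2]; simp only [ec, Matrix.cons_val]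
    linear_combination p0 * b1 - p0 * t * b0 - D * (2 * g0 + p0) * hw
  have c3 : p0 ^ 2 * e3.ev ρ = D ^ 2 * ec g0 g1 p0 p1 2 := by
    rw [e3_ev]; simp only [ec, Matrix.cons_val]
    linear_combination p0 * ga1.ev ρ * b0 + D * (2 * g0 + p0) * a1 - p0 * ga0.ev ρ * b1
      - D * (-g1 - 2 * p1) * a0
  have c4 : p0 ^ 2 * e4.ev ρ = D * ec g0 g1 p0 p1 3 := by
    rw [e4_ev, r2]; simp only [ec, Matrix.cons_val]
    linear_combination p0 * b1 + 2 * p0 * t * b0 + 2 * D * (2 * g0 + p0) * hw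
  have c5 : p0 ^ 2 * e5.ev ρ = D * ec g0 g1 p0 p1 4 := by
    rw [e5_ev, r2]; simp only [ec, Matrix.cons_val]
    linear_combination (p0 - 3 * p0 * t) * b1 - 3 * D * (-g1 - 2 * p1) * hw - 2 * p0 * b0
  have hX : ∀ n, p0 ^ 3 * (XX n).ev ρ = D ^ 2 * pc g0 g1 p0 p1 n := by
    intro n
    fin_cases n
    · change p0 ^ 3 * (e1.ev ρ * al1.ev ρ) = D ^ 2 * (ec g0 g1 p0 p1 0 * (-g1 - 2 * p1))
      linear_combination p0 * al1.ev ρ * c1 + D * ec g0 g1 p0 p1 0 * b1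
    · change p0 ^ 3 * (-(e1 * al0)).ev ρ = D ^ 2 * - (ec g0 g1 p0 p1 0 * (2 * g0 + p0))
      rw [ev_neg, ev_mul]
      linear_combination - p0 * al0.ev ρ * c1 - D * ec g0 g1 p0 p1 0 * b0
    · change p0 ^ 3 * (-(e2 * ga1)).ev ρ = D ^ 2 * - (ec g0 g1 p0 p1 1 * g1)
      rw [ev_neg, ev_mul]
      linear_combination - p0 * ga1.ev ρ * c2 - D * ec g0 g1 p0 p1 1 * a1
    · change p0 ^ 3 * (e2.ev ρ * ga0.ev ρ) = D ^ 2 * (ec g0 g1 p0 p1 1 * g0)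
      linear_combination p0 * ga0.ev ρ * c2 + D * ec g0 g1 p0 p1 1 * a0
  have h1 := congrArg (eval ρ) hG
  have hFX : eval ρ (FX F) = eval (fun n => (XX n).ev ρ) F := by
    rw [FX]
    have := MvPolynomial.comp_aeval_apply (f := fun n => (XX n).po) (aeval ρ : S3 →ₐ[ℂ] ℂ) F
    rw [MvPolynomial.aeval_eq_eval] at this
    change eval ρ _ = _ at this
    rw [this]
    simp only [aeval_eq_eval, eval_po]
  rw [hFX, map_mul, map_prod] at h1
  simp only [map_pow, eval_po] at h1
  have h3 : (p0 ^ 3) ^ 20 * eval (fun n => (XX n).ev ρ) F = (D ^ 2) ^ 20 * eval (pc g0 g1 p0 p1) F := by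
    rw [← eval_smul_hom hF, ← eval_smul_hom hF]
    congr 1
    congr 1
    funext n
    exact hX n
  have h4 : (p0 ^ 3) ^ 20 * ∏ i, (ee i).ev ρ ^ 6 = D ^ 36 * ∏ i, ec g0 g1 p0 p1 i ^ 6 := by
    have : (p0 ^ 3) ^ 20 * ∏ i, (ee i).ev ρ ^ 6 = (p0 ^ 2 * e1.ev ρ) ^ 6 * (p0 ^ 2 * e2.ev ρ) ^ 6 *
        (p0 ^ 2 * e3.ev ρ) ^ 6 * (p0 ^ 2 * e4.ev ρ) ^ 6 * (p0 ^ 2 * e5.ev ρ) ^ 6 := by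
      rw [Fin.prod_univ_five]
      change _ * (e1.ev ρ ^ 6 * e2.ev ρ ^ 6 * e3.ev ρ ^ 6 * e4.ev ρ ^ 6 * e5.ev ρ ^ 6) = _
      ring
    rw [this, c1, c2, c3, c4, c5, Fin.prod_univ_five]
    ring
  rw [eval_indep G h2 ![x, z, 0] ρ rfl rfl]
  apply mul_left_cancel₀ (pow_ne_zero 36 hA)
  rw [h1] at h3
  linear_combination -h3 + eval ρ G * h4

/-! second solution, used to see divisibility by `dA ^ 4` -/
def bg : E := c (-2) * x * x + c 2 * x * z + c 6 * z * z
def bp0 : E := c 4 * x * x - c 4 * x - c 6 * z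
def bp1 : E := c (-4) * x * z + c 2 * x + c 2 * z

lemma bg_ev {R : Type*} [CommRing R] (ρ : Fin 3 → R) :
    bg.ev ρ = -2 * ρ 0 * ρ 0 + 2 * ρ 0 * ρ 1 + 6 * ρ 1 * ρ 1 := by simp [bg, x, z]
lemma bp0_ev {R : Type*} [CommRing R] (ρ : Fin 3 → R) :
    bp0.ev ρ = 4 * ρ 0 * ρ 0 - 4 * ρ 0 - 6 * ρ 1 := by simp [bp0, x, z]
lemma bp1_ev {R : Type*} [CommRing R] (ρ : Fin 3 → R) :
    bp1.ev ρ = -4 * ρ 0 * ρ 1 + 2 * ρ 0 + 2 * ρ 1 := by simp [bp1, x, z]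

lemma bsol (ρ : Fin 3 → ℂ) : Sol (ρ 0) (ρ 1) (bg.ev ρ) 0 (bp0.ev ρ) (bp1.ev ρ) := by
  constructor <;> rw [bg_ev, bp0_ev, bp1_ev] <;> ring

lemma dvd_G (F : R3) (hF : F.IsHomogeneous 20) (G : S3)
    (hG : FX F = (∏ i, (ee i).po ^ 6) * G) (h2 : degreeOf 2 G = 0) :
    (X 0 - C 2) ^ 4 * (X 0 - C (-2)) ^ 4 ∣ G := by
  have key : aeval (pc bg.po 0 bp0.po bp1.po) F * (dA.po) ^ 4 =
      (∏ i, ec bg.po 0 bp0.po bp1.po i ^ 6) * G := by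
    have hne : bp0.po * dA.po ≠ 0 :=
      mul_ne_zero (po_ne_zero _ ![0, 1, 0] (by simp [bp0_ev]))
        (po_ne_zero _ ![0, 1, 0] (by simp [dA_ev]))
    apply mul_left_cancel₀ hne
    apply MvPolynomial.funext
    intro ρ
    simp only [map_mul, map_pow, map_prod, eval_po, ec_map, map_zero]
    have hFX : eval ρ (aeval (pc bg.po 0 bp0.po bp1.po) F) =
        eval (pc (bg.ev ρ) 0 (bp0.ev ρ) (bp1.ev ρ)) F := by
      have := MvPolynomial.comp_aeval_apply (f := pc bg.po 0 bp0.po bp1.po)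
        (aeval ρ : S3 →ₐ[ℂ] ℂ) F
      rw [MvPolynomial.aeval_eq_eval] at this
      change eval ρ _ = _ at this
      rw [this]
      simp only [aeval_eq_eval, pc_map, eval_po, map_zero]
    rw [hFX]
    by_cases h0 : bp0.ev ρ = 0
    · simp [h0]
    by_cases hA : dA.ev ρ = 0
    · simp [hA]
    have := sol_eval F hF G hG h2 _ _ _ _ _ _ (bsol ρ) h0 (by rwa [← dA_ev])
    rw [eval_indep G h2 ![ρ 0, ρ 1, 0] ρ rfl rfl] at this
    rw [dA_ev]
    linear_combination bp0.ev ρ * (8 - 2 * ρ 0 * ρ 0) * this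
  have hirr : ∀ a : ℂ, Irreducible (X 0 - C a : S3) := by
    intro a
    have := irreducible_mul_X_add (1 : S3) (C (-a)) 0 one_ne_zero (by simp) (by simp) isRelPrime_one_left
    simpa [sub_eq_add_neg] using this
  have hdA : dA.po = C (-2) * (X 0 - C 2) * (X 0 - C (-2)) := by
    apply MvPolynomial.funext
    intro ρ
    simp [eval_po, dA_ev]
    ring
  have hrel : ∀ a : ℂ, a = 2 ∨ a = -2 → (X 0 - C a : S3) ^ 4 ∣ G := by
    intro a ha
    have h1 : (X 0 - C a : S3) ^ 4 ∣ (∏ i, ec bg.po 0 bp0.po bp1.po i ^ 6) * G := by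
      rw [← key]
      apply Dvd.dvd.mul_left
      apply pow_dvd_pow_of_dvd
      rw [hdA]
      rcases ha with rfl | rfl
      · exact Dvd.intro_left (C (-2) * (X 0 - C (-2))) (by ring)
      · exact Dvd.intro_left _ rfl
    refine IsRelPrime.dvd_of_dvd_mul_left ?_ h1
    apply IsRelPrime.prod_right
    intro i _
    apply IsRelPrime.pow
    refine relPrime_of_pt (hirr a) ![a, 0, 0] (by simp) ?_
    rw [ec_map]
    simp only [eval_po, map_zero, bg_ev, bp0_ev, bp1_ev]
    rcases ha with rfl | rfl <;> fin_cases i <;> simp [ec] <;> norm_num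
  refine IsRelPrime.mul_dvd ?_ (hrel 2 (Or.inl rfl)) (hrel (-2) (Or.inr rfl))
  apply IsRelPrime.pow
  refine relPrime_of_pt (hirr 2) ![2, 0, 0] (by simp) ?_
  simp

lemma exists_g (F : R3) (hF : F.IsHomogeneous 20)
    (h : ∀ i : Fin 5, Van 6 (exC i.castSucc 0) (exC i.castSucc 1) F) :
    ∃ g : S3, degreeOf 0 g ≤ 4 ∧ degreeOf 1 g ≤ 4 ∧ degreeOf 2 g = 0 ∧
      ∀ x z g0 g1 p0 p1 : ℂ, Sol x z g0 g1 p0 p1 → p0 ≠ 0 → 8 - 2 * x * x ≠ 0 →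
        eval (pc g0 g1 p0 p1) F * 16 = (∏ i, ec g0 g1 p0 p1 i ^ 6) * eval ![x, z, 0] g := by
  obtain ⟨G, hG, d0, d1, d2⟩ := exists_G F hF h
  obtain ⟨g, hg⟩ := dvd_G F hF G hG d2
  refine ⟨g, ?_, ?_, ?_, ?_⟩
  rotate_left 3
  · intro x z g0 g1 p0 p1 hs hp hA
    have := sol_eval F hF G hG d2 _ _ _ _ _ _ hs hp hA
    apply mul_left_cancel₀ (pow_ne_zero 4 hA)
    rw [hg] at this
    simp only [map_mul, map_pow, map_sub, eval_X, eval_C, Matrix.cons_val_zero] at this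
    linear_combination 16 * this
  all_goals
    by_cases h0 : g = 0
    · simp [h0]
  all_goals
    have hq : (X 0 - C 2 : S3) ^ 4 * (X 0 - C (-2)) ^ 4 ≠ 0 := by
      intro h
      have := congrArg (eval (fun _ => (0 : ℂ))) h
      simp at this
    have k : ∀ i, degreeOf i G = degreeOf i ((X 0 - C 2 : S3) ^ 4 * (X 0 - C (-2)) ^ 4) + degreeOf i g := by
      intro i
      rw [hg, degreeOf_mul_eq hq h0]
  · have l : 8 ≤ degreeOf 0 ((X 0 - C 2 : S3) ^ 4 * (X 0 - C (-2)) ^ 4) := by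
      have hl : ∀ a : ℂ, 1 ≤ degreeOf 0 (X 0 - C a : S3) := by
        intro a
        have : degreeOf 0 (X 0 : S3) ≤ max (degreeOf 0 (X 0 - C a : S3)) (degreeOf 0 (C a : S3)) := by
          have := degreeOf_add_le (0 : Fin 3) (X 0 - C a : S3) (C a)
          rwa [sub_add_cancel] at this
        rw [degreeOf_X_self, degreeOf_C] at this
        simpa using this
      rw [degreeOf_mul_eq (left_ne_zero_of_mul hq) (right_ne_zero_of_mul hq),
        degreeOf_pow_eq _ _ _ (pow_ne_zero_iff (by norm_num) |>.mp (left_ne_zero_of_mul hq)),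
        degreeOf_pow_eq _ _ _ (pow_ne_zero_iff (by norm_num) |>.mp (right_ne_zero_of_mul hq))]
      have := hl 2
      have := hl (-2)
      omega
    have := k 0
    omega
  · have := k 1
    omega
  · have := k 2
    omega

end E
end Part2


namespace Part2

section cramer
variable {R : Type*} [CommRing R] (p : Fin 4 → R)

def S0 : R := p 0 + p 2
def S1 : R := p 1 + p 3
def cA : R := (-2 * p 3) * (-2 * S0 p) - (-p 2) * (-S1 p)
def cB : R := (-S1 p) * (-p 0) - (-2 * S0 p) * p 1
def cC : R := p 1 * (-p 2) - (-p 0) * (-2 * p 3)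
def dA : R := (-(2 * p 3 + 3 * p 2)) * (-2 * S1 p) - (-(2 * p 3 - p 2)) * (-S1 p - 3 * S0 p)
def dB : R := (-S1 p - 3 * S0 p) * (-p 0) - (-2 * S1 p) * p 1
def dC : R := p 1 * (-(2 * p 3 - p 2)) - (-p 0) * (-(2 * p 3 + 3 * p 2))
def dPR : R := p 0 * p 3 - p 1 * p 2
def T1 : R := S0 p * p 3 - S1 p * p 2
def T2 : R := S0 p * p 1 - S1 p * p 0
def T4 : R := -S1 p * p 0 - 2 * S0 p * p 1
def T5 : R := -(S1 p + 3 * S0 p) * p 0 - 2 * S1 p * p 1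

def good : R := cA p * cB p * cC p * dB p * dPR p * S1 p * T1 p * T2 p * T4 p * T5 p *
  ((dA p * cB p) ^ 2 - 4 * (cA p * dB p) ^ 2)

def rowv (n : Fin 25) : R :=
  (dA p * cB p) ^ (n.val / 5) * (cA p * dB p) ^ (4 - n.val / 5) *
    ((dC p * cB p) ^ (n.val % 5) * (cC p * dB p) ^ (4 - n.val % 5))

lemma good_map {S : Type*} [CommRing S] (f : R →+* S) :
    f (good p) = good (fun n => f (p n)) := by
  have h2 : f 2 = 2 := map_ofNat f 2
  have h3 : f 3 = 3 := map_ofNat f 3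
  have h4 : f 4 = 4 := map_ofNat f 4
  simp only [good, S0, S1, cA, cB, cC, dA, dB, dC, dPR, T1, T2, T4, T5, map_mul, map_sub, map_add,
    map_neg, map_pow, h2, h3, h4]

lemma rowv_map {S : Type*} [CommRing S] (f : R →+* S) (n : Fin 25) :
    f (rowv p n) = rowv (fun n => f (p n)) n := by
  have h2 : f 2 = 2 := map_ofNat f 2
  have h3 : f 3 = 3 := map_ofNat f 3
  simp only [rowv, S0, S1, cA, cB, cC, dA, dB, dC, map_mul, map_sub, map_add,
    map_neg, map_pow, h2, h3]

lemma ec_cr (i : Fin 5) :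
    ec (cB p * p 3) (-(cB p * p 2)) (cC p * S1 p) (-(cC p * S0 p)) i =
      ![cC p * cB p * T1 p, cC p * cA p * T2 p, cA p * cB p * dPR p, cC p * cA p * T4 p,
        cC p * cA p * T5 p] i := by
  fin_cases i <;> simp [ec, S0, S1, cA, cB, cC, dPR, T1, T2, T4, T5] <;> ring

lemma pc_cr (i : Fin 4) :
    pc (cB p * p 3) (-(cB p * p 2)) (cC p * S1 p) (-(cC p * S0 p)) i =
      (-(cA p * cB p * cC p * dPR p)) * p i := by
  fin_cases i <;> simp [pc, ec, S0, S1, cA, cB, cC, dPR] <;> ring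

lemma sol_cr {x z : R} (hx : dB p * (x * cA p) = dA p * cB p) (hz : dB p * (z * cC p) = dC p * cB p)
    (h0 : ∀ t : R, dB p * t = 0 → t = 0) :
    Sol x z (cB p * p 3) (-(cB p * p 2)) (cC p * S1 p) (-(cC p * S0 p)) := by
  constructor
  · rw [← sub_eq_zero]
    apply h0
    have e1 : 2 * (cB p * p 3) + cC p * S1 p = cA p * p 1 := by
      simp only [S0, S1, cA, cB, cC]; ring
    have e2 : cB p * (dA p * p 1 - dC p * (S1 p + 3 * S0 p) - dB p * (2 * p 3 + 3 * p 2)) = 0 := by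
      simp only [S0, S1, cB, dA, dB, dC]; ring
    linear_combination dB p * x * e1 + p 1 * hx - (S1 p + 3 * S0 p) * hz + e2
  · rw [← sub_eq_zero]
    apply h0
    have e1 : cB p * p 2 + 2 * (cC p * S0 p) = - (cA p * p 0) := by
      simp only [S0, S1, cA, cB, cC]; ring
    have e2 : cB p * (-(dA p * p 0) - dC p * (2 * S1 p) - dB p * (2 * p 3 - p 2)) = 0 := by
      simp only [S0, S1, cB, dA, dB, dC]; ring
    linear_combination dB p * x * e1 - p 0 * hx - (2 * S1 p) * hz + e2

end cramer

/-- exponent vector -/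
def expo (n : Fin 25) : Fin 3 →₀ ℕ := Finsupp.equivFunOnFinite.symm ![n.val / 5, n.val % 5, 0]

lemma expo_inj : Function.Injective expo := by
  intro m n h
  have h' := Finsupp.equivFunOnFinite.symm.injective h
  have h0 := congrFun h' 0
  have h1 := congrFun h' 1
  simp at h0 h1
  ext
  omega

lemma eval_expand (g : MvPolynomial (Fin 3) ℂ) (d0 : degreeOf 0 g ≤ 4) (d1 : degreeOf 1 g ≤ 4)
    (d2 : degreeOf 2 g = 0) (x z : ℂ) :
    eval ![x, z, 0] g = ∑ n : Fin 25, coeff (expo n) g * (x ^ (n.val / 5) * z ^ (n.val % 5)) := by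
  classical
  have hsub : g.support ⊆ Finset.univ.image expo := by
    intro d hd
    have k0 := (monomial_le_degreeOf 0 hd).trans d0
    have k1 := (monomial_le_degreeOf 1 hd).trans d1
    have k2 := (monomial_le_degreeOf 2 hd).trans d2.le
    rw [Finset.mem_image]
    refine ⟨⟨5 * d 0 + d 1, by omega⟩, Finset.mem_univ _, ?_⟩
    ext i
    fin_cases i
    · simp [expo]; omega
    · simp [expo]; omega
    · simp [expo]; omega
  rw [eval_eq', Finset.sum_subset hsub (fun d _ hd => by simp [notMem_support_iff.mp hd]),
    Finset.sum_image (fun a _ b _ h => expo_inj h)]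
  refine Finset.sum_congr rfl fun n _ => ?_
  simp [expo, Fin.prod_univ_three]

/-- parameters of the 24 points on the sixth line -/
def stT : List (ℤ × ℤ) :=
  [(-1, 1), (0, 1), (1, 0), (-1, 2), (1, 2), (-3, 1), (-3, 2), (-2, 3), (-1, 3), (1, 3), (2, 3), (3, 1), (3, 2), (-4, 1), (-4, 3), (-3, 4), (-1, 4), (1, 4), (3, 4), (4, 1), (4, 3), (-5, 1), (-5, 2), (-5, 3)]
/-- the interpolation matrix modulo 31 -/
def MTl : List (List ℤ) :=
  [
    [8, 2, 16, 4, 1, 29, 15, 27, 30, 23, 16, 4, 1, 8, 2, 27, 30, 23, 29, 15, 1, 8, 2, 16, 4],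
    [2, 28, 20, 1, 14, 0, 0, 0, 0, 0, 0, 0, 0, 0, 0, 0, 0, 0, 0, 0, 0, 0, 0, 0, 0],
    [28, 21, 8, 6, 20, 4, 3, 10, 23, 25, 5, 27, 28, 21, 8, 14, 26, 4, 3, 10, 2, 17, 5, 27, 28],
    [2, 26, 28, 23, 20, 19, 30, 18, 17, 4, 10, 6, 16, 22, 7, 2, 26, 28, 23, 20, 19, 30, 18, 17, 4],
    [25, 0, 0, 0, 0, 27, 0, 0, 0, 0, 18, 0, 0, 0, 0, 12, 0, 0, 0, 0, 8, 0, 0, 0, 0],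
    [2, 3, 20, 30, 14, 18, 27, 25, 22, 2, 7, 26, 8, 12, 18, 1, 17, 10, 15, 7, 9, 29, 28, 11, 1],
    [2, 1, 16, 8, 4, 8, 4, 2, 1, 16, 1, 16, 8, 4, 2, 4, 2, 1, 16, 8, 16, 8, 4, 2, 1],
    [0, 0, 0, 0, 7, 0, 0, 0, 0, 11, 0, 0, 0, 0, 4, 0, 0, 0, 0, 24, 0, 0, 0, 0, 20],
    [10, 29, 19, 21, 2, 12, 10, 29, 19, 21, 2, 12, 10, 29, 19, 21, 2, 12, 10, 29, 19, 21, 2, 12, 10],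
    [2, 11, 14, 15, 5, 14, 15, 5, 12, 4, 5, 12, 4, 22, 28, 4, 22, 28, 30, 10, 28, 30, 10, 24, 8],
    [19, 11, 8, 3, 5, 15, 25, 21, 4, 17, 20, 23, 28, 26, 2, 6, 10, 27, 14, 13, 8, 3, 5, 29, 7],
    [0, 0, 0, 0, 25, 0, 0, 0, 0, 7, 0, 0, 0, 0, 28, 0, 0, 0, 0, 19, 0, 0, 0, 0, 14],
    [7, 15, 10, 17, 1, 21, 14, 30, 20, 3, 1, 11, 28, 29, 9, 3, 2, 22, 25, 27, 9, 6, 4, 13, 19],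
    [19, 21, 2, 12, 10, 10, 29, 19, 21, 2, 2, 12, 10, 29, 19, 19, 21, 2, 12, 10, 10, 29, 19, 21, 2],
    [1, 29, 4, 23, 16, 2, 27, 8, 15, 1, 4, 23, 16, 30, 2, 8, 15, 1, 29, 4, 16, 30, 2, 27, 8],
    [2, 7, 9, 16, 25, 1, 19, 20, 8, 28, 16, 25, 10, 4, 14, 8, 28, 5, 2, 7, 4, 14, 18, 1, 19],
    [25, 13, 8, 24, 10, 17, 20, 29, 25, 13, 19, 26, 16, 17, 20, 3, 9, 27, 19, 26, 7, 21, 1, 3, 9],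
    [9, 20, 10, 5, 18, 10, 5, 18, 9, 20, 18, 9, 20, 10, 5, 20, 10, 5, 18, 9, 5, 18, 9, 20, 10],
    [19, 7, 14, 28, 25, 8, 16, 1, 2, 4, 5, 10, 20, 9, 18, 7, 14, 28, 25, 19, 16, 1, 2, 4, 8],
    [8, 3, 5, 29, 7, 0, 0, 0, 0, 0, 0, 0, 0, 0, 0, 0, 0, 0, 0, 0, 0, 0, 0, 0, 0],
    [28, 20, 1, 14, 10, 4, 25, 9, 2, 28, 5, 8, 19, 18, 4, 14, 10, 16, 7, 5, 2, 28, 20, 1, 14],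
    [16, 13, 28, 15, 18, 1, 26, 25, 30, 5, 2, 21, 19, 29, 10, 4, 11, 7, 27, 20, 8, 22, 14, 23, 9],
    [1, 18, 14, 4, 10, 19, 1, 18, 14, 4, 20, 19, 1, 18, 14, 8, 20, 19, 1, 18, 28, 8, 20, 19, 1],
    [1, 13, 14, 27, 10, 18, 17, 4, 21, 25, 14, 27, 10, 6, 16, 4, 21, 25, 15, 9, 10, 6, 16, 22, 7],
    [4, 4, 4, 4, 4, 6, 6, 6, 6, 6, 9, 9, 9, 9, 9, 29, 29, 29, 29, 29, 28, 28, 28, 28, 28]]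
/-- its inverse modulo 31 -/
def KTl : List (List ℤ) :=
  [
    [0, 0, 7, 17, 8, 6, 29, 28, 13, 21, 23, 25, 20, 23, 27, 5, 11, 4, 13, 21, 9, 5, 1, 21, 28],
    [0, 19, 28, 30, 21, 13, 17, 6, 1, 3, 30, 9, 0, 24, 20, 22, 12, 18, 26, 2, 8, 10, 23, 14, 16],
    [4, 3, 28, 12, 26, 17, 6, 5, 2, 7, 11, 18, 16, 6, 20, 20, 22, 6, 27, 29, 4, 25, 18, 2, 4],
    [23, 16, 14, 28, 2, 0, 13, 11, 28, 13, 22, 13, 24, 15, 22, 26, 27, 13, 23, 4, 13, 13, 2, 18, 0],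
    [17, 12, 26, 7, 17, 2, 21, 27, 9, 0, 8, 16, 8, 21, 19, 9, 23, 27, 10, 0, 27, 29, 21, 18, 7],
    [0, 24, 16, 25, 27, 5, 13, 7, 26, 0, 21, 30, 21, 7, 9, 30, 30, 6, 22, 24, 0, 9, 6, 11, 1],
    [20, 13, 20, 10, 13, 24, 7, 22, 11, 7, 6, 26, 28, 23, 2, 4, 5, 29, 9, 12, 23, 2, 15, 11, 13],
    [14, 10, 26, 22, 11, 14, 7, 7, 8, 23, 21, 19, 19, 0, 14, 19, 2, 20, 19, 22, 24, 27, 6, 21, 27],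
    [25, 11, 10, 7, 6, 11, 14, 0, 4, 28, 18, 3, 5, 19, 5, 27, 0, 9, 24, 9, 7, 9, 17, 18, 26],
    [11, 0, 23, 16, 30, 3, 18, 18, 28, 8, 7, 0, 6, 25, 2, 15, 8, 30, 8, 5, 27, 4, 30, 15, 0],
    [30, 26, 13, 11, 10, 4, 21, 26, 4, 13, 17, 21, 15, 21, 24, 26, 2, 3, 13, 7, 25, 9, 26, 13, 19],
    [19, 1, 5, 22, 10, 5, 18, 20, 11, 19, 8, 24, 14, 9, 12, 20, 13, 5, 6, 16, 30, 29, 10, 16, 30],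
    [18, 0, 14, 30, 26, 14, 30, 4, 9, 24, 3, 2, 23, 16, 4, 8, 2, 30, 27, 25, 15, 29, 7, 2, 7],
    [6, 24, 23, 3, 23, 14, 29, 29, 14, 2, 9, 19, 3, 12, 16, 23, 26, 30, 21, 28, 6, 21, 19, 30, 14],
    [2, 23, 10, 1, 5, 19, 16, 8, 10, 10, 30, 30, 26, 9, 28, 27, 8, 21, 13, 3, 12, 2, 14, 26, 30],
    [30, 11, 3, 7, 16, 16, 4, 27, 27, 29, 16, 1, 2, 14, 22, 3, 13, 27, 16, 20, 12, 11, 11, 20, 16],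
    [1, 18, 8, 10, 19, 20, 24, 15, 29, 2, 14, 6, 18, 5, 12, 3, 18, 1, 14, 0, 9, 22, 14, 1, 11],
    [26, 7, 13, 16, 16, 18, 28, 9, 0, 9, 5, 30, 4, 1, 18, 1, 18, 1, 3, 4, 21, 4, 10, 28, 19],
    [27, 21, 27, 9, 24, 20, 13, 16, 9, 7, 9, 3, 16, 9, 23, 14, 7, 20, 8, 16, 17, 21, 21, 8, 23],
    [0, 13, 23, 10, 21, 6, 4, 25, 8, 12, 4, 1, 3, 23, 15, 5, 15, 0, 30, 25, 19, 22, 11, 23, 25],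
    [27, 30, 26, 21, 8, 5, 6, 3, 12, 5, 12, 16, 12, 30, 23, 10, 7, 13, 14, 13, 10, 18, 14, 24, 9],
    [20, 7, 4, 12, 5, 11, 26, 4, 25, 3, 18, 11, 27, 21, 12, 28, 2, 29, 10, 14, 18, 23, 23, 2, 11],
    [21, 15, 6, 21, 17, 23, 1, 2, 25, 0, 28, 19, 5, 12, 0, 22, 27, 22, 12, 10, 9, 28, 25, 8, 21],
    [0, 8, 28, 30, 21, 0, 30, 11, 20, 23, 19, 12, 3, 2, 29, 5, 12, 25, 29, 0, 8, 6, 13, 10, 30],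
    [0, 19, 6, 6, 18, 13, 29, 8, 21, 4, 12, 12, 13, 27, 26, 2, 16, 21, 0, 24, 28, 12, 2, 10, 22]]
def MT (i j : Fin 25) : ℤ := (MTl.getD i []).getD j 0
def KT (i j : Fin 25) : ℤ := (KTl.getD i []).getD j 0

/-- the 25 interpolation points -/
def pts (i : Fin 25) (n : Fin 4) : ℤ :=
  if i.val = 0 then Part1.oZ n
  else (stT.getD (i.val - 1) (0, 0)).1 * Part1.exZ 5 0 n +
    (stT.getD (i.val - 1) (0, 0)).2 * Part1.exZ 5 1 n

set_option maxRecDepth 100000 in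
lemma MK : ∀ i j : Fin 25, (∑ k, MT i k * KT k j) % 31 = if i = j then 1 else 0 := by
  decide +kernel

set_option maxRecDepth 100000 in
lemma MT_row : ∀ i j : Fin 25, rowv (pts i) j % 31 = MT i j % 31 := by
  decide +kernel

lemma pts_good : ∀ i : Fin 25, good (pts i) ≠ 0 := by
  decide +kernel

lemma cf_zero (v : Fin 25 → ℂ)
    (h : ∀ i, ∑ n, v n * rowv (fun k => ((pts i k : ℤ) : ℂ)) n = 0) : v = 0 := by
  let Mz : Matrix (Fin 25) (Fin 25) ℤ := Matrix.of fun i j => rowv (pts i) j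
  have hd : Mz.det ≠ 0 := by
    intro h0
    have h1 : (Mz.map (Int.castRingHom (ZMod 31))) *
        (Matrix.of fun i j => ((KT i j : ℤ) : ZMod 31)) = 1 := by
      ext i j
      rw [Matrix.mul_apply]
      have e : ∀ k, (Mz.map (Int.castRingHom (ZMod 31))) i k = ((MT i k : ℤ) : ZMod 31) := by
        intro k
        change ((rowv (pts i) k : ℤ) : ZMod 31) = _
        exact (ZMod.intCast_eq_intCast_iff' _ _ _).mpr (MT_row i k)
      simp only [e, Matrix.of_apply]
      have := (ZMod.intCast_eq_intCast_iff' (∑ k, MT i k * KT k j) (if i = j then 1 else 0) 31).mpr (by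
        have := MK i j
        push_cast
        rw [this]
        split_ifs <;> rfl)
      push_cast at this
      rw [this, Matrix.one_apply]
    have h2 := congrArg Matrix.det h1
    rw [Matrix.det_mul, Matrix.det_one] at h2
    have h3 : (Mz.map (Int.castRingHom (ZMod 31))).det = 0 := by
      have := (RingHom.map_det (Int.castRingHom (ZMod 31)) Mz)
      rw [h0, map_zero] at this
      exact this.symm
    rw [h3, zero_mul] at h2
    exact absurd h2 (by decide)
  have hd' : (Mz.map (Int.castRingHom ℂ)).det ≠ 0 := by
    have := (RingHom.map_det (Int.castRingHom ℂ) Mz)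
    change _ = (Mz.map (Int.castRingHom ℂ)).det at this
    rw [← this]
    simpa using hd
  apply Matrix.eq_zero_of_mulVec_eq_zero hd'
  funext i
  rw [Matrix.mulVec, dotProduct, Pi.zero_apply, ← h i]
  refine Finset.sum_congr rfl fun n _ => ?_
  rw [mul_comm]
  congr 1
  exact rowv_map (pts i) (Int.castRingHom ℂ) n

theorem uniq (F : R3) (hF : F.IsHomogeneous 20)
    (h : ∀ i : Fin 5, Van 6 (E.exC i.castSucc 0) (E.exC i.castSucc 1) F)
    (h6 : Van 1 (E.exC 5 0) (E.exC 5 1) F)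
    (ho : eval (fun k => ((Part1.oZ k : ℤ) : ℂ)) F = 0) : F = 0 := by
  obtain ⟨g, d0, d1, d2, hg⟩ := E.exists_g F hF h
  have key : ∀ p : C4, good p ≠ 0 → (eval p F = 0 ↔ ∑ n, coeff (expo n) g * rowv p n = 0) := by
    intro p hp
    have hp' := hp
    simp only [good, mul_ne_zero_iff] at hp
    obtain ⟨⟨⟨⟨⟨⟨⟨⟨⟨⟨n1, n2⟩, n3⟩, n4⟩, n5⟩, n6⟩, n7⟩, n8⟩, n9⟩, n10⟩, n11⟩ := hp
    set x := dA p * cB p / (cA p * dB p) with hx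
    set z := dC p * cB p / (cC p * dB p) with hz
    have hs := sol_cr p (x := x) (z := z) (by rw [hx]; field_simp) (by rw [hz]; field_simp)
      (fun t ht => (mul_eq_zero.mp ht).resolve_left n4)
    have hA : 8 - 2 * x * x ≠ 0 := by
      intro h0
      apply n11
      have hx' : x * (cA p * dB p) = dA p * cB p := by rw [hx]; field_simp
      rw [← hx']
      linear_combination -(cA p * dB p) ^ 2 / 2 * h0
    have hm := hg x z _ _ _ _ hs (mul_ne_zero n3 n6) hA
    rw [funext (pc_cr p), eval_smul_hom hF, eval_expand g d0 d1 d2] at hm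
    have he : (∏ i, ec (cB p * p 3) (-(cB p * p 2)) (cC p * S1 p) (-(cC p * S0 p)) i ^ 6) ≠ 0 := by
      rw [Finset.prod_ne_zero_iff]
      intro i _
      rw [ec_cr]
      apply pow_ne_zero
      fin_cases i <;> simp [*]
    have hr : ∑ n, coeff (expo n) g * rowv p n = ((cA p * dB p) ^ 4 * (cC p * dB p) ^ 4) *
        ∑ n : Fin 25, coeff (expo n) g * (x ^ (n.val / 5) * z ^ (n.val % 5)) := by
      rw [Finset.mul_sum]
      refine Finset.sum_congr rfl fun n _ => ?_
      have k1 : n.val / 5 ≤ 4 := by omega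
      have k2 : n.val % 5 ≤ 4 := by omega
      have q1 : (cA p * dB p) ^ 4 * x ^ (n.val / 5) =
          (dA p * cB p) ^ (n.val / 5) * (cA p * dB p) ^ (4 - n.val / 5) := by
        conv_lhs => rw [← Nat.sub_add_cancel k1, pow_add, hx, div_pow]
        have := pow_ne_zero (n.val / 5) (mul_ne_zero n1 n4)
        field_simp
      have q2 : (cC p * dB p) ^ 4 * z ^ (n.val % 5) =
          (dC p * cB p) ^ (n.val % 5) * (cC p * dB p) ^ (4 - n.val % 5) := by
        conv_lhs => rw [← Nat.sub_add_cancel k2, pow_add, hz, div_pow]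
        have := pow_ne_zero (n.val % 5) (mul_ne_zero n3 n4)
        field_simp
      rw [rowv, ← q1, ← q2]
      ring
    rw [hr]
    have hk : (-(cA p * cB p * cC p * dPR p)) ^ 20 ≠ 0 :=
      pow_ne_zero _ (neg_ne_zero.mpr (mul_ne_zero (mul_ne_zero (mul_ne_zero n1 n2) n3) n5))
    have hl : (cA p * dB p) ^ 4 * (cC p * dB p) ^ 4 ≠ 0 :=
      mul_ne_zero (pow_ne_zero _ (mul_ne_zero n1 n4)) (pow_ne_zero _ (mul_ne_zero n3 n4))
    constructor
    · intro h0
      rw [h0, mul_zero, zero_mul] at hm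
      rw [(mul_eq_zero.mp hm.symm).resolve_left he, mul_zero]
    · intro h0
      rw [(mul_eq_zero.mp h0).resolve_left hl, mul_zero] at hm
      have := (mul_eq_zero.mp hm).resolve_right (by norm_num)
      exact (mul_eq_zero.mp this).resolve_left hk
  have hgood : ∀ i, good (fun k => ((pts i k : ℤ) : ℂ)) ≠ 0 := by
    intro i
    have := good_map (pts i) (Int.castRingHom ℂ)
    change _ = good (fun k => ((pts i k : ℤ) : ℂ)) at this
    rw [← this]
    simpa using pts_good i
  have hcf : (fun n => coeff (expo n) g) = 0 := by
    apply cf_zero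
    intro i
    rw [← key _ (hgood i)]
    by_cases hi : i.val = 0
    · have : (fun k => ((pts i k : ℤ) : ℂ)) = (fun k => ((Part1.oZ k : ℤ) : ℂ)) := by
        funext k; simp [pts, hi]
      rw [this, ho]
    · have h7 := h6 ((stT.getD (i.val - 1) (0, 0)).1 : ℂ) ((stT.getD (i.val - 1) (0, 0)).2 : ℂ) 0 0
        one_pos
      have h8 : (fun k => ((pts i k : ℤ) : ℂ)) = fun n => ((stT.getD (i.val - 1) (0, 0)).1 : ℂ) *
          E.exC 5 0 n + ((stT.getD (i.val - 1) (0, 0)).2 : ℂ) * E.exC 5 1 n := by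
        funext k
        simp only [pts, hi, if_false, E.exC]
        push_cast
        rfl
      rw [h8, ← h7, phi, Polynomial.coeff_zero_eq_eval_zero]
      have h9 := MvPolynomial.comp_aeval_apply (f := fun n => Polynomial.C
        (((stT.getD (i.val - 1) (0, 0)).1 : ℂ) * E.exC 5 0 n +
          ((stT.getD (i.val - 1) (0, 0)).2 : ℂ) * E.exC 5 1 n) +
          Polynomial.C ((0 : C4) n) * Polynomial.X) (Polynomial.aeval (0 : ℂ)) F
      rw [Polynomial.coe_aeval_eq_eval] at h9
      rw [h9, aeval_eq_eval]
      simp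
  have hall : ∀ p, good p ≠ 0 → eval p F = 0 := by
    intro p hp
    rw [key p hp]
    apply Finset.sum_eq_zero
    intro n _
    rw [show coeff (expo n) g = 0 from congrFun hcf n, zero_mul]
  have hz : F * good (fun n => (X n : R3)) = 0 := by
    apply MvPolynomial.funext
    intro p
    rw [map_mul, map_zero, good_map]
    simp only [eval_X]
    by_cases h0 : good p = 0
    · rw [h0, mul_zero]
    · rw [hall p h0, zero_mul]
  refine (mul_eq_zero.mp hz).resolve_right ?_
  intro h0
  have := congrArg (eval (fun k => ((pts 0 k : ℤ) : ℂ))) h0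
  rw [good_map, map_zero] at this
  simp only [eval_X] at this
  exact hgood 0 this

end Part2

namespace Part3

/-- Abstract semicontinuity: injectivity of a polynomial family of functionals is an open condition. -/
theorem semicont {V σ κ : Type} [AddCommGroup V] [Module ℂ V] [FiniteDimensional ℂ V]
    (ψ : κ → V →ₗ[ℂ] MvPolynomial σ ℂ) (x0 : σ → ℂ)
    (h0 : ∀ F : V, (∀ k, eval x0 (ψ k F) = 0) → F = 0) :
    ∃ P : MvPolynomial σ ℂ, eval x0 P ≠ 0 ∧
      ∀ x, eval x P ≠ 0 → ∀ F : V, (∀ k, eval x (ψ k F) = 0) → F = 0 := by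
  classical
  let f : κ → Module.Dual ℂ V := fun k => (aeval x0 : MvPolynomial σ ℂ →ₐ[ℂ] ℂ).toLinearMap ∘ₗ ψ k
  have hf : ∀ k F, f k F = eval x0 (ψ k F) := fun k F => by
    simp [f, aeval_eq_eval]
  obtain ⟨κ', a, -, hspan, hli⟩ := exists_linearIndependent' ℂ f
  have htop : Submodule.span ℂ (Set.range f) = ⊤ := by
    have hco : (Submodule.span ℂ (Set.range f)).dualCoannihilator = ⊥ := by
      rw [eq_bot_iff]
      intro F hF
      rw [Submodule.mem_dualCoannihilator] at hF
      refine (Submodule.mem_bot ℂ).2 (h0 F fun k => ?_)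
      rw [← hf]
      exact hF _ (Submodule.subset_span ⟨k, rfl⟩)
    have := Subspace.dualCoannihilator_dualAnnihilator_eq (W := Submodule.span ℂ (Set.range f))
    rw [hco, Submodule.dualAnnihilator_bot] at this
    exact this.symm
  have B : Module.Basis κ' ℂ (Module.Dual ℂ V) := Module.Basis.mk hli (by rw [hspan, htop])
  have : Fintype κ' := FiniteDimensional.fintypeBasisIndex B
  have hcard : Fintype.card κ' = Module.finrank ℂ V := by
    rw [← Module.finrank_eq_card_basis B, Subspace.dual_finrank_eq]
  let b : Module.Basis κ' ℂ V := (Module.finBasis ℂ V).reindex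
    (Fintype.equivOfCardEq (by simp [hcard]))
  let M : Matrix κ' κ' (MvPolynomial σ ℂ) := fun i j => ψ (a i) (b j)
  have key : ∀ (x : σ → ℂ) (F : V) (i : κ'),
      eval x (ψ (a i) F) = ((eval x).mapMatrix M).mulVec (b.repr F) i := by
    intro x F i
    conv_lhs => rw [← b.sum_repr F]
    rw [map_sum, map_sum]
    refine Finset.sum_congr rfl fun j _ => ?_
    rw [map_smul, smul_eval, mul_comm]
    rfl
  refine ⟨M.det, ?_, ?_⟩
  · intro hdet
    rw [RingHom.map_det] at hdet
    obtain ⟨w, hw, hMw⟩ := Matrix.exists_mulVec_eq_zero_iff.2 hdet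
    apply hw
    let F : V := b.equivFun.symm w
    have hrep : (b.repr F : κ' → ℂ) = w := by
      have := b.equivFun.apply_symm_apply w
      rwa [Module.Basis.equivFun_apply] at this
    have h1 : ∀ i, f (a i) F = 0 := by
      intro i
      rw [hf, key, hrep, hMw]; rfl
    have h2 : F = 0 := by
      apply h0
      intro k
      rw [← hf]
      have hk : f k ∈ Submodule.span ℂ (Set.range (f ∘ a)) := by rw [hspan, htop]; trivial
      have : Submodule.span ℂ (Set.range (f ∘ a)) ≤ LinearMap.ker (Module.Dual.eval ℂ V F) := by
        rw [Submodule.span_le]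
        rintro _ ⟨i, rfl⟩
        simpa using h1 i
      simpa using this hk
    rw [← hrep, h2]; simp
  · intro x hx F hF
    rw [RingHom.map_det] at hx
    by_contra hne
    apply hx
    apply Matrix.exists_mulVec_eq_zero_iff.1
    refine ⟨b.repr F, ?_, ?_⟩
    · intro h
      apply hne
      apply b.repr.injective
      ext i
      simpa using congrFun h i
    · funext i
      rw [← key, hF]; rfl

/-- easy direction: membership in the power gives vanishing of all Taylor coefficients -/
theorem phi_zero (a b : C4) (s t : ℂ) (u : C4) (m j : ℕ) (hj : j < m) (F : R3)
    (hF : F ∈ lineIdeal (Submodule.span ℂ {a, b}) ^ m) : Part2.phi a b s t u j F = 0 := by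
  let g : R3 →ₐ[ℂ] Polynomial ℂ :=
    aeval (fun n => Polynomial.C (s * a n + t * b n) + Polynomial.C (u n) * Polynomial.X)
  have h1 : (lineIdeal (Submodule.span ℂ {a, b})).map g.toRingHom ≤ Ideal.span {Polynomial.X} := by
    rw [Ideal.map_le_iff_le_comap]
    intro G hG
    rw [Ideal.mem_comap, Ideal.mem_span_singleton, Polynomial.X_dvd_iff]
    have hv : s • a + t • b ∈ Submodule.span ℂ {a, b} :=
      Submodule.mem_span_pair.2 ⟨s, t, rfl⟩
    have h2 := hG _ hv
    rw [← h2]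
    have : ((Polynomial.aeval (0:ℂ)).comp g : R3 →ₐ[ℂ] ℂ) = aeval (s • a + t • b) := by
      ext n; simp [g]
    have h3 := DFunLike.congr_fun this G
    rw [aeval_eq_eval] at h3
    simpa [Polynomial.coeff_zero_eq_aeval_zero] using h3
  have h4 : g F ∈ Ideal.span {(Polynomial.X : Polynomial ℂ)} ^ m := by
    apply Ideal.pow_right_mono h1 m
    rw [← Ideal.map_pow]
    exact Ideal.mem_map_of_mem g.toRingHom hF
  rw [Ideal.span_singleton_pow, Ideal.mem_span_singleton, Polynomial.X_pow_dvd_iff] at h4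
  exact h4 j hj

/-- index type of coordinates -/
abbrev Idx := Fin 6 × Fin 2 × Fin 4

/-- generic Taylor coefficient functional -/
def gphi (i : Fin 6) (s t : ℂ) (u : C4) (j : ℕ) : R3 →ₗ[ℂ] MvPolynomial Idx ℂ :=
  ((Polynomial.lcoeff (MvPolynomial Idx ℂ) j).restrictScalars ℂ) ∘ₗ
    (aeval (fun n => Polynomial.C (C s * X (i, 0, n) + C t * X (i, 1, n))
      + Polynomial.C (C (u n)) * Polynomial.X) : R3 →ₐ[ℂ] Polynomial (MvPolynomial Idx ℂ)).toLinearMap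

theorem eval_gphi (v : Fin 6 → Fin 2 → C4) (i s t u j) (F : R3) :
    eval (fun p : Idx => v p.1 p.2.1 p.2.2) (gphi i s t u j F)
      = Part2.phi (v i 0) (v i 1) s t u j F := by
  have : ((Polynomial.mapAlgHom (aeval (fun p : Idx => v p.1 p.2.1 p.2.2))).comp
      (aeval (fun n => Polynomial.C (C s * X (i, 0, n) + C t * X (i, 1, n))
      + Polynomial.C (C (u n)) * Polynomial.X) : R3 →ₐ[ℂ] Polynomial (MvPolynomial Idx ℂ))
      : R3 →ₐ[ℂ] Polynomial ℂ) =
      aeval (fun n => Polynomial.C (s * v i 0 n + t * v i 1 n)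
        + Polynomial.C (u n) * Polynomial.X) := by
    ext n : 1
    simp
  have h := DFunLike.congr_fun this F
  unfold Part2.phi gphi
  rw [← h]
  simp [Polynomial.coeff_map]

/-- the multiplicity vector -/
abbrev mm : Fin 6 → ℕ := ![6, 6, 6, 6, 6, 1]

instance : FiniteDimensional ℂ (homogeneousSubmodule (Fin 4) ℂ 20) := by
  have : homogeneousSubmodule (Fin 4) ℂ 20 ≤ restrictTotalDegree (Fin 4) ℂ 20 := by
    intro F hF
    rw [mem_restrictTotalDegree]
    exact IsHomogeneous.totalDegree_le hF
  exact Submodule.finiteDimensional_of_le this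

/-- the reference point -/
def oC : C4 := fun k => ((Part1.oZ k : ℤ) : ℂ)

theorem exists_P4 : ∃ P : MvPolynomial Idx ℂ,
    eval (fun p : Idx => Part2.E.exC p.1 p.2.1 p.2.2) P ≠ 0 ∧
    ∀ v : Fin 6 → Fin 2 → C4, eval (fun p : Idx => v p.1 p.2.1 p.2.2) P ≠ 0 →
      ∀ F ∈ linSys 20 (fun i => Submodule.span ℂ {v i 0, v i 1}) ![6, 6, 6, 6, 6, 1],
        eval oC F = 0 → F = 0 := by
  let ψ : Option {k : Fin 6 × ℂ × ℂ × C4 × ℕ // k.2.2.2.2 < mm k.1} →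
      homogeneousSubmodule (Fin 4) ℂ 20 →ₗ[ℂ] MvPolynomial Idx ℂ := fun o => match o with
    | none => (Algebra.linearMap ℂ (MvPolynomial Idx ℂ)) ∘ₗ
        (aeval oC : R3 →ₐ[ℂ] ℂ).toLinearMap ∘ₗ Submodule.subtype _
    | some k => gphi k.1.1 k.1.2.1 k.1.2.2.1 k.1.2.2.2.1 k.1.2.2.2.2 ∘ₗ Submodule.subtype _
  obtain ⟨P, hP, hP'⟩ := semicont ψ (fun p : Idx => Part2.E.exC p.1 p.2.1 p.2.2) (by
    rintro ⟨F, hF⟩ h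
    have hk : ∀ (i : Fin 6) s t u j, j < mm i →
        Part2.phi (Part2.E.exC i 0) (Part2.E.exC i 1) s t u j F = 0 := by
      intro i s t u j hj
      have := h (some ⟨(i, s, t, u, j), hj⟩)
      rw [← eval_gphi]
      exact this
    have hn : eval oC F = 0 := by
      have := h none
      simpa [ψ, aeval_eq_eval, algebraMap_eq] using this
    have : F = 0 := by
      refine Part2.uniq F hF ?_ ?_ hn
      · intro i s t u j hj
        apply hk
        fin_cases i <;> exact hj
      · intro s t u j hj
        exact hk 5 s t u j hj
    exact Subtype.ext this)
  refine ⟨P, hP, fun v hv F hF ho => ?_⟩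
  obtain ⟨hF1, hF2⟩ := Submodule.mem_inf.1 hF
  rw [Submodule.mem_iInf] at hF2
  have := hP' _ hv ⟨F, hF1⟩ (by
    rintro (_ | ⟨⟨i, s, t, u, j⟩, hj⟩)
    · simp [ψ, aeval_eq_eval, algebraMap_eq, ho]
    · refine (eval_gphi v i s t u j F).trans ?_
      exact phi_zero _ _ _ _ _ _ _ hj _ (hF2 i))
  exact congrArg Subtype.val this

end Part3

namespace Part4
open Part3

/-- coordinates of the six generic lines -/
def gen : Fin 6 → Fin 2 → Fin 4 → MvPolynomial Idx ℂ := fun i k n => X (i, k, n)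

/-- the constant reference point -/
def genO : Fin 4 → MvPolynomial Idx ℂ := fun n => C (oC n)

/-- evaluation at the lines v -/
def ev (v : Fin 6 → Fin 2 → C4) : MvPolynomial Idx ℂ →+* ℂ :=
  eval (fun p : Idx => v p.1 p.2.1 p.2.2)

theorem ev_gen (v i k n) : ev v (gen i k n) = v i k n := by simp [ev, gen]
theorem ev_O (v n) : ev v (genO n) = oC n := by simp [ev, genO]

theorem ev_det4 (v : Fin 6 → Fin 2 → C4) (i j : Fin 6) :
    ev v (Part1.det4 (gen i 0) (gen i 1) (gen j 0) (gen j 1))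
      = Part1.det4 (v i 0) (v i 1) (v j 0) (v j 1) := by
  rw [← Part1.det4_map]; simp only [ev_gen]

theorem ev_qq (v : Fin 6 → Fin 2 → C4) (i : Fin 3) :
    ev v (Part1.qq gen (gen 5 0) i) = Part1.qq v (v 5 0) i := by
  rw [← Part1.qq_map]; simp only [ev_gen]

theorem ev_Fm (v : Fin 6 → Fin 2 → C4) :
    ev v (Part1.Fm gen genO).det = (Part1.Fm v oC).det := by
  rw [← Part1.det_Fm_map]; simp only [ev_gen, ev_O]

theorem ex_det4 (i j : Fin 6) (h : i < j) :
    Part1.det4 (Part2.E.exC i 0) (Part2.E.exC i 1) (Part2.E.exC j 0) (Part2.E.exC j 1) ≠ 0 := by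
  have := Part1.det4_map (Int.castRingHom ℂ) (Part1.exZ i 0) (Part1.exZ i 1) (Part1.exZ j 0) (Part1.exZ j 1)
  have h2 : Int.castRingHom ℂ (Part1.det4 (Part1.exZ i 0) (Part1.exZ i 1) (Part1.exZ j 0) (Part1.exZ j 1)) ≠ 0 := by
    simpa using Part1.exZ_disj i j h
  rw [← this] at h2
  exact h2

theorem ex_qq (i : Fin 3) : Part1.qq Part2.E.exC (Part2.E.exC 5 0) i ≠ 0 := by
  have := Part1.qq_map (Int.castRingHom ℂ) Part1.exZ (Part1.exZ 5 0) i
  have h2 : Int.castRingHom ℂ (Part1.qq Part1.exZ (Part1.exZ 5 0) i) ≠ 0 := by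
    simpa using Part1.exZ_qq i
  rw [← this] at h2
  exact h2

theorem ex_Fm : (Part1.Fm Part2.E.exC oC).det ≠ 0 := by
  have := Part1.det_Fm_map (Int.castRingHom ℂ) Part1.exZ Part1.oZ
  have h2 : Int.castRingHom ℂ (Part1.Fm Part1.exZ Part1.oZ).det ≠ 0 := by
    simpa using Part1.exZ_det
  rw [← this] at h2
  exact h2

theorem li_four {a b c d : C4} (h : Part1.det4 a b c d ≠ 0) :
    LinearIndependent ℂ ![a, b, c, d] := by
  have := Part1.det_eq_det4 (Matrix.of ![a, b, c, d])
  exact Matrix.linearIndependent_rows_of_det_ne_zero (A := Matrix.of ![a, b, c, d])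
    (by rw [this]; exact h)

theorem li_two {a b c d : C4} (h : Part1.det4 a b c d ≠ 0) : LinearIndependent ℂ ![a, b] := by
  rw [LinearIndependent.pair_iff]
  intro s t hst
  have h4 := Fintype.linearIndependent_iff.1 (li_four h) ![s, t, 0, 0]
    (by simp [Fin.sum_univ_succ, hst])
  exact ⟨h4 0, h4 1⟩

theorem li_two' {a b c d : C4} (h : Part1.det4 a b c d ≠ 0) : LinearIndependent ℂ ![c, d] := by
  rw [LinearIndependent.pair_iff]
  intro s t hst
  have h4 := Fintype.linearIndependent_iff.1 (li_four h) ![0, 0, s, t]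
    (by simp [Fin.sum_univ_succ, hst])
  exact ⟨h4 2, h4 3⟩

theorem disj {a b c d : C4} (h : Part1.det4 a b c d ≠ 0) :
    Submodule.span ℂ {a, b} ⊓ Submodule.span ℂ {c, d} = ⊥ := by
  rw [eq_bot_iff]
  rintro x ⟨h1, h2⟩
  obtain ⟨s, t, rfl⟩ := Submodule.mem_span_pair.1 h1
  obtain ⟨s', t', h3⟩ := Submodule.mem_span_pair.1 h2
  have h4 := Fintype.linearIndependent_iff.1 (li_four h) ![s, t, -s', -t'] (by
    simp only [Fin.sum_univ_four]
    show s • a + t • b + (-s') • c + (-t') • d = 0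
    rw [← h3]; module)
  have hs : s = 0 := h4 0
  have ht : t = 0 := h4 1
  simp [hs, ht]

end Part4


/-- The system `𝓛_{20}(6,6,6,6,6,1)` for six general lines has dimension
exactly 1, yet `binom(23,3) = 1771 < 1876 = 5·371 + 21`, so it has negative
virtual dimension and is special (unexpected). -/
theorem stmt_9 :
    GeneralLines 6 (fun L =>
      Module.finrank ℂ ↥(linSys 20 L ![6, 6, 6, 6, 6, 1]) = 1) ∧
    Nat.choose 23 3 < 5 * 371 + 21 := by
  refine ⟨?_, by decide⟩
  obtain ⟨P4, hP4, hP4'⟩ := Part3.exists_P4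
  let S : Finset (Fin 6 × Fin 6) := Finset.univ.filter fun p => p.1 < p.2
  let PD : MvPolynomial Part3.Idx ℂ := ∏ p ∈ S,
    Part1.det4 (Part4.gen p.1 0) (Part4.gen p.1 1) (Part4.gen p.2 0) (Part4.gen p.2 1)
  let PQ : MvPolynomial Part3.Idx ℂ := ∏ i, Part1.qq Part4.gen (Part4.gen 5 0) i
  have hev : ∀ v : Fin 6 → Fin 2 → C4,
      Part4.ev v (PD * PQ * (Part1.Fm Part4.gen Part4.genO).det * P4) =
      (∏ p ∈ S, Part1.det4 (v p.1 0) (v p.1 1) (v p.2 0) (v p.2 1)) *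
      (∏ i, Part1.qq v (v 5 0) i) * (Part1.Fm v Part3.oC).det * Part4.ev v P4 := by
    intro v
    simp only [PD, PQ, map_mul, map_prod, Part4.ev_det4, Part4.ev_qq, Part4.ev_Fm]
  refine ⟨PD * PQ * (Part1.Fm Part4.gen Part4.genO).det * P4, ?_, ?_⟩
  · intro h0
    have h1 := hev Part2.E.exC
    rw [h0, map_zero] at h1
    refine mul_ne_zero (mul_ne_zero (mul_ne_zero ?_ ?_) Part4.ex_Fm) hP4 h1.symm
    · refine Finset.prod_ne_zero_iff.2 fun p hp => Part4.ex_det4 _ _ ?_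
      exact (Finset.mem_filter.1 hp).2
    · exact Finset.prod_ne_zero_iff.2 fun i _ => Part4.ex_qq i
  · intro v hv
    change Part4.ev v _ ≠ 0 at hv
    rw [hev] at hv
    obtain ⟨hv, h4⟩ := mul_ne_zero_iff.1 hv
    obtain ⟨hv, h3⟩ := mul_ne_zero_iff.1 hv
    obtain ⟨h1, h2⟩ := mul_ne_zero_iff.1 hv
    have hd : ∀ i j : Fin 6, i < j → Part1.det4 (v i 0) (v i 1) (v j 0) (v j 1) ≠ 0 :=
      fun i j hij => Finset.prod_ne_zero_iff.1 h1 (i, j) (Finset.mem_filter.2 ⟨Finset.mem_univ _, hij⟩)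
    have hq : ∀ i, Part1.qq v (v 5 0) i ≠ 0 :=
      fun i => Finset.prod_ne_zero_iff.1 h2 i (Finset.mem_univ _)
    refine ⟨fun i => ?_, fun i j hij => ?_, ?_⟩
    · by_cases hi : i < 5
      · exact Part4.li_two (hd i 5 hi)
      · exact Part4.li_two' (hd 0 i (by omega))
    · rcases lt_or_gt_of_ne hij with h | h
      · exact Part4.disj (hd i j h)
      · rw [inf_comm]; exact Part4.disj (hd j i h)
    · have hmem : Part1.F0 v ∈ linSys 20 (fun i => Submodule.span ℂ {v i 0, v i 1})
          ![6, 6, 6, 6, 6, 1] := by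
        refine Submodule.mem_inf.2 ⟨Part1.F0_hom v, ?_⟩
        rw [Submodule.mem_iInf]
        intro i
        rw [Submodule.restrictScalars_mem]
        by_cases hi : i = 5
        · subst hi
          have h6 := Part1.F0_mem_six v hq
          change _ ∈ _ ^ 1
          rwa [pow_one]
        · have h6 := Part1.F0_mem v i hi
          fin_cases i
          · exact h6
          · exact h6
          · exact h6
          · exact h6
          · exact h6
          · exact absurd rfl hi
      have ho : eval Part3.oC (Part1.F0 v) ≠ 0 := by rwa [Part1.eval_F0]
      refine finrank_eq_one_iff'.2 ⟨⟨Part1.F0 v, hmem⟩, ?_, ?_⟩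
      · intro h
        have h' : Part1.F0 v = 0 := congrArg Subtype.val h
        rw [h', map_zero] at ho
        exact ho rfl
      · rintro ⟨F, hF⟩
        refine ⟨eval Part3.oC F / eval Part3.oC (Part1.F0 v), Subtype.ext ?_⟩
        have hz := hP4' v h4
          ((eval Part3.oC F / eval Part3.oC (Part1.F0 v)) • Part1.F0 v - F)
          (Submodule.sub_mem _ (Submodule.smul_mem _ _ hmem) hF)
          (by rw [map_sub, smul_eval, div_mul_cancel₀ _ ho, sub_self])
        exact sub_eq_zero.1 hz
end
end

section
/- Let L_1,…,L_6 ⊆ ℂ^4 be 2-dimensional linear subspaces (lines in P^3) which are pairwise disjoint. Then there exists a nonzero homogeneous polynomial F of degree 12 in ℂ[x_0,x_1,x_2,x_3] with F ∈ I(L_1)^4 and F ∈ I(L_i)^3 for i = 2,…,6; that is, for every configuration of six pairwise skew lines there is a surface of degree 12 vanishing to order 4 along the first line and to order 3 along the remaining five. -/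
open MvPolynomial

noncomputable section

namespace SixLines

/-! ### Cancellation modulo powers of an ideal, via the Rees algebra -/

section Cancel

variable {K : Type*} [CommRing K]

/-- The homotopy `X i ↦ π i + τ (X i - π i)`. -/
def homot (π : Fin 4 → MvPolynomial (Fin 4) K) :
    MvPolynomial (Fin 4) K →+* Polynomial (MvPolynomial (Fin 4) K) :=
  eval₂Hom (Polynomial.C.comp C)
    (fun i => Polynomial.C (π i) + Polynomial.X * Polynomial.C (X i - π i))

lemma homot_C (π : Fin 4 → MvPolynomial (Fin 4) K) (r : K) :
    homot π (C r) = Polynomial.C (C r) := by simp [homot]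

lemma homot_X (π : Fin 4 → MvPolynomial (Fin 4) K) (i : Fin 4) :
    homot π (X i) = Polynomial.C (π i) + Polynomial.X * Polynomial.C (X i - π i) := by
  simp [homot]

lemma homot_eval_one (π : Fin 4 → MvPolynomial (Fin 4) K) (p : MvPolynomial (Fin 4) K) :
    Polynomial.eval 1 (homot π p) = p := by
  have : (Polynomial.evalRingHom (1 : MvPolynomial (Fin 4) K)).comp (homot π)
      = RingHom.id _ := by
    apply MvPolynomial.ringHom_ext
    · intro r; simp [homot_C]
    · intro i; simp [homot_X]
  simpa using congrArg (fun f => f p) this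

lemma homot_mem_rees (π : Fin 4 → MvPolynomial (Fin 4) K) (J : Ideal (MvPolynomial (Fin 4) K))
    (h : ∀ i, X i - π i ∈ J) (p : MvPolynomial (Fin 4) K) :
    homot π p ∈ reesAlgebra J := by
  induction p using MvPolynomial.induction_on with
  | C r => rw [homot_C]; exact (reesAlgebra J).algebraMap_mem (C r)
  | add p q hp hq => rw [map_add]; exact add_mem hp hq
  | mul_X p i hp =>
    rw [map_mul, homot_X]
    refine mul_mem hp (add_mem ((reesAlgebra J).algebraMap_mem (π i)) ?_)
    have := (reesAlgebra.monomial_mem (I := J) (i := 1) (r := X i - π i)).2 (by simpa using h i)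
    rw [mul_comm]
    simpa [← Polynomial.C_mul_X_eq_monomial] using this

lemma cancel_pow [IsDomain K] (π : Fin 4 → MvPolynomial (Fin 4) K)
    (J : Ideal (MvPolynomial (Fin 4) K))
    (h : ∀ i, X i - π i ∈ J) (hJ : ∀ g ∈ J, Polynomial.X ∣ homot π g)
    (c : MvPolynomial (Fin 4) K) (hc : homot π c = Polynomial.C c) (hc0 : c ≠ 0)
    (m : ℕ) (p : MvPolynomial (Fin 4) K) (hp : c * p ∈ J ^ m) : p ∈ J ^ m := by
  have h1 : ∀ g ∈ J ^ m, Polynomial.X ^ m ∣ homot π g := by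
    intro g hg
    have : J ^ m ≤ (Ideal.span {(Polynomial.X : Polynomial (MvPolynomial (Fin 4) K)) ^ m}).comap
        (homot π) := by
      rw [← Ideal.span_singleton_pow]
      refine le_trans (Ideal.pow_right_mono (I := J) (J := (Ideal.span {Polynomial.X}).comap
        (homot π)) ?_ m) (Ideal.le_comap_pow _ _)
      intro g hg
      rw [Ideal.mem_comap, Ideal.mem_span_singleton]
      exact hJ g hg
    have := this hg
    rwa [Ideal.mem_comap, Ideal.mem_span_singleton] at this
  have h2 := h1 _ hp
  rw [map_mul, hc, Polynomial.X_pow_dvd_iff] at h2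
  have h3 : ∀ d < m, (homot π p).coeff d = 0 := by
    intro d hd
    have := h2 d hd
    rw [Polynomial.coeff_C_mul] at this
    exact (mul_eq_zero.1 this).resolve_left hc0
  rw [← homot_eval_one π p, Polynomial.eval_eq_sum_range]
  refine Ideal.sum_mem _ fun i _ => ?_
  rw [one_pow, mul_one]
  by_cases hi : i < m
  · rw [h3 i hi]; exact zero_mem _
  · exact Ideal.pow_le_pow_right (not_lt.1 hi) ((mem_reesAlgebra_iff J _).1 (homot_mem_rees π J h p) i)

/-- The ideal of the line `u = 0`. -/
def J0 (K : Type*) [CommRing K] : Ideal (MvPolynomial (Fin 4) K) := Ideal.span {X 0, X 1}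

/-- The ideal of the line `v = A u`. -/
def JA (a : Fin 4 → K) : Ideal (MvPolynomial (Fin 4) K) :=
  Ideal.span {X 2 - (C (a 0) * X 0 + C (a 1) * X 1), X 3 - (C (a 2) * X 0 + C (a 3) * X 1)}

lemma cancel_J0 [IsDomain K] (c : MvPolynomial (Fin 4) K)
    (hc : homot ![0, 0, X 2, X 3] c = Polynomial.C c) (hc0 : c ≠ 0)
    (m : ℕ) (p : MvPolynomial (Fin 4) K) (hp : c * p ∈ J0 K ^ m) : p ∈ J0 K ^ m := by
  refine cancel_pow ![0, 0, X 2, X 3] (J0 K) ?_ ?_ c hc hc0 m p hp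
  · intro i
    fin_cases i
    · simpa [J0] using Ideal.subset_span (by simp)
    · simpa [J0] using Ideal.subset_span (by simp)
    · simp
    · simp
  · intro g hg
    have : J0 K ≤ (Ideal.span {(Polynomial.X : Polynomial (MvPolynomial (Fin 4) K))}).comap
        (homot ![0, 0, X 2, X 3]) := by
      refine Ideal.span_le.2 ?_
      rintro x (rfl | rfl)
      · simp [homot_X, Ideal.mem_span_singleton]
      · simp [homot_X, Ideal.mem_span_singleton]
    have := this hg
    rwa [Ideal.mem_comap, Ideal.mem_span_singleton] at this

lemma cancel_JA [IsDomain K] (a : Fin 4 → K) (r : K) (hr : r ≠ 0)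
    (m : ℕ) (p : MvPolynomial (Fin 4) K) (hp : C r * p ∈ JA a ^ m) : p ∈ JA a ^ m := by
  refine cancel_pow ![X 0, X 1, C (a 0) * X 0 + C (a 1) * X 1, C (a 2) * X 0 + C (a 3) * X 1]
    (JA a) ?_ ?_ (C r) (homot_C _ _) (by simpa using hr) m p hp
  · intro i
    fin_cases i
    · simp
    · simp
    · exact Ideal.subset_span (by simp)
    · exact Ideal.subset_span (by simp)
  · intro g hg
    have : JA a ≤ (Ideal.span {(Polynomial.X : Polynomial (MvPolynomial (Fin 4) K))}).comap
        (homot ![X 0, X 1, C (a 0) * X 0 + C (a 1) * X 1, C (a 2) * X 0 + C (a 3) * X 1]) := by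
      refine Ideal.span_le.2 ?_
      rintro x (rfl | rfl)
      · simp [homot_X, homot_C, Ideal.mem_span_singleton]
      · simp [homot_X, homot_C, Ideal.mem_span_singleton]
    have := this hg
    rwa [Ideal.mem_comap, Ideal.mem_span_singleton] at this

end Cancel

/-! ### The forms -/

section Forms

variable {S : Type*} [CommRing S]

/-- The quadric containing `u = 0`, `v = A u`, `v = B u`. -/
def q1 (a b : Fin 4 → S) (x : Fin 4 → S) : S :=
  (x 2 - (a 0 * x 0 + a 1 * x 1)) * ((b 2 - a 2) * x 0 + (b 3 - a 3) * x 1)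
    - (x 3 - (a 2 * x 0 + a 3 * x 1)) * ((b 0 - a 0) * x 0 + (b 1 - a 1) * x 1)

/-- The quadric containing `v = 0`, `v = A u`, `v = B u`. -/
def q2 (a b : Fin 4 → S) (x : Fin 4 → S) : S :=
  (a 3 * (x 2 - (a 0 * x 0 + a 1 * x 1)) - a 1 * (x 3 - (a 2 * x 0 + a 3 * x 1)))
    * (b 0 * (x 3 - (b 2 * x 0 + b 3 * x 1)) - b 2 * (x 2 - (b 0 * x 0 + b 1 * x 1)))
  - (a 0 * (x 3 - (a 2 * x 0 + a 3 * x 1)) - a 2 * (x 2 - (a 0 * x 0 + a 1 * x 1)))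
    * (b 3 * (x 2 - (b 0 * x 0 + b 1 * x 1)) - b 1 * (x 3 - (b 2 * x 0 + b 3 * x 1)))

def p1 : Fin 5 → Fin 4 := ![0, 0, 0, 1, 1]
def p2 : Fin 5 → Fin 4 := ![1, 2, 3, 2, 3]
def p3 : Fin 5 → Fin 4 := ![2, 1, 1, 0, 0]
def p4 : Fin 5 → Fin 4 := ![3, 3, 2, 3, 2]

/-- Five quartics containing the six lines. -/
def phi (A : Fin 4 → Fin 4 → S) (k : Fin 5) (x : Fin 4 → S) : S :=
  q1 (A (p1 k)) (A (p2 k)) x * q2 (A (p3 k)) (A (p4 k)) x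

/-- coefficients of the linear form `v ∧ (B - A) e` -/
def lc (a b : Fin 4 → S) (e : Fin 2) : Fin 2 → S :=
  ![![b 2 - a 2, -(b 0 - a 0)], ![b 3 - a 3, -(b 1 - a 1)]] e

/-- coefficients of `q2` restricted to `u = 0` -/
def qc (a b : Fin 4 → S) : Fin 3 → S :=
  ![a 3 * (-b 2) - (-a 2) * b 3, a 3 * b 0 + (-a 1) * (-b 2) - (-a 2) * (-b 1) - a 0 * b 3,
    (-a 1) * b 0 - a 0 * (-b 1)]

/-- coefficients of the product of a linear and a quadratic form -/
def cub (l : Fin 2 → S) (q : Fin 3 → S) : ℕ → S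
  | 0 => l 0 * q 0
  | 1 => l 0 * q 1 + l 1 * q 0
  | 2 => l 0 * q 2 + l 1 * q 1
  | 3 => l 1 * q 2
  | _ => 0

def cc (A : Fin 4 → Fin 4 → S) (e : Fin 2) (k : Fin 5) : ℕ → S :=
  cub (lc (A (p1 k)) (A (p2 k)) e) (qc (A (p3 k)) (A (p4 k)))

/-- The `12 × 15` matrix of the conditions. -/
def MM (A : Fin 4 → Fin 4 → S) : Matrix (Fin 2 × Fin 6) (Fin 5 × Fin 3) S :=
  fun i j => if j.2.val ≤ i.2.val then cc A i.1 j.1 (i.2.val - j.2.val) else 0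

def GG (A : Fin 4 → Fin 4 → S) (c : Fin 5 × Fin 3 → S) (x : Fin 4 → S) (l : Fin 3) : S :=
  ∑ k : Fin 5, c (k, l) * phi A k x

def FF (A : Fin 4 → Fin 4 → S) (c : Fin 3 → Fin 5 × Fin 3 → S) (x : Fin 4 → S) : S :=
  Matrix.det (Matrix.of fun j l => GG A (c j) x l)

section Nat

variable {S' : Type*} [CommRing S'] (f : S →+* S')

lemma q1_map (a b x : Fin 4 → S) : f (q1 a b x) = q1 (f ∘ a) (f ∘ b) (f ∘ x) := by
  simp [q1]

lemma q2_map (a b x : Fin 4 → S) : f (q2 a b x) = q2 (f ∘ a) (f ∘ b) (f ∘ x) := by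
  simp [q2]

lemma phi_map (A : Fin 4 → Fin 4 → S) (k : Fin 5) (x : Fin 4 → S) :
    f (phi A k x) = phi (fun i => f ∘ A i) k (f ∘ x) := by
  simp [phi, q1_map, q2_map]

lemma GG_map (A : Fin 4 → Fin 4 → S) (c : Fin 5 × Fin 3 → S) (x : Fin 4 → S) (l : Fin 3) :
    f (GG A c x l) = GG (fun i => f ∘ A i) (f ∘ c) (f ∘ x) l := by
  simp [GG, phi_map]

lemma FF_map (A : Fin 4 → Fin 4 → S) (c : Fin 3 → Fin 5 × Fin 3 → S) (x : Fin 4 → S) :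
    f (FF A c x) = FF (fun i => f ∘ A i) (fun j => f ∘ c j) (f ∘ x) := by
  rw [FF, RingHom.map_det, FF]
  congr 1
  ext j l
  simp [GG_map]

lemma lc_map (a b : Fin 4 → S) (e i : Fin 2) : f (lc a b e i) = lc (f ∘ a) (f ∘ b) e i := by
  fin_cases e <;> fin_cases i <;> simp [lc]

lemma qc_map (a b : Fin 4 → S) (i : Fin 3) : f (qc a b i) = qc (f ∘ a) (f ∘ b) i := by
  fin_cases i <;> simp [qc]

lemma cub_map (l : Fin 2 → S) (q : Fin 3 → S) (n : ℕ) :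
    f (cub l q n) = cub (fun i => f (l i)) (fun i => f (q i)) n := by
  rcases n with _ | _ | _ | _ | n <;> simp [cub]

lemma MM_map (A : Fin 4 → Fin 4 → S) : (MM A).map f = MM (fun i => f ∘ A i) := by
  ext i j
  simp only [Matrix.map_apply, MM, cc]
  split_ifs
  · rw [cub_map]; simp only [lc_map, qc_map]
  · simp

end Nat

lemma shift_sum (A : Fin 4 → Fin 4 → S) (e : Fin 2) (k : Fin 5) (l : Fin 3) (a b : S) :
    ∑ m : Fin 6, MM A (e, m) (k, l) * (a ^ (5 - m.val) * b ^ m.val)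
      = a ^ (2 - l.val) * b ^ l.val *
        (∑ i : Fin 4, cc A e k i.val * (a ^ (3 - i.val) * b ^ i.val)) := by
  fin_cases l <;> simp [MM, Fin.sum_univ_succ, cc, cub] <;> ring

/-- The linear part of `phi` along `u = 0`. -/
def linp (A : Fin 4 → Fin 4 → S) (k : Fin 5) (x : Fin 4 → S) : S :=
  ∑ e : Fin 2, x (Fin.castLE (by norm_num) e) *
    (∑ i : Fin 4, cc A e k i.val * (x 2 ^ (3 - i.val) * x 3 ^ i.val))

lemma phi_sub_linp (A : Fin 4 → Fin 4 → S) (k : Fin 5) (x : Fin 4 → S) :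
    phi A k x - linp A k x ∈ (Ideal.span {x 0, x 1}) ^ 2 := by
  set J : Ideal S := Ideal.span {x 0, x 1} with hJ
  have h0 : x 0 ∈ J := Ideal.subset_span (by simp)
  have h1 : x 1 ∈ J := Ideal.subset_span (by simp)
  have key : ∀ a b c d : Fin 4 → S, q1 a b x * q2 c d x -
      (∑ e : Fin 2, x (Fin.castLE (by norm_num) e) *
      (∑ i : Fin 4, cub (lc a b e) (qc c d) i.val * (x 2 ^ (3 - i.val) * x 3 ^ i.val))) ∈ J ^ 2 := by
    intro a b c d
    have hl : ∀ p q : S, p * x 0 + q * x 1 ∈ J := fun p q =>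
      add_mem (J.mul_mem_left _ h0) (J.mul_mem_left _ h1)
    have e1 : q1 a b x * q2 c d x -
      (∑ e : Fin 2, x (Fin.castLE (by norm_num) e) *
      (∑ i : Fin 4, cub (lc a b e) (qc c d) i.val * (x 2 ^ (3 - i.val) * x 3 ^ i.val)))
      = (((a 2 * x 0 + a 3 * x 1) * ((b 0 - a 0) * x 0 + (b 1 - a 1) * x 1)
        - (a 0 * x 0 + a 1 * x 1) * ((b 2 - a 2) * x 0 + (b 3 - a 3) * x 1))) * q2 c d x
       + ((x 2 * (b 2 - a 2) - x 3 * (b 0 - a 0)) * x 0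
          + (x 2 * (b 3 - a 3) - x 3 * (b 1 - a 1)) * x 1) *
        ((-((c 0 * c 3 - c 1 * c 2) * (d 0 * x 3 - d 2 * x 2))
            + (d 0 * d 3 - d 1 * d 2) * (c 0 * x 3 - c 2 * x 2)) * x 0
          + ((c 0 * c 3 - c 1 * c 2) * (d 3 * x 2 - d 1 * x 3)
            - (d 0 * d 3 - d 1 * d 2) * (c 3 * x 2 - c 1 * x 3)) * x 1) := by
      simp [Fin.sum_univ_succ, lc, qc, cub, q1, q2]
      ring
    rw [e1, pow_two]
    refine add_mem (Ideal.mul_mem_right _ _ (sub_mem ?_ ?_)) ?_ <;>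
      exact Ideal.mul_mem_mul (hl _ _) (hl _ _)
  exact key _ _ _ _

lemma GG_sum_mem (A : Fin 4 → Fin 4 → S) (c : Fin 5 × Fin 3 → S) (x : Fin 4 → S)
    (hc : (MM A).mulVec c = 0) :
    ∑ l : Fin 3, x 2 ^ (2 - l.val) * x 3 ^ l.val * GG A c x l ∈ (Ideal.span {x 0, x 1}) ^ 2 := by
  have hz : ∑ l : Fin 3, x 2 ^ (2 - l.val) * x 3 ^ l.val * (∑ k, c (k, l) * linp A k x) = 0 := by
    have : ∀ e : Fin 2, ∑ k : Fin 5, ∑ l : Fin 3, c (k, l) * (x 2 ^ (2 - l.val) * x 3 ^ l.val *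
        (∑ i : Fin 4, cc A e k i.val * (x 2 ^ (3 - i.val) * x 3 ^ i.val))) = 0 := by
      intro e
      simp_rw [← shift_sum]
      have h2 : ∀ m : Fin 6, ∑ k : Fin 5, ∑ l : Fin 3, MM A (e, m) (k, l) * c (k, l) = 0 := by
        intro m
        have := congrFun hc (e, m)
        simpa [Matrix.mulVec, dotProduct, Fintype.sum_prod_type] using this
      calc _ = ∑ m : Fin 6, (x 2 ^ (5 - m.val) * x 3 ^ m.val) *
            ∑ k : Fin 5, ∑ l : Fin 3, MM A (e, m) (k, l) * c (k, l) := by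
              simp_rw [Finset.mul_sum]
              conv_rhs => rw [Finset.sum_comm]
              refine Finset.sum_congr rfl fun k _ => ?_
              conv_rhs => rw [Finset.sum_comm]
              refine Finset.sum_congr rfl fun l _ => ?_
              refine Finset.sum_congr rfl fun m _ => ?_
              ring
        _ = 0 := by simp [h2]
    have h3 : ∑ l : Fin 3, x 2 ^ (2 - l.val) * x 3 ^ l.val * (∑ k, c (k, l) * linp A k x)
        = ∑ e : Fin 2, x (Fin.castLE (by norm_num) e) *
          ∑ k : Fin 5, ∑ l : Fin 3, c (k, l) * (x 2 ^ (2 - l.val) * x 3 ^ l.val *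
        (∑ i : Fin 4, cc A e k i.val * (x 2 ^ (3 - i.val) * x 3 ^ i.val))) := by
      rw [Fin.sum_univ_two]
      simp_rw [Finset.mul_sum (s := (Finset.univ : Finset (Fin 5)))]
      rw [Finset.sum_comm, ← Finset.sum_add_distrib]
      refine Finset.sum_congr rfl fun k _ => ?_
      rw [Finset.mul_sum, Finset.mul_sum, ← Finset.sum_add_distrib]
      refine Finset.sum_congr rfl fun l _ => ?_
      simp only [linp, Fin.sum_univ_two]
      ring
    rw [h3]
    simp [this]
  have e : ∑ l : Fin 3, x 2 ^ (2 - l.val) * x 3 ^ l.val * GG A c x l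
      = ∑ l : Fin 3, x 2 ^ (2 - l.val) * x 3 ^ l.val *
        (∑ k, c (k, l) * (phi A k x - linp A k x)) := by
    rw [← sub_zero (∑ l : Fin 3, _ * GG A c x l), ← hz, ← Finset.sum_sub_distrib]
    refine Finset.sum_congr rfl fun l _ => ?_
    rw [← mul_sub, GG, ← Finset.sum_sub_distrib]
    simp_rw [mul_sub]
  rw [e]
  exact Ideal.sum_mem _ fun l _ => Ideal.mul_mem_left _ _ <|
    Ideal.sum_mem _ fun k _ => Ideal.mul_mem_left _ _ (phi_sub_linp A k x)

lemma q1_mem_left (a b x : Fin 4 → S) :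
    q1 a b x ∈ Ideal.span {x 2 - (a 0 * x 0 + a 1 * x 1), x 3 - (a 2 * x 0 + a 3 * x 1)} := by
  rw [Ideal.mem_span_pair]
  exact ⟨((b 2 - a 2) * x 0 + (b 3 - a 3) * x 1), -((b 0 - a 0) * x 0 + (b 1 - a 1) * x 1), by
    simp only [q1]; ring⟩

lemma q1_mem_right (a b x : Fin 4 → S) :
    q1 a b x ∈ Ideal.span {x 2 - (b 0 * x 0 + b 1 * x 1), x 3 - (b 2 * x 0 + b 3 * x 1)} := by
  rw [Ideal.mem_span_pair]
  exact ⟨((b 2 - a 2) * x 0 + (b 3 - a 3) * x 1), -((b 0 - a 0) * x 0 + (b 1 - a 1) * x 1), by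
    simp only [q1]; ring⟩

lemma q1_mem_inf (a b x : Fin 4 → S) : q1 a b x ∈ Ideal.span {x 0, x 1} := by
  rw [Ideal.mem_span_pair]
  exact ⟨(x 2 - (a 0 * x 0 + a 1 * x 1)) * (b 2 - a 2)
      - (x 3 - (a 2 * x 0 + a 3 * x 1)) * (b 0 - a 0),
    (x 2 - (a 0 * x 0 + a 1 * x 1)) * (b 3 - a 3)
      - (x 3 - (a 2 * x 0 + a 3 * x 1)) * (b 1 - a 1), by
    simp only [q1]; ring⟩

lemma q2_mem_left (a b x : Fin 4 → S) :
    q2 a b x ∈ Ideal.span {x 2 - (a 0 * x 0 + a 1 * x 1), x 3 - (a 2 * x 0 + a 3 * x 1)} := by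
  rw [Ideal.mem_span_pair]
  refine ⟨a 3 * (b 0 * (x 3 - (b 2 * x 0 + b 3 * x 1)) - b 2 * (x 2 - (b 0 * x 0 + b 1 * x 1)))
    + a 2 * (b 3 * (x 2 - (b 0 * x 0 + b 1 * x 1)) - b 1 * (x 3 - (b 2 * x 0 + b 3 * x 1))),
    - a 1 * (b 0 * (x 3 - (b 2 * x 0 + b 3 * x 1)) - b 2 * (x 2 - (b 0 * x 0 + b 1 * x 1)))
    - a 0 * (b 3 * (x 2 - (b 0 * x 0 + b 1 * x 1)) - b 1 * (x 3 - (b 2 * x 0 + b 3 * x 1))), ?_⟩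
  simp only [q2]; ring

lemma q2_swap (a b x : Fin 4 → S) : q2 a b x = - q2 b a x := by
  simp only [q2]; ring

lemma q2_mem_right (a b x : Fin 4 → S) :
    q2 a b x ∈ Ideal.span {x 2 - (b 0 * x 0 + b 1 * x 1), x 3 - (b 2 * x 0 + b 3 * x 1)} := by
  rw [q2_swap]; exact neg_mem (q2_mem_left _ _ _)

lemma q2_mem_zero (a b x : Fin 4 → S) : q2 a b x ∈ Ideal.span {x 2, x 3} := by
  rw [Ideal.mem_span_pair]
  refine ⟨(a 3 * (b 0 * x 3 - b 2 * x 2) + a 2 * (b 3 * x 2 - b 1 * x 3))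
      + (a 0 * a 3 - a 1 * a 2) * (b 2 * x 0 + b 3 * x 1)
      - (b 0 * b 3 - b 1 * b 2) * (a 2 * x 0 + a 3 * x 1),
    (-a 1 * (b 0 * x 3 - b 2 * x 2) - a 0 * (b 3 * x 2 - b 1 * x 3))
      - (a 0 * a 3 - a 1 * a 2) * (b 0 * x 0 + b 1 * x 1)
      + (b 0 * b 3 - b 1 * b 2) * (a 0 * x 0 + a 1 * x 1), ?_⟩
  simp only [q2]; ring

lemma phi_mem_A (A : Fin 4 → Fin 4 → S) (k : Fin 5) (x : Fin 4 → S) (i : Fin 4) :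
    phi A k x ∈ Ideal.span {x 2 - (A i 0 * x 0 + A i 1 * x 1), x 3 - (A i 2 * x 0 + A i 3 * x 1)} := by
  have : ∀ (k : Fin 5) (i : Fin 4), i = p1 k ∨ i = p2 k ∨ i = p3 k ∨ i = p4 k := by decide
  rcases this k i with h | h | h | h <;> subst h
  · exact Ideal.mul_mem_right _ _ (q1_mem_left _ _ _)
  · exact Ideal.mul_mem_right _ _ (q1_mem_right _ _ _)
  · exact Ideal.mul_mem_left _ _ (q2_mem_left _ _ _)
  · exact Ideal.mul_mem_left _ _ (q2_mem_right _ _ _)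

lemma det_mem {n : ℕ} (J : Ideal S) (B : Matrix (Fin n) (Fin n) S) (h : ∀ i j, B i j ∈ J) :
    B.det ∈ J ^ n := by
  rw [Matrix.det_apply]
  refine Ideal.sum_mem _ fun σ _ => ?_
  have : ∏ i, B (σ i) i ∈ J ^ n := by
    have := Ideal.prod_mem_prod (s := Finset.univ) (I := fun _ : Fin n => J)
      (x := fun i => B (σ i) i) (fun i _ => h _ _)
    simpa using this
  rcases Int.units_eq_one_or (Equiv.Perm.sign σ) with h | h <;> rw [h]
  · simpa using this
  · simpa using this

lemma GG_mem (J : Ideal S) (A : Fin 4 → Fin 4 → S) (c : Fin 5 × Fin 3 → S) (x : Fin 4 → S)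
    (h : ∀ k, phi A k x ∈ J) (l : Fin 3) : GG A c x l ∈ J :=
  Ideal.sum_mem _ fun k _ => Ideal.mul_mem_left _ _ (h k)

lemma FF_mem (J : Ideal S) (A : Fin 4 → Fin 4 → S) (c : Fin 3 → Fin 5 × Fin 3 → S) (x : Fin 4 → S)
    (h : ∀ k, phi A k x ∈ J) : FF A c x ∈ J ^ 3 :=
  det_mem J _ fun j l => GG_mem J A (c j) x h l

lemma FF_mem_inf (A : Fin 4 → Fin 4 → S) (c : Fin 3 → Fin 5 × Fin 3 → S) (x : Fin 4 → S)
    (hc : ∀ j, (MM A).mulVec (c j) = 0) :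
    x 2 ^ 2 * FF A c x ∈ (Ideal.span {x 0, x 1}) ^ 4 := by
  set J : Ideal S := Ideal.span {x 0, x 1} with hJ
  have hG : ∀ j l, GG A (c j) x l ∈ J := fun j l =>
    GG_mem J A (c j) x (fun k => Ideal.mul_mem_right _ _ (q1_mem_inf _ _ _)) l
  have hs : ∀ j, x 2 ^ 2 * GG A (c j) x 0 + x 2 * x 3 * GG A (c j) x 1 + x 3 ^ 2 * GG A (c j) x 2
      ∈ J ^ 2 := by
    intro j
    have := GG_sum_mem A (c j) x (hc j)
    simpa [Fin.sum_univ_succ, add_assoc] using this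
  have e : x 2 ^ 2 * FF A c x =
      (x 2 ^ 2 * GG A (c 0) x 0 + x 2 * x 3 * GG A (c 0) x 1 + x 3 ^ 2 * GG A (c 0) x 2)
        * (GG A (c 1) x 1 * GG A (c 2) x 2 - GG A (c 1) x 2 * GG A (c 2) x 1)
      - (x 2 ^ 2 * GG A (c 1) x 0 + x 2 * x 3 * GG A (c 1) x 1 + x 3 ^ 2 * GG A (c 1) x 2)
        * (GG A (c 0) x 1 * GG A (c 2) x 2 - GG A (c 0) x 2 * GG A (c 2) x 1)
      + (x 2 ^ 2 * GG A (c 2) x 0 + x 2 * x 3 * GG A (c 2) x 1 + x 3 ^ 2 * GG A (c 2) x 2)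
        * (GG A (c 0) x 1 * GG A (c 1) x 2 - GG A (c 0) x 2 * GG A (c 1) x 1) := by
    rw [FF, Matrix.det_fin_three]
    simp only [Matrix.of_apply]
    ring
  have hm : ∀ j k, GG A (c j) x 1 * GG A (c k) x 2 - GG A (c j) x 2 * GG A (c k) x 1 ∈ J ^ 2 := by
    intro j k
    rw [pow_two]
    exact sub_mem (Ideal.mul_mem_mul (hG _ _) (hG _ _)) (Ideal.mul_mem_mul (hG _ _) (hG _ _))
  have h4 : J ^ 4 = J ^ 2 * J ^ 2 := by rw [← pow_add]
  rw [e, h4]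
  exact add_mem (sub_mem (Ideal.mul_mem_mul (hs _) (hm _ _)) (Ideal.mul_mem_mul (hs _) (hm _ _)))
    (Ideal.mul_mem_mul (hs _) (hm _ _))

end Forms

/-! ### The base configuration -/

section Base

def A0 : Fin 4 → Fin 4 → ℤ := ![![1, 0, 0, 1], ![0, 1, -1, 1], ![0, 1, -1, 0], ![-1, 0, 0, 0]]

def TT : Fin 5 → Fin 3 → Fin 2 → Fin 6 → ℤ :=
  ![![![![0, -2, 0, 0, -2, 0], ![-4, 0, 0, -2, -2, 2]],
      ![![0, 0, 0, -2, -4, -2], ![0, 0, -4, -2, -4, 2]],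
      ![![0, 0, 0, 0, 2, 2], ![0, 0, 0, 0, 2, -2]]],
    ![![![2, 2, 0, 0, 0, 0], ![4, 0, 0, 0, 0, 0]],
      ![![0, 0, 0, 2, 4, 1], ![0, 0, 4, 2, 2, -3]],
      ![![0, 0, 0, 0, -2, -1], ![0, 0, 0, 0, -2, 1]]],
    ![![![-2, 0, 0, 0, 0, 0], ![-2, 0, 0, 0, 0, 0]],
      ![![1, 1, 1, -1, -3, -1], ![2, 0, -2, -2, -2, 2]],
      ![![-2, 0, 0, 2, 4, 0], ![0, 0, 2, 2, 2, -4]]],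
    ![![![-3, -1, 1, -1, -3, -1], ![-2, 2, -2, -2, -2, 2]],
      ![![0, 0, 0, 0, 0, 0], ![0, 0, 0, 0, 0, 0]],
      ![![0, 0, 0, 0, 0, 0], ![0, 0, 0, 0, 0, 0]]],
    ![![![2, 0, 0, 0, 0, 0], ![0, 0, 0, 0, 0, 0]],
      ![![0, 0, 0, 0, 0, 0], ![0, 0, 0, 0, 0, 0]],
      ![![0, 0, 0, 0, 0, 1], ![0, 0, 0, 0, 0, 1]]]]

def TM : Matrix (Fin 5 × Fin 3) (Fin 2 × Fin 6) ℤ := fun j i => TT j.1 j.2 i.1 i.2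

def NN : Fin 3 → Fin 5 → Fin 3 → ℤ :=
  ![![![0, 2, 0], ![0, -2, 0], ![0, 1, -1], ![1, 1, 0], ![0, 0, 0]],
    ![![1, 1, 0], ![0, -1, 0], ![0, 1, -1], ![1, 0, 1], ![0, 0, 0]],
    ![![2, 6, -2], ![-1, -5, 2], ![0, 2, -4], ![4, 0, 0], ![0, 1, 0]]]

def NV (j : Fin 3) : Fin 5 × Fin 3 → ℤ := fun k => NN j k.1 k.2

def pt0 : Fin 4 → ℤ := ![0, 1, -1, 1]

lemma MM_TM : ∀ i j, (MM A0 * TM) i j = if i = j then 2 else 0 := by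
  decide +kernel

lemma MM_NV : ∀ j, (MM A0).mulVec (NV j) = 0 := by
  have : ∀ j i, (MM A0).mulVec (NV j) i = 0 := by decide +kernel
  intro j; ext i; exact this j i

lemma FF_base : FF A0 NV pt0 ≠ 0 := by
  rw [FF, Matrix.det_fin_three]
  simp only [Matrix.of_apply]
  decide +kernel

lemma FF_smul {S : Type*} [CommRing S] (A : Fin 4 → Fin 4 → S) (c : Fin 3 → Fin 5 × Fin 3 → S)
    (x : Fin 4 → S) (r : S) : FF A (fun j => r • c j) x = r ^ 3 * FF A c x := by
  have : (Matrix.of fun j l => GG A (r • c j) x l) = r • (Matrix.of fun j l => GG A (c j) x l) := by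
    ext j l
    simp [GG, Finset.mul_sum, mul_assoc]
  rw [FF, FF, this, Matrix.det_smul]
  simp

/-- A lift of the kernel along a deformation of an integral matrix with a right inverse
up to the factor `2`. -/
lemma exists_lift_gen {m n ι : Type*} [Fintype m] [DecidableEq m] [Fintype n]
    (M : Matrix m n (Polynomial ℂ)) (M0 : Matrix m n ℤ) (T0 : Matrix n m ℤ) (v : ι → n → ℤ)
    (hT : ∀ i j, (M0 * T0) i j = if i = j then 2 else 0) (hv : ∀ j, M0.mulVec (v j) = 0)
    (hMev : M.map (Polynomial.evalRingHom 0) = M0.map (Int.castRingHom ℂ)) :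
    ∃ c : ι → n → Polynomial ℂ, (∀ j, M.mulVec (c j) = 0) ∧
      ∃ r : ℂ, r ≠ 0 ∧ ∀ j k, (c j k).eval 0 = r * (v j k : ℂ) := by
  obtain ⟨T, hTev⟩ : ∃ T : Matrix n m (Polynomial ℂ),
      T.map (Polynomial.evalRingHom 0) = T0.map (Int.castRingHom ℂ) :=
    ⟨T0.map (Int.castRingHom (Polynomial ℂ)), by ext i j; simp⟩
  obtain ⟨w, hw⟩ : ∃ w : ι → n → Polynomial ℂ,
      ∀ j, Polynomial.evalRingHom 0 ∘ w j = (Int.castRingHom ℂ) ∘ v j :=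
    ⟨fun j k => Int.castRingHom _ (v j k), by intro j; ext k; simp⟩
  obtain ⟨ev, hev⟩ : ∃ ev, ev = Polynomial.evalRingHom (0 : ℂ) := ⟨_, rfl⟩
  rw [← hev] at hMev hTev hw
  obtain ⟨E, hE⟩ : ∃ E, E = M * T := ⟨_, rfl⟩
  have hEev : E.map ev = (2 : ℂ) • (1 : Matrix m m ℂ) := by
    rw [hE, Matrix.map_mul, hMev, hTev, ← Matrix.map_mul]
    ext i j
    rw [Matrix.map_apply, hT, Matrix.smul_apply, Matrix.one_apply]
    split_ifs <;> simp
  have hMn : ∀ j, ev ∘ (M.mulVec (w j)) = 0 := by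
    intro j
    ext i
    have h1 := RingHom.map_mulVec ev M (w j) i
    rw [Function.comp_apply, h1, hMev, hw j, ← RingHom.map_mulVec, hv]
    simp
  have hd : ev E.det ≠ 0 := by
    rw [RingHom.map_det, RingHom.mapMatrix_apply, hEev, Matrix.det_smul, Matrix.det_one, mul_one]
    exact pow_ne_zero _ two_ne_zero
  refine ⟨fun j => E.det • w j - T.mulVec (E.adjugate.mulVec (M.mulVec (w j))), ?_, ev E.det,
    hd, ?_⟩
  · intro j
    rw [Matrix.mulVec_sub, Matrix.mulVec_smul, Matrix.mulVec_mulVec, ← hE, Matrix.mulVec_mulVec,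
      Matrix.mul_adjugate, Matrix.smul_mulVec, Matrix.one_mulVec, sub_self]
  · intro j k
    have h0 : ev (T.mulVec (E.adjugate.mulVec (M.mulVec (w j))) k) = 0 := by
      rw [RingHom.map_mulVec]
      have : ev ∘ (E.adjugate.mulVec (M.mulVec (w j))) = 0 := by
        ext i
        rw [Function.comp_apply, RingHom.map_mulVec, hMn]
        simp
      rw [this]
      simp
    have h1 : ev (w j k) = (v j k : ℂ) := by
      have := congrFun (hw j) k
      simpa using this
    beta_reduce
    rw [Pi.sub_apply, Pi.smul_apply, smul_eq_mul, ← Polynomial.coe_evalRingHom, ← hev, map_sub, h0,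
      map_mul, sub_zero, h1]

/-- A lift of the kernel along an arbitrary deformation. -/
lemma exists_lift (A : Fin 4 → Fin 4 → Polynomial ℂ)
    (hA : ∀ i j, (A i j).eval 0 = (A0 i j : ℂ)) :
    ∃ c : Fin 3 → Fin 5 × Fin 3 → Polynomial ℂ, (∀ j, (MM A).mulVec (c j) = 0) ∧
      ∃ r : ℂ, r ≠ 0 ∧ ∀ j k, (c j k).eval 0 = r * (NV j k : ℂ) := by
  refine exists_lift_gen (MM A) (MM A0) TM NV MM_TM MM_NV ?_
  rw [MM_map, MM_map]
  congr 1
  ext i j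
  simp [hA]

end Base

section Hom

variable {K : Type*} [CommRing K]

lemma lin_hom (a b : K) : (C a * X 0 + C b * X 1 : MvPolynomial (Fin 4) K).IsHomogeneous 1 := by
  refine IsHomogeneous.add ?_ ?_
  · simpa using (isHomogeneous_C_mul_X a (0 : Fin 4))
  · simpa using (isHomogeneous_C_mul_X b (1 : Fin 4))

lemma lin_hom' (i : Fin 4) (a b : K) :
    (X i - (C a * X 0 + C b * X 1) : MvPolynomial (Fin 4) K).IsHomogeneous 1 :=
  (isHomogeneous_X _ _).sub (lin_hom a b)

lemma C_mul_hom {n : ℕ} (a : K) {p : MvPolynomial (Fin 4) K} (hp : p.IsHomogeneous n) :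
    (C a * p).IsHomogeneous n := by
  simpa using (isHomogeneous_C (Fin 4) a).mul hp

lemma q1_hom (a b : Fin 4 → K) :
    (q1 (C ∘ a) (C ∘ b) X : MvPolynomial (Fin 4) K).IsHomogeneous 2 := by
  simp only [q1, Function.comp_apply, ← C_sub]
  exact ((lin_hom' _ _ _).mul (lin_hom _ _)).sub ((lin_hom' _ _ _).mul (lin_hom _ _))

lemma q2_hom (a b : Fin 4 → K) :
    (q2 (C ∘ a) (C ∘ b) X : MvPolynomial (Fin 4) K).IsHomogeneous 2 := by
  simp only [q2, Function.comp_apply]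
  have h : ∀ (a b c d e f : K) (i j : Fin 4),
      (C a * (X i - (C b * X 0 + C c * X 1)) - C d * (X j - (C e * X 0 + C f * X 1)) :
        MvPolynomial (Fin 4) K).IsHomogeneous 1 := fun _ _ _ _ _ _ _ _ =>
    (C_mul_hom _ (lin_hom' _ _ _)).sub (C_mul_hom _ (lin_hom' _ _ _))
  exact ((h _ _ _ _ _ _ _ _).mul (h _ _ _ _ _ _ _ _)).sub
    ((h _ _ _ _ _ _ _ _).mul (h _ _ _ _ _ _ _ _))

lemma GG_hom (A : Fin 4 → Fin 4 → K) (c : Fin 5 × Fin 3 → K) (l : Fin 3) :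
    (GG (fun i => C ∘ A i) (C ∘ c) X l : MvPolynomial (Fin 4) K).IsHomogeneous 4 :=
  IsHomogeneous.sum _ _ _ fun _ _ => C_mul_hom _ ((q1_hom _ _).mul (q2_hom _ _))

lemma FF_hom (A : Fin 4 → Fin 4 → K) (c : Fin 3 → Fin 5 × Fin 3 → K) :
    (FF (fun i => C ∘ A i) (fun j => C ∘ c j) X : MvPolynomial (Fin 4) K).IsHomogeneous 12 := by
  rw [FF, Matrix.det_fin_three]
  simp only [Matrix.of_apply]
  have h : ∀ j l, (GG (fun i => C ∘ A i) (C ∘ c j) X l : MvPolynomial (Fin 4) K).IsHomogeneous 4 :=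
    fun j l => GG_hom A (c j) l
  have h3 : ∀ j l j' l' j'' l'', (GG (fun i => C ∘ A i) (C ∘ c j) X l *
      GG (fun i => C ∘ A i) (C ∘ c j') X l' * GG (fun i => C ∘ A i) (C ∘ c j'') X l'' :
      MvPolynomial (Fin 4) K).IsHomogeneous 12 := fun j l j' l' j'' l'' =>
    ((h j l).mul (h j' l')).mul (h j'' l'')
  exact (((((h3 _ _ _ _ _ _).sub (h3 _ _ _ _ _ _)).sub (h3 _ _ _ _ _ _)).add
    (h3 _ _ _ _ _ _)).add (h3 _ _ _ _ _ _)).sub (h3 _ _ _ _ _ _)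

end Hom

lemma JA_map {K K' : Type*} [CommRing K] [CommRing K'] (f : K →+* K') (a : Fin 4 → K) (m : ℕ)
    (p : MvPolynomial (Fin 4) K) (hp : p ∈ JA a ^ m) : map f p ∈ JA (f ∘ a) ^ m := by
  have := Ideal.mem_map_of_mem (map f) hp
  rw [Ideal.map_pow] at this
  refine Ideal.pow_right_mono ?_ m this
  rw [JA, Ideal.map_span, JA, Set.image_pair]
  simp

lemma J0_map {K K' : Type*} [CommRing K] [CommRing K'] (f : K →+* K') (m : ℕ)
    (p : MvPolynomial (Fin 4) K) (hp : p ∈ J0 K ^ m) : map f p ∈ J0 K' ^ m := by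
  have := Ideal.mem_map_of_mem (map f) hp
  rw [Ideal.map_pow] at this
  refine Ideal.pow_right_mono ?_ m this
  rw [J0, Ideal.map_span, J0, Set.image_pair]
  simp

theorem exists_form (A1 : Fin 4 → Fin 4 → ℂ) :
    ∃ F : R3, F ≠ 0 ∧ F.IsHomogeneous 12 ∧ F ∈ J0 ℂ ^ 4 ∧ F ∈ JA (0 : Fin 4 → ℂ) ^ 3 ∧
      ∀ i, F ∈ JA (A1 i) ^ 3 := by
  set A : Fin 4 → Fin 4 → Polynomial ℂ := fun i j =>
    Polynomial.C (A0 i j : ℂ) + Polynomial.X * Polynomial.C (A1 i j - A0 i j) with hAdef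
  obtain ⟨c, hc, r, hr, hcr⟩ := exists_lift A (by intro i j; simp [hAdef])
  set F : MvPolynomial (Fin 4) (Polynomial ℂ) :=
    FF (fun i => C ∘ A i) (fun j => C ∘ c j) X with hF
  have hFhom : F.IsHomogeneous 12 := FF_hom A c
  have hFA : ∀ i, F ∈ JA (A i) ^ 3 := fun i =>
    FF_mem _ _ _ _ fun k => phi_mem_A (fun i => C ∘ A i) k X i
  have hFz : F ∈ JA (0 : Fin 4 → Polynomial ℂ) ^ 3 := by
    refine FF_mem _ _ _ _ fun k => Ideal.mul_mem_left _ _ ?_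
    simpa [JA] using q2_mem_zero (S := MvPolynomial (Fin 4) (Polynomial ℂ)) _ _ X
  have hFi : F ∈ J0 (Polynomial ℂ) ^ 4 := by
    refine cancel_J0 (X 2 ^ 2) ?_ (by simp) 4 F ?_
    · simp [homot_X]
    · refine FF_mem_inf _ _ _ fun j => ?_
      rw [← MM_map]
      ext1 i
      rw [← RingHom.map_mulVec, hc]
      simp
  have hF0 : F ≠ 0 := by
    intro h
    have h1 := congrArg (eval₂Hom (Polynomial.evalRingHom (0 : ℂ)) (fun i => (pt0 i : ℂ))) h
    rw [hF, FF_map, map_zero] at h1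
    have e1 : (fun i => (eval₂Hom (Polynomial.evalRingHom (0 : ℂ)) (fun i => (pt0 i : ℂ))) ∘
        (C ∘ A i)) = fun i => (Int.castRingHom ℂ) ∘ A0 i := by
      ext i j
      rw [Function.comp_apply, Function.comp_apply, coe_eval₂Hom, eval₂_C]
      simp [hAdef]
    have e2 : (fun i => (eval₂Hom (Polynomial.evalRingHom (0 : ℂ)) (fun i => (pt0 i : ℂ))) ∘
        (C ∘ c i)) = fun i => r • ((Int.castRingHom ℂ) ∘ NV i) := by
      ext i j; simp [hcr]
    have e3 : ((eval₂Hom (Polynomial.evalRingHom (0 : ℂ)) (fun i => (pt0 i : ℂ))) ∘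
        (X : Fin 4 → MvPolynomial (Fin 4) (Polynomial ℂ))) = (Int.castRingHom ℂ) ∘ pt0 := by
      ext i; simp
    rw [e1, e2, e3, FF_smul, ← FF_map] at h1
    have h2 := (mul_eq_zero.1 h1).resolve_left (pow_ne_zero _ hr)
    exact FF_base (by simpa using h2)
  -- divide by the largest power of `s - 1`
  set t : Polynomial ℂ := Polynomial.X - Polynomial.C 1 with ht
  have ht0 : t ≠ 0 := Polynomial.X_sub_C_ne_zero 1
  have htu : ¬ IsUnit (C t : MvPolynomial (Fin 4) (Polynomial ℂ)) := by
    intro h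
    have := h.map (constantCoeff (R := Polynomial ℂ) (σ := Fin 4))
    rw [constantCoeff_C] at this
    exact Polynomial.not_isUnit_X_sub_C 1 this
  obtain ⟨n, G, hG, hFG⟩ := WfDvdMonoid.max_power_factor' hF0 htu
  rw [← C_pow] at hFG
  have htn : t ^ n ≠ 0 := pow_ne_zero _ ht0
  set ev : Polynomial ℂ →+* ℂ := Polynomial.evalRingHom 1 with hev
  have hAev : ∀ i, ev ∘ A i = A1 i := by
    intro i; ext j; simp [hev, hAdef]
  refine ⟨map ev G, ?_, ?_, ?_, ?_, ?_⟩
  · intro h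
    refine hG ((C_dvd_iff_map_hom_eq_zero ev t ?_ G).2 h)
    intro p
    rw [ht, Polynomial.dvd_iff_isRoot]
    rfl
  · refine IsHomogeneous.map ?_ ev
    intro d hd
    refine hFhom ?_
    rw [hFG, coeff_C_mul]
    exact mul_ne_zero htn hd
  · refine J0_map ev 4 G (cancel_J0 (C (t ^ n)) (homot_C _ _) (by simpa using htn) 4 G ?_)
    rwa [← hFG]
  · have := JA_map ev 0 3 G (cancel_JA 0 (t ^ n) htn 3 G (by rwa [← hFG]))
    have e : ev ∘ (0 : Fin 4 → Polynomial ℂ) = 0 := by ext; simp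
    rwa [e] at this
  · intro i
    have := JA_map ev (A i) 3 G (cancel_JA (A i) (t ^ n) htn 3 G (by rw [← hFG]; exact hFA i))
    rwa [hAev] at this

/-! ### Change of coordinates -/

/-- The linear form of the polynomial ring attached to a linear functional. -/
def linForm (f : C4 →ₗ[ℂ] ℂ) : R3 := ∑ i, C (f (Pi.single i 1)) * X i

lemma eval_linForm (f : C4 →ₗ[ℂ] ℂ) (v : C4) : eval v (linForm f) = f v := by
  conv_rhs => rw [← Finset.univ_sum_single v, map_sum]
  simp only [linForm, map_sum, map_mul, eval_C, eval_X]
  refine Finset.sum_congr rfl fun i _ => ?_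
  have : (Pi.single i (v i) : C4) = v i • Pi.single i 1 := by
    rw [← Pi.single_smul]; simp
  rw [this, map_smul, smul_eq_mul, mul_comm]

lemma linForm_hom (f : C4 →ₗ[ℂ] ℂ) : (linForm f).IsHomogeneous 1 :=
  IsHomogeneous.sum _ _ _ fun i _ => isHomogeneous_C_mul_X _ _

lemma pow_transfer (φ : R3 →+* R3) (J J' : Ideal R3) (h : J ≤ J'.comap φ) (m : ℕ) (F : R3)
    (hF : F ∈ J ^ m) : φ F ∈ J' ^ m :=
  Ideal.le_comap_pow φ m (Ideal.pow_right_mono h m hF)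

/-- Coordinates adapted to a pair of skew lines. -/
lemma exists_coords (P Q : Submodule ℂ C4) (hP : Module.finrank ℂ P = 2)
    (hQ : Module.finrank ℂ Q = 2) (h : P ⊓ Q = ⊥) :
    ∃ e : C4 ≃ₗ[ℂ] C4, (∀ v ∈ P, e v 0 = 0 ∧ e v 1 = 0) ∧ (∀ v ∈ Q, e v 2 = 0 ∧ e v 3 = 0) ∧
      (∀ v, e v 0 = 0 → e v 1 = 0 → v ∈ P) := by
  have hc : IsCompl Q P := by
    have hd : Disjoint Q P := by rw [disjoint_iff, inf_comm]; exact h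
    refine ⟨hd, ?_⟩
    rw [codisjoint_iff]
    apply Submodule.eq_top_of_finrank_eq
    have := Submodule.finrank_sup_add_finrank_inf_eq Q P
    rw [disjoint_iff.1 hd, finrank_bot, hP, hQ] at this
    simpa using this
  let eQ : Q ≃ₗ[ℂ] (Fin 2 → ℂ) := LinearEquiv.ofFinrankEq _ _ (by simp [hQ])
  let eP : P ≃ₗ[ℂ] (Fin 2 → ℂ) := LinearEquiv.ofFinrankEq _ _ (by simp [hP])
  let e1 : C4 ≃ₗ[ℂ] (Q × P) := (Submodule.prodEquivOfIsCompl Q P hc).symm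
  let e2 : (Q × P) ≃ₗ[ℂ] ((Fin 2 → ℂ) × (Fin 2 → ℂ)) := eQ.prodCongr eP
  let g : ((Fin 2 → ℂ) × (Fin 2 → ℂ)) ≃ₗ[ℂ] C4 :=
    { toFun := fun p => ![p.1 0, p.1 1, p.2 0, p.2 1]
      invFun := fun v => (![v 0, v 1], ![v 2, v 3])
      map_add' := by intro p q; ext i; fin_cases i <;> simp
      map_smul' := by intro r p; ext i; fin_cases i <;> simp
      left_inv := by
        intro p
        ext i <;> fin_cases i <;> simp
      right_inv := by intro v; ext i; fin_cases i <;> simp }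
  refine ⟨e1.trans (e2.trans g), ?_, ?_, ?_⟩
  · intro v hv
    have : e1 v = (0, ⟨v, hv⟩) := by
      rw [LinearEquiv.symm_apply_eq]; simp
    simp [this, e2, g]
  · intro v hv
    have : e1 v = (⟨v, hv⟩, 0) := by
      rw [LinearEquiv.symm_apply_eq]; simp
    simp [this, e2, g]
  · intro v h0 h1
    have h0' : eQ (e1 v).1 0 = 0 := h0
    have h1' : eQ (e1 v).1 1 = 0 := h1
    have h2 : eQ (e1 v).1 = 0 := by
      ext i; fin_cases i
      · exact h0'
      · exact h1'
    have h3 : (e1 v).1 = 0 := by simpa using h2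
    have h4 : v = (Submodule.prodEquivOfIsCompl Q P hc) (e1 v) :=
      ((Submodule.prodEquivOfIsCompl Q P hc).apply_symm_apply v).symm
    rw [h4, Submodule.coe_prodEquivOfIsCompl', h3]
    simp

/-- A line skew to `u = 0` is a graph. -/
lemma exists_graph (P L : Submodule ℂ C4) (hL : Module.finrank ℂ L = 2) (h : P ⊓ L = ⊥)
    (e : C4 ≃ₗ[ℂ] C4) (he : ∀ v, e v 0 = 0 → e v 1 = 0 → v ∈ P) :
    ∃ a : Fin 4 → ℂ, ∀ v ∈ L, e v 2 = a 0 * e v 0 + a 1 * e v 1 ∧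
      e v 3 = a 2 * e v 0 + a 3 * e v 1 := by
  let f : L →ₗ[ℂ] (Fin 2 → ℂ) :=
    { toFun := fun v => ![e v 0, e v 1]
      map_add' := by intro p q; ext i; fin_cases i <;> simp
      map_smul' := by intro r p; ext i; fin_cases i <;> simp }
  have hf : Function.Injective f := by
    rw [← LinearMap.ker_eq_bot, LinearMap.ker_eq_bot']
    intro v hv
    have h0 : e v 0 = 0 := by simpa [f] using congrFun hv 0
    have h1 : e v 1 = 0 := by simpa [f] using congrFun hv 1
    have : (v : C4) ∈ P ⊓ L := ⟨he v h0 h1, v.2⟩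
    rw [h] at this
    exact Subtype.ext (by simpa using this)
  let g : L ≃ₗ[ℂ] (Fin 2 → ℂ) := LinearEquiv.ofInjectiveOfFinrankEq f hf (by simp [hL])
  have hg : ∀ v, g v = f v := fun v => rfl
  let b0 : L := g.symm ![1, 0]
  let b1 : L := g.symm ![0, 1]
  have hv : ∀ v : L, v = e v 0 • b0 + e v 1 • b1 := by
    intro v
    apply g.injective
    rw [map_add, map_smul, map_smul]
    simp only [b0, b1, LinearEquiv.apply_symm_apply]
    rw [hg]
    ext i; fin_cases i <;> simp [f]
  refine ⟨![e b0 2, e b1 2, e b0 3, e b1 3], ?_⟩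
  intro v hvL
  have h1 : v = e v 0 • (b0 : C4) + e v 1 • (b1 : C4) := by
    simpa using congrArg Subtype.val (hv ⟨v, hvL⟩)
  have h2 : e v = e v 0 • e b0 + e v 1 • e b1 := by
    conv_lhs => rw [h1]
    simp
  constructor
  · have := congrFun h2 2
    simp only [Pi.add_apply, Pi.smul_apply, smul_eq_mul] at this
    rw [this]; simp; ring
  · have := congrFun h2 3
    simp only [Pi.add_apply, Pi.smul_apply, smul_eq_mul] at this
    rw [this]; simp; ring

theorem main (L : Fin 6 → Submodule ℂ C4)
    (hdim : ∀ i, Module.finrank ℂ ↥(L i) = 2)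
    (hskew : ∀ i j, i ≠ j → L i ⊓ L j = ⊥) :
    ∃ F : R3, F ≠ 0 ∧ F.IsHomogeneous 12 ∧
      F ∈ (lineIdeal (L 0)) ^ 4 ∧ ∀ i, i ≠ 0 → F ∈ (lineIdeal (L i)) ^ 3 := by
  obtain ⟨e, hP, hQ, he⟩ := exists_coords (L 0) (L 1) (hdim 0) (hdim 1) (hskew 0 1 (by decide))
  have hgr : ∀ j : Fin 4, ∃ a : Fin 4 → ℂ, ∀ v ∈ L (j.succ.succ), e v 2 = a 0 * e v 0 + a 1 * e v 1 ∧
      e v 3 = a 2 * e v 0 + a 3 * e v 1 := fun j =>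
    exists_graph (L 0) _ (hdim _) (hskew 0 _ (Fin.succ_ne_zero _).symm) e he
  choose A1 hA1 using hgr
  obtain ⟨G, hG0, hGh, hGi, hGz, hGA⟩ := exists_form A1
  let ℓ : Fin 4 → R3 := fun i => linForm ((LinearMap.proj i).comp e.toLinearMap)
  have hℓ : ∀ i v, eval v (ℓ i) = e v i := fun i v => by simp [ℓ, eval_linForm]
  let φ : R3 →+* R3 := (aeval ℓ : R3 →ₐ[ℂ] R3).toRingHom
  have hφX : ∀ i, φ (X i) = ℓ i := fun i => by simp [φ]
  have hφC : ∀ r, φ (C r) = C r := fun r => by simp [φ]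
  have hev : ∀ v p, eval v (φ p) = eval (e v) p := by
    intro v p
    have : (eval v).comp φ = eval (e v) := by
      apply MvPolynomial.ringHom_ext
      · intro r; simp [hφC]
      · intro i; simp [hφX, hℓ]
    simpa using congrArg (fun f => f p) this
  have hJA : ∀ (a : Fin 4 → ℂ) (i : Fin 6), (∀ v ∈ L i, e v 2 = a 0 * e v 0 + a 1 * e v 1 ∧
      e v 3 = a 2 * e v 0 + a 3 * e v 1) → JA a ≤ (lineIdeal (L i)).comap φ := by
    intro a i h
    refine Ideal.span_le.2 ?_
    rintro x (rfl | rfl)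
    · intro v hv
      rw [hev]
      simp [(h v hv).1]
    · intro v hv
      rw [hev]
      simp [(h v hv).2]
  refine ⟨φ G, ?_, ?_, ?_, ?_⟩
  · intro h
    apply hG0
    apply MvPolynomial.funext
    intro x
    have := hev (e.symm x) G
    rw [h] at this
    simpa using this.symm
  · have := hGh.aeval ℓ (n := 1) (fun i => linForm_hom _)
    rw [one_mul] at this
    exact this
  · refine pow_transfer φ _ _ ?_ 4 G hGi
    refine Ideal.span_le.2 ?_
    rintro x (rfl | rfl)
    · intro v hv
      rw [hev]
      simp [(hP v hv).1]
    · intro v hv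
      rw [hev]
      simp [(hP v hv).2]
  · intro i hi
    obtain ⟨j, rfl⟩ := Fin.exists_succ_eq.2 hi
    by_cases hj : j = 0
    · subst hj
      refine pow_transfer φ _ _ (hJA 0 _ ?_) 3 G hGz
      intro v hv
      simpa using hQ v hv
    · obtain ⟨k, rfl⟩ := Fin.exists_succ_eq.2 hj
      exact pow_transfer φ _ _ (hJA (A1 k) _ (hA1 k)) 3 G (hGA k)

end SixLines

/-- For every configuration of six pairwise skew lines in `P^3` there is a
surface of degree 12 vanishing to order 4 along the first line and to order 3
along the remaining five. -/
theorem stmt_10 (L : Fin 6 → Submodule ℂ C4)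
    (hdim : ∀ i, Module.finrank ℂ ↥(L i) = 2)
    (hskew : ∀ i j, i ≠ j → L i ⊓ L j = ⊥) :
    ∃ F : R3, F ≠ 0 ∧ F.IsHomogeneous 12 ∧
      F ∈ (lineIdeal (L 0)) ^ 4 ∧ ∀ i, i ≠ 0 → F ∈ (lineIdeal (L i)) ^ 3 := by
  exact SixLines.main L hdim hskew
end
end

section
/- Let L_1,…,L_7 ⊆ ℂ^4 be 2-dimensional linear subspaces (lines in P^3) which are pairwise disjoint. Then there exists a nonzero homogeneous polynomial F of degree 12 in ℂ[x_0,x_1,x_2,x_3] with F ∈ I(L_i)^3 for i = 1,…,6 and F ∈ I(L_7)^2; that is, for every configuration of seven pairwise skew lines there is a surface of degree 12 vanishing to order 3 along the first six lines and singular along the seventh. -/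
open MvPolynomial

noncomputable section

/-- The 35 monomials of degree four, as sorted index tuples. -/
def tabL : List (List (Fin 4)) := [
  [0, 0, 0, 0], [0, 0, 0, 1], [0, 0, 0, 2], [0, 0, 0, 3], [0, 0, 1, 1],
  [0, 0, 1, 2], [0, 0, 1, 3], [0, 0, 2, 2], [0, 0, 2, 3], [0, 0, 3, 3],
  [0, 1, 1, 1], [0, 1, 1, 2], [0, 1, 1, 3], [0, 1, 2, 2], [0, 1, 2, 3],
  [0, 1, 3, 3], [0, 2, 2, 2], [0, 2, 2, 3], [0, 2, 3, 3], [0, 3, 3, 3],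
  [1, 1, 1, 1], [1, 1, 1, 2], [1, 1, 1, 3], [1, 1, 2, 2], [1, 1, 2, 3],
  [1, 1, 3, 3], [1, 2, 2, 2], [1, 2, 2, 3], [1, 2, 3, 3], [1, 3, 3, 3],
  [2, 2, 2, 2], [2, 2, 2, 3], [2, 2, 3, 3], [2, 3, 3, 3], [3, 3, 3, 3]]

def goodU : List (List ℤ) := [[0, 0, 1, 0], [1, 0, 0, 0], [1, 0, 1, 0], [1, 0, -1, 1], [1, 0, 0, 1], [1, 0, -1, -1], [1, 0, 0, -1]]
def goodV : List (List ℤ) := [[0, 0, 0, 1], [0, 1, 0, 0], [0, 1, 0, 1], [0, 1, 1, 0], [0, 1, -1, 1], [0, 1, -1, 0], [0, 1, 1, 1]]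

def goodP : List ℤ := [-1, -1, 1, 1]
def goodY : List ℤ := [-12, -6, 0, 2, 0, 0, -2, 0, 2, 12, -3, 1, -3, -3, -3, 0, 1, 1, -1, -9, 1, -1, 3, -5, 8, 0, 1, -1, 5, -15, 3, 1, 1, 3, 8]

/-- An explicit inverse (up to the scalar 12) of the matrix of the good configuration; each row is
encoded in base 1000, with entries shifted by 500 and the first entry in the lowest place. -/
def goodN : List ℕ := [
  500500500500500500500500500500500500500500500500500500500500500500500500500500500500500512500500500500500,
  500500500500500500500500500500500500500500500500500500500500500500500500500500500500512500500500500500500,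
  504500502500506506494504500494504500502500506506506504500494480500496500500500500492500500488500496500492,
  498497499499500488507495505494502497501499500512507505505506500494500502500500498500490500500498500494500,
  500500500500500500500500500500500500500500500500500500500500500500500500500500500512500500500500500500500,
  498497499505506470519489505500502497501505494530519511505500500482500502500500486500478500500510500494500,
  500500500500494506494506494506500500500500494506506506506506488500500500500500500488500500512500500500500,
  486494496500494512500498500506486506496500494512500498500506516500508500512488500504500488512500496500504,
  494497497497494500497503497506506497503497506500497497497494500506500506500500506500506500500494500494500,
  500500500500506500500500500500500500500500506500500500500500500500500500500500500500500488488500500500500,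
  500500500500500500500500500500500500500500500500500500500500500500500500500500512500500500500500500500500,
  506506506506506494500500500500506494506494506494500500500500500500500500488500500488500500500500500500512,
  510509505499494518495501499500490509495499506482495499499500500506500490500500486500514500500498500518500,
  508509507501500536481511495500492509493501500464481489495500500518500498500500502500510500500490500506500,
  516506502494500476506498506488516494502506500476494498494488492500496500500524500504500524476500496500468,
  490491495501512476511493507494510491505501488524511507507506500494500510500500502500474500500502500482500,
  510506502500500482506498500500510494502500500482494498500500504500496500500512500504500500500500508500492,
  494497497497500500497503497500506497503497500500497497497500500506500506500500506500506500500506500506500,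
  472488492500494524500496500506472512492500494524500496500506532500516500512476500508500488524500504500532,
  502503501501494512493505495506498503499501506488493495495494500506500498500500502500510500500502500506500,
  500500500500500500500500500500500500500500500500500500500500500500500500500512500500500500500500500500500,
  492497499499500488501501499500508497501499500512501499499500500506500502500500498500502500500498500506500,
  478488492494494542488502500500478512492506494542512502500500508500504500512452500508500500500500504500520,
  500500500500500506500500500500500500500500500506500500500500500500500500500488500500500500500500500500488,
  508497495501500470523487507500492497505501500530523513507500500470500498500500490500486500500514500470500,
  546524514512512434512504494506546476514488512434488504506506480500484500476560500480500488512500496500456,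
  508503501501500506499499501500492503499501500494499501501500500494500498500500502500498500500502500494500,
  506500500500500494500500500500506500500500500494500500500500488500500500500512500500500500500500488500500,
  498503505499500536477513493500502503495499500464477487493500500530500502500500510500514500500474500518500,
  476488494494494524500494506494476512494506494524500494494494524500512500512476500512500512476500500500524,
  500500500500500500500500500500500500500500500500500500500500500500500500500500500500500500500500500500512,
  500500500500500500500500500500500500500500500500500500500500500500500500500500500500500500500500500512500,
  500500500500500500500500500500500500500500500500500500500500500500500500500500500500500500500500512500500,
  500500500500500500500500500500500500500500500500500500500500500500500500500500500500500500500512500500500,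
  500500500500500500500500500500500500500500500500500500500500500500500500500500500500500500512500500500500]

def ent {R : Type} [CommRing R] (u v : Fin 4 → R) (j : Fin 5) (a b c d : Fin 4) : R :=
  match j with
  | 0 => u a * u b * u c * u d
  | 1 => v a * u b * u c * u d + u a * v b * u c * u d + u a * u b * v c * u d + u a * u b * u c * v d
  | 2 => v a * v b * u c * u d + v a * u b * v c * u d + v a * u b * u c * v d
      + u a * v b * v c * u d + u a * v b * u c * v d + u a * u b * v c * v d
  | 3 => u a * v b * v c * v d + v a * u b * v c * v d + v a * v b * u c * v d + v a * v b * v c * u d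
  | 4 => v a * v b * v c * v d

def tab (k : Fin 7 × Fin 5) (n : ℕ) : Fin 4 := (tabL.getD (5 * k.1.1 + k.2.1) []).getD n 0

def mat {R : Type} [CommRing R] (U V : Fin 7 → Fin 4 → R) : Matrix (Fin 7 × Fin 5) (Fin 7 × Fin 5) R :=
  fun i k => ent (U i.1) (V i.1) i.2 (tab k 0) (tab k 1) (tab k 2) (tab k 3)

def gU (i : Fin 7) (a : Fin 4) : ℤ := (goodU.getD i.1 []).getD a.1 0
def gV (i : Fin 7) (a : Fin 4) : ℤ := (goodV.getD i.1 []).getD a.1 0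
def gP (a : Fin 4) : ℤ := goodP.getD a.1 0
def gY (k : Fin 7 × Fin 5) : ℤ := goodY.getD (5 * k.1.1 + k.2.1) 0
def gN (k i : Fin 7 × Fin 5) : ℤ :=
  ((goodN.getD (5 * k.1.1 + k.2.1) 0 / 1000 ^ (5 * i.1.1 + i.2.1) % 1000 : ℕ) : ℤ) - 500

theorem gY_spec : ∀ k : Fin 7 × Fin 5, ∑ i, gY i * mat gU gV i k
    = gP (tab k 0) * gP (tab k 1) * gP (tab k 2) * gP (tab k 3) := by decide +kernel
theorem gN_spec : ∀ k l : Fin 7 × Fin 5, ∑ i, gN k i * mat gU gV i l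
    = if k = l then 12 else 0 := by decide +kernel

/-! ### Generic facts about the interpolation matrix -/

theorem ent_spec {R : Type} [CommRing R] (u v : Fin 4 → R) (s r : R) (a b c d : Fin 4) :
    (s * u a + r * v a) * (s * u b + r * v b) * (s * u c + r * v c) * (s * u d + r * v d)
      = ∑ j : Fin 5, s ^ (4 - j.1) * r ^ j.1 * ent u v j a b c d := by
  simp only [Fin.sum_univ_five, ent]
  simp
  ring

theorem ent_map {R S : Type} [CommRing R] [CommRing S] (f : R →+* S) (u v : Fin 4 → R) (j : Fin 5)
    (a b c d : Fin 4) :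
    f (ent u v j a b c d) = ent (fun a => f (u a)) (fun a => f (v a)) j a b c d := by
  fin_cases j <;> simp [ent]

theorem mat_map {R S : Type} [CommRing R] [CommRing S] (f : R →+* S) (U V : Fin 7 → Fin 4 → R) :
    (mat U V).map f = mat (fun i a => f (U i a)) (fun i a => f (V i a)) := by
  ext i k
  simp only [mat, Matrix.map_apply]
  rw [ent_map]

theorem good_det : (mat gU gV).det ≠ 0 := by
  intro h
  have h1 : (Matrix.of gN) * mat gU gV = (12 : ℤ) • (1 : Matrix (Fin 7 × Fin 5) (Fin 7 × Fin 5) ℤ) := by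
    ext k l
    rw [Matrix.mul_apply]
    simp only [Matrix.of_apply, gN_spec, Matrix.smul_apply, Matrix.one_apply, smul_eq_mul]
    split_ifs <;> simp
  have h2 := congrArg Matrix.det h1
  rw [Matrix.det_mul, h, mul_zero, Matrix.det_smul, Matrix.det_one, mul_one] at h2
  exact absurd h2.symm (pow_ne_zero _ (by norm_num))

def hank {R : Type} [CommRing R] (q : Fin 5 → R) : R :=
  q 0 * (q 2 * q 4 - q 3 * q 3) - q 1 * (q 1 * q 4 - q 3 * q 2) + q 2 * (q 1 * q 3 - q 2 * q 2)

theorem hank_map {R S : Type} [CommRing R] [CommRing S] (f : R →+* S) (q : Fin 5 → R) :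
    f (hank q) = hank (fun j => f (q j)) := by
  simp [hank]

section generic
variable {A : Type} [CommRing A]

/-- The interpolating quartics. -/
def quart (U V : Fin 7 → Fin 4 → A) (j : Fin 5) : MvPolynomial (Fin 4) A :=
  ∑ k, C ((mat U V).adjugate k (6, j)) * (X (tab k 0) * X (tab k 1) * X (tab k 2) * X (tab k 3))

theorem quart_hom (U V : Fin 7 → Fin 4 → A) (j : Fin 5) : (quart U V j).IsHomogeneous 4 := by
  apply MvPolynomial.IsHomogeneous.sum
  intro k _
  have h := (isHomogeneous_C (Fin 4) ((mat U V).adjugate k (6, j))).mul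
    ((((isHomogeneous_X A (tab k 0)).mul (isHomogeneous_X A (tab k 1))).mul
      (isHomogeneous_X A (tab k 2))).mul (isHomogeneous_X A (tab k 3)))
  simpa using h

theorem hank_hom (q : Fin 5 → MvPolynomial (Fin 4) A) (h : ∀ j, (q j).IsHomogeneous 4) :
    (hank q).IsHomogeneous 12 := by
  unfold hank
  have h2 : ∀ a b c d, (q a * q b - q c * q d).IsHomogeneous 8 := fun a b c d =>
    ((h a).mul (h b)).sub ((h c).mul (h d))
  exact (((h _).mul (h2 _ _ _ _)).sub ((h _).mul (h2 _ _ _ _))).add ((h _).mul (h2 _ _ _ _))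

/-- Parametrised neighbourhood of a line: `x = s u + r v + ε y`. -/
def nbhd (u v : Fin 4 → A) :
    MvPolynomial (Fin 4) A →+* Polynomial (MvPolynomial (Fin 2 ⊕ Fin 4) A) :=
  eval₂Hom (Polynomial.C.comp C) fun a =>
    Polynomial.C (X (Sum.inl 0) * C (u a) + X (Sum.inl 1) * C (v a))
      + Polynomial.X * Polynomial.C (X (Sum.inr a))

theorem nbhd_quart (U V : Fin 7 → Fin 4 → A) (i : Fin 7) (j : Fin 5) :
    (nbhd (U i) (V i) (quart U V j)).coeff 0 =
      if i = 6 then C (mat U V).det * (X (Sum.inl 0) ^ (4 - j.1) * X (Sum.inl 1) ^ j.1) else 0 := by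
  have e : ∀ p : Polynomial (MvPolynomial (Fin 2 ⊕ Fin 4) A),
      p.coeff 0 = Polynomial.evalRingHom 0 p := fun p => by
    simp [Polynomial.coeff_zero_eq_eval_zero]
  rw [e, quart, map_sum, map_sum]
  have h1 : ∀ k, (Polynomial.evalRingHom 0) (nbhd (U i) (V i)
      (C ((mat U V).adjugate k (6, j)) * (X (tab k 0) * X (tab k 1) * X (tab k 2) * X (tab k 3))))
      = ∑ l : Fin 5, X (Sum.inl 0) ^ (4 - l.1) * X (Sum.inl 1) ^ l.1 *
          C (mat U V (i, l) k * (mat U V).adjugate k (6, j)) := by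
    intro k
    simp only [map_mul, nbhd, coe_eval₂Hom, eval₂_C, eval₂_X, RingHom.comp_apply,
      Polynomial.coe_evalRingHom, Polynomial.eval_C, Polynomial.eval_add, Polynomial.eval_mul,
      Polynomial.eval_X, zero_mul, add_zero]
    rw [ent_spec (fun a => C (U i a)) (fun a => C (V i a)), Finset.mul_sum]
    refine Finset.sum_congr rfl fun l _ => ?_
    rw [mat, ent_map]
    ring
  rw [Finset.sum_congr rfl fun k _ => h1 k, Finset.sum_comm]
  have h2 : ∀ l : Fin 5, ∑ k, (X (Sum.inl 0) ^ (4 - l.1) * X (Sum.inl 1) ^ l.1 *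
          C (mat U V (i, l) k * (mat U V).adjugate k (6, j)) : MvPolynomial (Fin 2 ⊕ Fin 4) A)
      = X (Sum.inl 0) ^ (4 - l.1) * X (Sum.inl 1) ^ l.1 *
          C ((mat U V).det * if (i, l) = ((6 : Fin 7), j) then 1 else 0) := by
    intro l
    rw [← Finset.mul_sum, ← map_sum, ← Matrix.mul_apply, Matrix.mul_adjugate, Matrix.smul_apply,
      Matrix.one_apply, smul_eq_mul]
  rw [Finset.sum_congr rfl fun l _ => h2 l]
  by_cases hi : i = 6
  · subst hi
    rw [Finset.sum_eq_single j]
    · simp; ring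
    · intro l _ hl
      simp [hl]
    · simp
  · simp [hi]

theorem hank_dvd3 {R : Type} [CommRing R] (e : R) (q : Fin 5 → R) (h : ∀ j, e ∣ q j) :
    e ^ 3 ∣ hank q := by
  choose n hn using h
  refine ⟨hank n, ?_⟩
  simp only [hank, hn]
  ring

theorem hank_dvd2 {R : Type} [CommRing R] (e δ s r : R) (q : Fin 5 → R)
    (h : ∀ j : Fin 5, e ∣ q j - δ * (s ^ (4 - j.1) * r ^ j.1)) :
    e ^ 2 ∣ hank q := by
  choose n hn using h
  have hq : ∀ j : Fin 5, q j = δ * (s ^ (4 - j.1) * r ^ j.1) + e * n j := fun j => by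
    rw [← hn]; ring
  refine ⟨δ * (s ^ 4 * (n 2 * n 4 - n 3 * n 3) + r ^ 4 * (n 0 * n 2 - n 1 * n 1)
    + s ^ 2 * r ^ 2 * (n 0 * n 4 - n 2 * n 2) + 2 * s ^ 3 * r * (n 2 * n 3 - n 1 * n 4)
    + 2 * s ^ 2 * r ^ 2 * (n 1 * n 3 - n 2 * n 2) + 2 * s * r ^ 3 * (n 1 * n 2 - n 0 * n 3))
    + e * hank n, ?_⟩
  simp only [hank, hq]
  simp
  ring

theorem nbhd_hank3 (U V : Fin 7 → Fin 4 → A) (i : Fin 7) (hi : i ≠ 6) :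
    Polynomial.X ^ 3 ∣ nbhd (U i) (V i) (hank (quart U V)) := by
  rw [hank_map]
  apply hank_dvd3
  intro j
  rw [Polynomial.X_dvd_iff, nbhd_quart, if_neg hi]

theorem nbhd_hank2 (U V : Fin 7 → Fin 4 → A) :
    Polynomial.X ^ 2 ∣ nbhd (U 6) (V 6) (hank (quart U V)) := by
  rw [hank_map]
  apply hank_dvd2 _ (Polynomial.C (C (mat U V).det)) (Polynomial.C (X (Sum.inl 0)))
    (Polynomial.C (X (Sum.inl 1)))
  intro j
  rw [Polynomial.X_dvd_iff, Polynomial.coeff_sub, nbhd_quart, if_pos rfl]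
  simp only [← map_pow, ← map_mul, Polynomial.coeff_C_zero, sub_self]

end generic

/-! ### From the neighbourhood condition to powers of the line ideal -/

theorem mem_pow_of_nbhd (L : Submodule ℂ C4) (u v : Fin 4 → ℂ) (lu lv : R3)
    (hn : ∀ a, X a - (lu * C (u a) + lv * C (v a)) ∈ lineIdeal L) (m : ℕ) (G : R3)
    (h : Polynomial.X ^ m ∣ nbhd u v G) : G ∈ lineIdeal L ^ m := by
  set n : Fin 4 → R3 := fun a => X a - (lu * C (u a) + lv * C (v a)) with hndef
  let θ : MvPolynomial (Fin 2 ⊕ Fin 4) ℂ →+* R3 :=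
    eval₂Hom C (Sum.elim ![lu, lv] n)
  let Ψ : R3 →+* Polynomial R3 := (Polynomial.mapRingHom θ).comp (nbhd u v)
  have hC : ∀ c, Ψ (C c) = Polynomial.C (C c) := by
    intro c
    simp [Ψ, nbhd, θ]
  have hX : ∀ a, Ψ (X a) = Polynomial.C (lu * C (u a) + lv * C (v a))
      + Polynomial.X * Polynomial.C (n a) := by
    intro a
    simp [Ψ, nbhd, θ]
  have hrees : ∀ G, Ψ G ∈ reesAlgebra (lineIdeal L) := by
    have hCr : ∀ x : R3, Polynomial.C x ∈ reesAlgebra (lineIdeal L) := fun x =>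
      (reesAlgebra (lineIdeal L)).algebraMap_mem x
    intro G
    induction G using MvPolynomial.induction_on with
    | C c => rw [hC]; exact hCr _
    | add p q hp hq => rw [map_add]; exact add_mem hp hq
    | mul_X p a hp =>
      rw [map_mul, hX]
      refine mul_mem hp (add_mem (hCr _) ?_)
      rw [mul_comm, Polynomial.C_mul_X_eq_monomial]
      exact reesAlgebra.monomial_mem.mpr (by rw [pow_one]; exact hn a)
  have heval : ∀ G, (Ψ G).eval 1 = G := by
    intro G
    have : (Polynomial.evalRingHom 1).comp Ψ = RingHom.id R3 := by
      apply MvPolynomial.ringHom_ext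
      · intro c; simp [hC]
      · intro a; simp [hX, hndef]
    exact congrArg (fun f => f G) this
  have hdvd : Polynomial.X ^ m ∣ Ψ G := by
    have := map_dvd (Polynomial.mapRingHom θ) h
    simpa [Ψ] using this
  rw [← heval G, Polynomial.eval_eq_sum_range]
  refine Ideal.sum_mem _ fun k _ => ?_
  rw [one_pow, mul_one]
  by_cases hk : k < m
  · rw [Polynomial.X_pow_dvd_iff.mp hdvd k hk]; exact zero_mem _
  · exact Ideal.pow_le_pow_right (not_lt.mp hk) (hrees G k)

theorem line_data (L : Submodule ℂ C4) (h : Module.finrank ℂ L = 2) :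
    ∃ (u v : Fin 4 → ℂ) (lu lv : R3),
      ∀ a, X a - (lu * C (u a) + lv * C (v a)) ∈ lineIdeal L := by
  obtain ⟨π, hπ⟩ := LinearMap.exists_leftInverse_of_injective L.subtype
    (LinearMap.ker_eq_bot.mpr L.injective_subtype)
  let b : Module.Basis (Fin 2) ℂ L := Module.finBasisOfFinrankEq ℂ L h
  let l : Fin 2 → R3 := fun i => ∑ c, C (b.repr (π (Pi.single c 1)) i) * X c
  have hl : ∀ i (x : C4), eval x (l i) = b.repr (π x) i := by
    intro i x
    have hx : x = ∑ c, x c • (Pi.single c (1 : ℂ) : C4) := by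
      ext d
      simp [Finset.sum_apply, Pi.single_apply]
    conv_rhs => rw [hx]
    simp [l, mul_comm]
  refine ⟨b 0, b 1, l 0, l 1, fun a x hx => ?_⟩
  have h1 : π x = ⟨x, hx⟩ := by
    have := LinearMap.congr_fun hπ ⟨x, hx⟩
    simpa using this
  have h2 := congrArg (fun z : L => (z : C4) a) (b.sum_repr ⟨x, hx⟩)
  simp only [Fin.sum_univ_two] at h2
  simp only [map_sub, map_add, map_mul, eval_X, eval_C, hl, h1]
  rw [sub_eq_zero]
  simpa using h2.symm

/-! ### Degeneration -/

theorem nbhd_map {A B : Type} [CommRing A] [CommRing B] (f : A →+* B) (u v : Fin 4 → A)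
    (G : MvPolynomial (Fin 4) A) :
    nbhd (fun a => f (u a)) (fun a => f (v a)) (map f G) =
      Polynomial.mapRingHom (map f) (nbhd u v G) := by
  have : (nbhd (fun a => f (u a)) (fun a => f (v a))).comp (map f) =
      (Polynomial.mapRingHom (map f)).comp (nbhd u v) := by
    apply MvPolynomial.ringHom_ext
    · intro c; simp [nbhd]
    · intro a; simp [nbhd]
  exact congrArg (fun g => g G) this

theorem row_solve {ι : Type} [Fintype ι] [DecidableEq ι] (M N : Matrix ι ι ℂ) (δ : ℂ) (y w : ι → ℂ)
    (hMN : M * N = δ • (1 : Matrix ι ι ℂ)) (hy : ∀ k, ∑ i, y i * M i k = w k) (c : ι) :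
    ∑ k, N k c * w k = δ * y c := by
  have h1 : Matrix.vecMul y M = w := by
    ext k
    rw [← hy]
    rfl
  have h2 : Matrix.vecMul w N = δ • y := by
    rw [← h1, Matrix.vecMul_vecMul, hMN, Matrix.vecMul_smul, Matrix.vecMul_one]
  have h3 := congrFun h2 c
  rw [Pi.smul_apply, smul_eq_mul] at h3
  rw [← h3]
  exact Finset.sum_congr rfl fun k _ => mul_comm _ _

theorem adj_map {ι : Type} [Fintype ι] [DecidableEq ι] (M : Matrix ι ι (Polynomial ℂ))
    (f : Polynomial ℂ →+* ℂ) :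
    M.map f * M.adjugate.map f = f M.det • (1 : Matrix ι ι ℂ) := by
  rw [← Matrix.map_mul, Matrix.mul_adjugate]
  ext i k
  simp [Matrix.one_apply, apply_ite f]

theorem quart_val (U V : Fin 7 → Fin 4 → Polynomial ℂ) (ev1 : Polynomial ℂ →+* ℂ)
    (hmat1 : (mat U V).map ev1 = (mat gU gV).map (Int.castRingHom ℂ)) (j : Fin 5) :
    eval₂Hom ev1 (fun a => ((gP a : ℤ) : ℂ)) (quart U V j)
      = ev1 (mat U V).det * ((gY (6, j) : ℤ) : ℂ) := by
  have hy : ∀ k, ∑ i, ((gY i : ℤ) : ℂ) * (mat U V).map ev1 i k =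
      (gP (tab k 0) : ℂ) * (gP (tab k 1) : ℂ) * (gP (tab k 2) : ℂ) * (gP (tab k 3) : ℂ) := by
    intro k
    rw [hmat1, ← Int.cast_mul, ← Int.cast_mul, ← Int.cast_mul, ← gY_spec k, Int.cast_sum]
    refine Finset.sum_congr rfl fun i _ => ?_
    rw [Int.cast_mul, Matrix.map_apply, Int.coe_castRingHom]
  have h := row_solve _ _ _ _ _ (adj_map (mat U V) ev1) hy (6, j)
  rw [← h, quart, map_sum]
  refine Finset.sum_congr rfl fun k _ => ?_
  simp only [map_mul, coe_eval₂Hom, eval₂_C, eval₂_X, Matrix.map_apply]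

theorem hank_scale (δ : ℂ) (y : Fin 5 → ℤ) (n : ℤ) (hn : n ≠ 0) (hy : hank y = n) (hδ : δ ≠ 0)
    (h : hank (fun j => δ * (y j : ℂ)) = 0) : False := by
  have h2 : δ ^ 3 * ((hank y : ℤ) : ℂ) = 0 := by
    refine Eq.trans ?_ h
    simp only [hank]
    push_cast
    ring
  rw [hy] at h2
  exact mul_ne_zero (pow_ne_zero 3 hδ) (Int.cast_ne_zero.mpr hn) h2

theorem gY_hank : hank (fun j => gY (6, j)) = -6 := by decide +kernel

theorem hank_quart_ne (U V : Fin 7 → Fin 4 → Polynomial ℂ) (ev1 : Polynomial ℂ →+* ℂ)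
    (hmat1 : (mat U V).map ev1 = (mat gU gV).map (Int.castRingHom ℂ))
    (hdet1 : ev1 (mat U V).det ≠ 0) : hank (quart U V) ≠ 0 := by
  intro h0
  have h1 := congrArg (eval₂Hom ev1 (fun a => ((gP a : ℤ) : ℂ))) h0
  rw [hank_map, map_zero] at h1
  simp only [quart_val U V ev1 hmat1] at h1
  exact hank_scale _ (fun j => gY (6, j)) (-6) (by norm_num) gY_hank hdet1 h1

theorem exists_specialization (u v : Fin 7 → Fin 4 → ℂ) :
    ∃ F : R3, F ≠ 0 ∧ F.IsHomogeneous 12 ∧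
      (∀ i, i ≠ 6 → Polynomial.X ^ 3 ∣ nbhd (u i) (v i) F) ∧
      Polynomial.X ^ 2 ∣ nbhd (u 6) (v 6) F := by
  let U : Fin 7 → Fin 4 → Polynomial ℂ := fun i a =>
    Polynomial.C (u i a) + Polynomial.X * Polynomial.C ((gU i a : ℂ) - u i a)
  let V : Fin 7 → Fin 4 → Polynomial ℂ := fun i a =>
    Polynomial.C (v i a) + Polynomial.X * Polynomial.C ((gV i a : ℂ) - v i a)
  let ev0 : Polynomial ℂ →+* ℂ := Polynomial.evalRingHom 0
  let ev1 : Polynomial ℂ →+* ℂ := Polynomial.evalRingHom 1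
  have hU0 : ∀ i a, ev0 (U i a) = u i a := fun i a => by simp [ev0, U]
  have hV0 : ∀ i a, ev0 (V i a) = v i a := fun i a => by simp [ev0, V]
  have hU1 : ∀ i a, ev1 (U i a) = (Int.castRingHom ℂ) (gU i a) := fun i a => by simp [ev1, U]
  have hV1 : ∀ i a, ev1 (V i a) = (Int.castRingHom ℂ) (gV i a) := fun i a => by simp [ev1, V]
  have hmat1 : (mat U V).map ev1 = (mat gU gV).map (Int.castRingHom ℂ) := by
    rw [mat_map, mat_map]
    simp only [hU1, hV1]
  have hdet1 : ev1 (mat U V).det ≠ 0 := by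
    rw [RingHom.map_det, RingHom.mapMatrix_apply, hmat1, ← RingHom.mapMatrix_apply,
      ← RingHom.map_det]
    simpa using good_det
  set Fh := hank (quart U V) with hFh
  have hF0 : Fh ≠ 0 := hank_quart_ne U V ev1 hmat1 hdet1
  have hfin : FiniteMultiplicity (C (Polynomial.X : Polynomial ℂ) : MvPolynomial (Fin 4) (Polynomial ℂ)) Fh := by
    apply FiniteMultiplicity.of_not_isUnit _ hF0
    intro hu
    have := hu.map (eval₂Hom ev0 (fun _ : Fin 4 => (0 : ℂ)))
    simp [ev0] at this
  obtain ⟨G, hG, hGd⟩ := hfin.exists_eq_pow_mul_and_not_dvd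
  set k := multiplicity (C (Polynomial.X : Polynomial ℂ) : MvPolynomial (Fin 4) (Polynomial ℂ)) Fh
  have hdiv : ∀ (i : Fin 7) (m : ℕ), Polynomial.X ^ m ∣ nbhd (U i) (V i) Fh →
      Polynomial.X ^ m ∣ nbhd (u i) (v i) (map ev0 G) := by
    intro i m h
    have e := nbhd_map ev0 (U i) (V i) G
    simp only [hU0, hV0] at e
    have h3 : Polynomial.X ^ m ∣ nbhd (U i) (V i) G := by
      rw [hG, map_mul, map_pow] at h
      have hc : nbhd (U i) (V i) (C Polynomial.X) = Polynomial.C (C Polynomial.X) := by simp [nbhd]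
      rw [hc, ← map_pow, Polynomial.X_pow_dvd_iff] at h
      rw [Polynomial.X_pow_dvd_iff]
      intro d hd
      have := h d hd
      rw [Polynomial.coeff_C_mul] at this
      refine (mul_eq_zero.mp this).resolve_left (pow_ne_zero _ ?_)
      simp
    change Polynomial.X ^ m ∣ nbhd (fun a => u i a) (fun a => v i a) (map ev0 G)
    rw [e]
    have := map_dvd (Polynomial.mapRingHom (map ev0)) h3
    simpa using this
  refine ⟨map ev0 G, ?_, ?_, fun i hi => hdiv i 3 (nbhd_hank3 U V i hi), hdiv 6 2 (nbhd_hank2 U V)⟩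
  · intro h0
    apply hGd
    rw [C_dvd_iff_dvd_coeff]
    intro d
    rw [Polynomial.X_dvd_iff, Polynomial.coeff_zero_eq_eval_zero]
    have := congrArg (coeff d) h0
    simpa [coeff_map, ev0] using this
  · intro d hd
    have hGc : coeff d G ≠ 0 := by
      intro h0
      rw [coeff_map, h0, map_zero] at hd
      exact hd rfl
    apply hank_hom _ (quart_hom U V) (d := d)
    rw [← hFh, hG, ← map_pow, coeff_C_mul]
    exact mul_ne_zero (pow_ne_zero _ Polynomial.X_ne_zero) hGc

/-- For every configuration of seven pairwise skew lines in `P^3` there is a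
surface of degree 12 vanishing to order 3 along the first six lines and
singular (order 2) along the seventh. -/
theorem stmt_11 (L : Fin 7 → Submodule ℂ C4)
    (hdim : ∀ i, Module.finrank ℂ ↥(L i) = 2)
    (hskew : ∀ i j, i ≠ j → L i ⊓ L j = ⊥) :
    ∃ F : R3, F ≠ 0 ∧ F.IsHomogeneous 12 ∧
      (∀ i, i ≠ 6 → F ∈ (lineIdeal (L i)) ^ 3) ∧ F ∈ (lineIdeal (L 6)) ^ 2 := by

  choose u v lu lv hl using fun i => line_data (L i) (hdim i)
  obtain ⟨F, hF, hh, h3, h2⟩ := exists_specialization u v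
  exact ⟨F, hF, hh, fun i hi => mem_pow_of_nbhd (L i) _ _ _ _ (hl i) 3 F (h3 i hi),
    mem_pow_of_nbhd (L 6) _ _ _ _ (hl 6) 2 F h2⟩
end
end
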